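/- arXiv:1708.00349 — 5 statements merged into one kernel-verified Lean document; each statement's English description precedes it below -/
import Mathlib

section
/- For every q-polynomial f over 𝔽_{q^n} and every integer t ≥ 0, the polynomial X^q·Y − X·Y^q divides f(X)·Y^{q^t} − f(Y)·X^{q^t} in the polynomial ring 𝔽_{q^n}[X, Y]. -/
/-!
Divisibility is linear in `f`, so it suffices to treat `f = X^(q^j)`. Since
`X^q Y - X Y^q = X Y (X^(q-1) - Y^(q-1))`, and
`X^(q^j) Y^(q^t) - Y^(q^j) X^(q^t) = (X Y)^(q^j) (Y^m - X^m)` with `m = q^t - q^j` when `j ≤ t`,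
the claim follows from `q - 1 ∣ m`; the case `t ≤ j` is the same up to sign. This part holds in
every commutative ring, whatever its characteristic (`dvd_monomial`).
-/

theorem exists_pow_eq_pow_add (c : ℕ) {j t : ℕ} (h : j ≤ t) :
    ∃ k, (c + 1) ^ t = (c + 1) ^ j + c * k := by
  induction t, h using Nat.le_induction with
  | base => exact ⟨0, by simp⟩
  | succ t _ ih =>
    obtain ⟨k, hk⟩ := ih
    exact ⟨k + (c + 1) ^ t, by rw [pow_succ]; linear_combination hk⟩

theorem dvd_monomial_of_le {R : Type*} [CommRing R] (x y : R) (c : ℕ) {j t : ℕ} (h : j ≤ t) :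
    x ^ (c + 1) * y - x * y ^ (c + 1) ∣
      x ^ (c + 1) ^ j * y ^ (c + 1) ^ t - y ^ (c + 1) ^ j * x ^ (c + 1) ^ t := by
  obtain ⟨k, hk⟩ := exists_pow_eq_pow_add c h
  obtain ⟨a, ha⟩ : ∃ a, (c + 1) ^ j = a + 1 :=
    Nat.exists_eq_succ_of_ne_zero (by positivity)
  obtain ⟨z, hz⟩ := sub_dvd_pow_sub_pow (x ^ c) (y ^ c) k
  rw [hk, ha]
  refine ⟨-(x ^ a * y ^ a * z), ?_⟩
  simp only [pow_add, pow_mul, pow_one]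
  linear_combination -(x ^ a * x * y ^ a * y) * hz

/-- The case `f = X^(q^j)`, in an arbitrary commutative ring, with `q = c + 1`. -/
theorem dvd_monomial {R : Type*} [CommRing R] (x y : R) (c j t : ℕ) :
    x ^ (c + 1) * y - x * y ^ (c + 1) ∣
      x ^ (c + 1) ^ j * y ^ (c + 1) ^ t - y ^ (c + 1) ^ j * x ^ (c + 1) ^ t := by
  rcases le_total j t with h | h
  · exact dvd_monomial_of_le x y c h
  · rw [← dvd_neg]
    convert dvd_monomial_of_le x y c h using 1
    ring

/-- X^q·Y − X·Y^q divides f(X)·Y^{q^t} − f(Y)·X^{q^t} in 𝔽_{q^n}[X,Y],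
for any q-polynomial f over 𝔽_{q^n}. -/
theorem stmt_1 (p r q n t : ℕ) (hp : p.Prime) (hr : 0 < r) (hq : q = p ^ r)
    (hn : 0 < n)
    (F : Type) [Field F] [Fintype F] (hF : Fintype.card F = q ^ n)
    (f : Polynomial F) (hf : ∀ i, f.coeff i ≠ 0 → ∃ j, i = q ^ j) :
    (MvPolynomial.X 0 ^ q * MvPolynomial.X 1 - MvPolynomial.X 0 * MvPolynomial.X 1 ^ q :
        MvPolynomial (Fin 2) F) ∣
      Polynomial.aeval (MvPolynomial.X 0) f * MvPolynomial.X 1 ^ q ^ t -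
        Polynomial.aeval (MvPolynomial.X 1) f * MvPolynomial.X 0 ^ q ^ t := by
  obtain ⟨c, rfl⟩ : ∃ c, q = c + 1 :=
    Nat.exists_eq_succ_of_ne_zero (by rw [hq]; exact (pow_pos hp.pos r).ne')
  rw [Polynomial.aeval_eq_sum_range, Polynomial.aeval_eq_sum_range, Finset.sum_mul,
    Finset.sum_mul, ← Finset.sum_sub_distrib]
  refine Finset.dvd_sum fun i _ => ?_
  by_cases hi : f.coeff i = 0
  · simp [hi]
  · obtain ⟨j, rfl⟩ := hf i hi
    rw [smul_mul_assoc, smul_mul_assoc, ← smul_sub]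
    exact dvd_smul_of_dvd _ (dvd_monomial _ _ c j t)
end

section
/- Let q be a prime power, n a positive integer, t ≥ 0 an integer, f a q-polynomial over 𝔽_{q^n}, and let F ∈ 𝔽_{q^n}[X,Y] be the polynomial satisfying (X^q·Y − X·Y^q)·F(X,Y) = f(X)·Y^{q^t} − f(Y)·X^{q^t}. Then f is scattered of index t if and only if there is no pair (x, y) ∈ 𝔽_{q^n} × 𝔽_{q^n} with x ≠ 0, y/x ∉ 𝔽_q and F(x, y) = 0. -/
/-!
Evaluating the defining identity of `G` at a point `(x, y)` gives
`(x ^ q * y - x * y ^ q) * G(x, y) = f(x) * y ^ q ^ t - f(y) * x ^ q ^ t`.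
For `x ≠ 0` the first factor vanishes exactly when `(y / x) ^ q = y / x`. Hence at a point with
`y / x ∉ 𝔽_q`, which forces `y ≠ 0`, the right-hand side vanishes iff `G(x, y) = 0`.
-/

/-- with F(X,Y) = (f(X)Y^{q^t} - f(Y)X^{q^t})/(X^qY - XY^q), the q-polynomial f
is scattered of index t iff the curve F = 0 has no affine point (x,y) with x ≠ 0 and
y/x ∉ 𝔽_q. Membership of z in 𝔽_q is expressed as z^q = z. -/
theorem stmt_2 (p r q n t : ℕ) (hp : p.Prime) (hr : 0 < r) (hq : q = p ^ r)
    (hn : 0 < n)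
    (F : Type) [Field F] [Fintype F] (hF : Fintype.card F = q ^ n)
    (f : Polynomial F) (hf : ∀ i, f.coeff i ≠ 0 → ∃ j, i = q ^ j)
    (G : MvPolynomial (Fin 2) F)
    (hG : (MvPolynomial.X 0 ^ q * MvPolynomial.X 1 -
            MvPolynomial.X 0 * MvPolynomial.X 1 ^ q) * G =
          Polynomial.aeval (MvPolynomial.X 0) f * MvPolynomial.X 1 ^ q ^ t -
            Polynomial.aeval (MvPolynomial.X 1) f * MvPolynomial.X 0 ^ q ^ t) :
    (∀ x y : F, x ≠ 0 → y ≠ 0 →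
        Polynomial.eval x f * y ^ q ^ t = Polynomial.eval y f * x ^ q ^ t →
        (y / x) ^ q = y / x)
      ↔ ¬ ∃ x y : F, x ≠ 0 ∧ (y / x) ^ q ≠ y / x ∧ MvPolynomial.eval ![x, y] G = 0 := by
  have hq0 : q ≠ 0 := hq ▸ pow_ne_zero r hp.ne_zero
  have key (x y : F) : (x ^ q * y - x * y ^ q) * MvPolynomial.eval ![x, y] G =
      Polynomial.eval x f * y ^ q ^ t - Polynomial.eval y f * x ^ q ^ t := by
    have h := congrArg (MvPolynomial.aeval ![x, y]) hG
    simp only [map_mul, map_sub, map_pow, ← Polynomial.aeval_algHom_apply,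
      MvPolynomial.aeval_X, Polynomial.coe_aeval_eq_eval] at h
    simpa [MvPolynomial.aeval_eq_eval] using h
  constructor
  · rintro h ⟨x, y, hx, hxy, hG0⟩
    have hy : y ≠ 0 := by
      rintro rfl
      simp [hq0] at hxy
    refine hxy (h x y hx hy (sub_eq_zero.mp ?_))
    rw [← key, hG0, mul_zero]
  · intro h x y hx hy hxy
    by_contra hne
    refine h ⟨x, y, hx, hne, ?_⟩
    have h0 := key x y
    rw [hxy, sub_self] at h0
    refine (mul_eq_zero.mp h0).resolve_left fun h1 => hne ?_
    rw [div_pow, div_eq_div_iff (pow_ne_zero q hx) hx]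
    linear_combination -h1
end

section
/- Let q be a prime power and n, i, k, ℓ integers with 1 ≤ i < k. Let f(X) = X^{q^i} + Σ_{j=i+1}^{k−1} α_j X^{q^j} + b X^{q^k} ∈ 𝔽_{q^n}[X] with b ≠ 0, and suppose that f has exactly q^{ℓ−i} distinct roots in an algebraic closure of 𝔽_{q^n}. Let F ∈ 𝔽_{q^n}[X,Y] be the polynomial satisfying (X^q·Y − X·Y^q)·F(X,Y) = f(X)·Y − f(Y)·X. If gcd(k, n) = 1 and q^{ℓ+i} + q^ℓ − q^{2i} − q^i + (q^i − q)²/4 < (2/9)·(q^k − q)², then F has a factor G ∈ 𝔽_{q^n}[X,Y] of positive degree whose image in K[X,Y] is irreducible, where K is an algebraic closure of 𝔽_{q^n} (i.e., the curve F = 0 has an absolutely irreducible 𝔽_{q^n}-rational component). -/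
open scoped Classical

/-!
Write `K` for an algebraic closure of `F` and restrict polynomials to the pencil of lines `Y = tX`:
`f(X)·tX − f(tX)·X = Σ_j α_j (t − t^{q^j}) X^{q^j + 1}` (with `α_i = 1`, `α_k = b`).
Choose `t₀ ∈ K` with `t₀^{q^k} = t₀` and `t₀^{q^i} ≠ t₀`. The coefficient of the top power of `X`,
`b (t − t^{q^k})`, has a simple zero at `t₀`, so exactly one irreducible factor `A` of `G` over `K`
has a leading form vanishing at `t₀`. The cofactor `B` keeps its degree on the line `Y = t₀X`, and
there `G` restricts to a nonzero polynomial of degree at most `q^{k-1} − q`. Hence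
`deg B ≤ q^{k-1} − q`, which is less than half of `deg G = q^k − q`. So `A` is the only
irreducible factor of `G` of more than half its degree, and it is therefore fixed, up to a
scalar, by the Frobenius map of `K` over `F`. After rescaling, `A` has coefficients in `F`.
The lemmas `exists_large_factor` (geometric part) and `exists_descent` (Galois descent) carry this
out.
-/

namespace LinearizedCurve

open Polynomial

/-- Restriction to the pencil of lines through the origin: `P(X, Y) ↦ P(X, tX)`, as a polynomial
in `X` whose coefficients are polynomials in the slope `t`. The `X`-degree of the image is the
total degree of `P`, and its leading coefficient is the dehomogenized leading form of `P`. -/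
noncomputable def pencil (K : Type*) [Field K] : MvPolynomial (Fin 2) K →+* K[X][X] :=
  MvPolynomial.eval₂Hom ((C : K[X] →+* K[X][X]).comp (C : K →+* K[X])) ![X, C X * X]

lemma map_pencil {K : Type*} [Field K] (σ : K →+* K) (P : MvPolynomial (Fin 2) K) :
    pencil K (MvPolynomial.map σ P) = (pencil K P).map (mapRingHom σ) := by
  have : (pencil K).comp (MvPolynomial.map σ) =
      (mapRingHom (mapRingHom σ)).comp (pencil K) := by
    apply MvPolynomial.ringHom_ext
    · intro c
      simp [pencil]
    · intro j
      fin_cases j <;> simp [pencil]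
  exact congrArg (fun g => g P) this

/-- The elements of `K` fixed by the `#F`-power map are those of `F`. -/
lemma mem_range_of_pow_card {F K : Type*} [Field F] [Fintype F] [Field K] [Algebra F K] {x : K}
    (h : x ^ Fintype.card F = x) : ∃ y : F, algebraMap F K y = x := by
  have hne : (X ^ Fintype.card F - X : F[X]) ≠ 0 :=
    FiniteField.X_pow_card_sub_X_ne_zero F Fintype.one_lt_card
  have hs : (X ^ Fintype.card F - X : F[X]).Splits := by
    rw [splits_iff_card_roots, FiniteField.roots_X_pow_card_sub_X,
      FiniteField.X_pow_card_sub_X_natDegree_eq F Fintype.one_lt_card]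
    simp
  have hx : x ∈ ((X ^ Fintype.card F - X : F[X]).map (algebraMap F K)).roots := by
    rw [mem_roots_map hne]
    simp [h]
  rw [hs.roots_map_of_injective (algebraMap F K).injective] at hx
  obtain ⟨y, -, hy⟩ := Multiset.mem_map.1 hx
  exact ⟨y, hy⟩

/-- A polynomial over `K` fixed by the Frobenius map of `K / F` has coefficients in `F`. -/
lemma exists_map_eq {F K : Type*} [Field F] [Fintype F] [Field K] [Algebra F K]
    {s : Type*} (P : MvPolynomial s K) (σ : K →+* K) (hσ : ∀ x, σ x = x ^ Fintype.card F)
    (h : MvPolynomial.map σ P = P) :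
    ∃ P₀ : MvPolynomial s F, MvPolynomial.map (algebraMap F K) P₀ = P := by
  change P ∈ Set.range (MvPolynomial.map (algebraMap F K))
  rw [MvPolynomial.mem_range_map_iff_coeffs_subset]
  intro c hc
  obtain ⟨m, -, rfl⟩ := (MvPolynomial.mem_coeffs_iff).1 hc
  apply mem_range_of_pow_card
  rw [← hσ, ← MvPolynomial.coeff_map, h]

/-- An irreducible factor over `K` of more than half the degree of `G` is unique up to scalars,
hence Frobenius-stable, hence proportional to a factor of `G` defined over `F`. -/
lemma exists_descent {F K : Type*} [Field F] [Fintype F] [Field K] [Algebra F K]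
    [Algebra.IsAlgebraic F K] (G : MvPolynomial (Fin 2) F) (A B : MvPolynomial (Fin 2) K)
    (hAB : A * B = MvPolynomial.map (algebraMap F K) G) (hA : Irreducible A)
    (hne : pencil K (A * B) ≠ 0)
    (hdeg : (pencil K B).natDegree < (pencil K A).natDegree) :
    ∃ G' : MvPolynomial (Fin 2) F, G' ∣ G ∧
      Irreducible (MvPolynomial.map (algebraMap F K) G') := by
  let e : K ≃+* K := (FiniteField.frobeniusAlgEquivOfAlgebraic F K).toRingEquiv
  let σ : K →+* K := e
  have hσ : ∀ x, σ x = x ^ Fintype.card F := fun x => rfl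
  have hσF : σ.comp (algebraMap F K) = algebraMap F K := by
    ext x
    simp [hσ, ← map_pow, FiniteField.pow_card]
  have hmapG : MvPolynomial.map σ (A * B) = A * B := by
    rw [hAB, MvPolynomial.map_map, hσF]
  set A' := MvPolynomial.map σ A with hA'
  have hA'irr : Irreducible A' :=
    (MulEquiv.irreducible_iff (MvPolynomial.mapEquiv (Fin 2) e)).2 hA
  have hdA' : (pencil K A').natDegree = (pencil K A).natDegree := by
    rw [hA', map_pencil]
    exact natDegree_map_eq_of_injective (map_injective _ σ.injective) _
  have hdvd : A' ∣ A * B := by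
    rw [← hmapG, map_mul]
    exact Dvd.intro _ rfl
  have hAA : A' ∣ A := by
    refine (hA'irr.prime.dvd_or_dvd hdvd).resolve_right fun hB => ?_
    have hB0 : pencil K B ≠ 0 := fun h => hne (by rw [map_mul, h, mul_zero])
    have := natDegree_le_of_dvd (map_dvd (pencil K) hB) hB0
    omega
  obtain ⟨u, hu⟩ := hA'irr.associated_of_dvd hA hAA
  obtain ⟨c, hcu, hc⟩ := (MvPolynomial.isUnit_iff_eq_C_of_isReduced).1 u.isUnit
  rw [hc] at hu
  obtain ⟨m, hm⟩ := MvPolynomial.ne_zero_iff.1 hA.ne_zero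
  set a := A.coeff m with ha
  have hac : a = σ a * c := by
    conv_lhs => rw [ha, ← hu]
    rw [mul_comm A', MvPolynomial.coeff_C_mul, MvPolynomial.coeff_map, mul_comm]
  have hσa : σ a ≠ 0 := by simpa using hm
  have hc0 : c ≠ 0 := hcu.ne_zero
  -- normalize the coefficient of the monomial `m` to be `1`
  have hfixA : MvPolynomial.map σ (MvPolynomial.C a⁻¹ * A) = MvPolynomial.C a⁻¹ * A := by
    rw [map_mul, MvPolynomial.map_C, ← hA']
    conv_rhs => rw [← hu, mul_comm A', ← mul_assoc, ← MvPolynomial.C_mul]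
    congr 2
    rw [map_inv₀]
    conv_rhs => rw [hac]
    field_simp
  have hprod : MvPolynomial.C a⁻¹ * A * (MvPolynomial.C a * B) = A * B := by
    have : (MvPolynomial.C a⁻¹ * MvPolynomial.C a : MvPolynomial (Fin 2) K) = 1 := by
      rw [← MvPolynomial.C_mul, inv_mul_cancel₀ hm, MvPolynomial.C_1]
    linear_combination (A * B) * this
  have hCu : IsUnit (MvPolynomial.C a⁻¹ : MvPolynomial (Fin 2) K) :=
    (IsUnit.mk0 _ (inv_ne_zero hm)).map _
  have hA1 : Irreducible (MvPolynomial.C a⁻¹ * A) :=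
    (irreducible_isUnit_mul hCu).2 hA
  have hfixB : MvPolynomial.map σ (MvPolynomial.C a * B) = MvPolynomial.C a * B := by
    apply mul_left_cancel₀ hA1.ne_zero
    conv_lhs => rw [← hfixA, ← map_mul, hprod, hmapG, ← hprod]
  obtain ⟨A₀, hA₀⟩ := exists_map_eq _ σ hσ hfixA
  obtain ⟨B₀, hB₀⟩ := exists_map_eq _ σ hσ hfixB
  refine ⟨A₀, ⟨B₀, ?_⟩, hA₀ ▸ hA1⟩
  apply MvPolynomial.map_injective _ (algebraMap F K).injective
  rw [map_mul, hA₀, hB₀, hprod, hAB]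

/-- Suppose the top `X`-coefficient of `P(X, tX)` has a simple zero at the slope `t₀` and
`P(X, t₀X) ≠ 0`. Then `P` has an irreducible factor whose cofactor has degree at most that
of `P(X, t₀X)`. -/
lemma exists_large_factor {K : Type*} [Field K] (P : MvPolynomial (Fin 2) K) (t₀ : K)
    (h0 : (pencil K P).leadingCoeff.eval t₀ = 0)
    (h1 : (derivative (pencil K P).leadingCoeff).eval t₀ ≠ 0)
    (hres : (pencil K P).map (evalRingHom t₀) ≠ 0) :
    ∃ A B, A * B = P ∧ Irreducible A ∧
      (pencil K B).natDegree ≤ ((pencil K P).map (evalRingHom t₀)).natDegree := by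
  have hP0 : P ≠ 0 := by
    rintro rfl
    simp at hres
  -- the value at `t₀` of the leading coefficient is multiplicative in the polynomial
  let ψ : MvPolynomial (Fin 2) K →* K :=
    ((evalRingHom t₀ : K[X] →* K).comp leadingCoeffHom).comp (pencil K : _ →* _)
  obtain ⟨A, hA, hAψ⟩ : ∃ A ∈ UniqueFactorizationMonoid.factors P, ψ A = 0 := by
    by_contra! hcon
    obtain ⟨u, hu⟩ := UniqueFactorizationMonoid.factors_prod hP0
    have hψ : ψ P = 0 := h0
    rw [← hu, map_mul, mul_eq_zero] at hψ
    rcases hψ with h | h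
    · rw [map_multiset_prod, Multiset.prod_eq_zero_iff] at h
      obtain ⟨A, hA, hA'⟩ := Multiset.mem_map.1 h
      exact hcon A hA hA'
    · exact (u.isUnit.map ψ).ne_zero h
  obtain ⟨B, rfl⟩ := UniqueFactorizationMonoid.dvd_of_mem_factors hA
  refine ⟨A, B, rfl, UniqueFactorizationMonoid.irreducible_of_factor A hA, ?_⟩
  have hAψ' : (pencil K A).leadingCoeff.eval t₀ = 0 := hAψ
  have hBψ : (pencil K B).leadingCoeff.eval t₀ ≠ 0 := by
    intro hB
    apply h1
    rw [map_mul, leadingCoeff_mul, derivative_mul, eval_add, eval_mul, eval_mul, hAψ', hB]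
    simp
  rw [← natDegree_map_of_leadingCoeff_ne_zero (evalRingHom t₀) (by simpa using hBψ)]
  apply natDegree_le_of_dvd _ hres
  rw [map_mul, Polynomial.map_mul]
  exact Dvd.intro_left _ rfl

/-- When `d = 0` in `K`, the `d` roots of `X ^ d - X` are distinct, so they outnumber those of
`X ^ a - X`. -/
lemma exists_slope {K : Type*} [Field K] [IsAlgClosed K] {a d : ℕ} (ha : 1 < a) (had : a < d)
    (hd : (d : K) = 0) : ∃ t : K, t ^ d = t ∧ t ^ a ≠ t := by
  by_contra! hcon
  have hne : ∀ e, 1 < e → (X ^ e - X : K[X]) ≠ 0 := fun e he =>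
    FiniteField.X_pow_card_sub_X_ne_zero K he
  have hsep : (X ^ d - X : K[X]).Separable := by
    rw [separable_def]
    refine ⟨0, -1, ?_⟩
    simp [derivative_X_pow, hd]
  have hsub : (X ^ d - X : K[X]).roots ≤ (X ^ a - X : K[X]).roots := by
    rw [Multiset.le_iff_subset (nodup_roots hsep)]
    intro t ht
    rw [mem_roots (hne d (ha.trans had))] at ht
    rw [mem_roots (hne a ha)]
    have h : t ^ d = t := by simpa [sub_eq_zero] using ht
    simpa [sub_eq_zero] using hcon t h
  have h1 := Multiset.card_le_card hsub
  have h2 : (X ^ a - X : K[X]).roots.card ≤ a :=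
    (card_roots' _).trans (FiniteField.X_pow_card_sub_X_natDegree_eq K ha).le
  have h3 := (IsAlgClosed.splits (X ^ d - X : K[X])).natDegree_eq_card_roots
  rw [FiniteField.X_pow_card_sub_X_natDegree_eq K (ha.trans had)] at h3
  omega

end LinearizedCurve

open LinearizedCurve

/-- for f(X) = X^{q^i} + Σ_{j=i+1}^{k−1} α_j X^{q^j} + b X^{q^k} with b ≠ 0,
exactly q^{ℓ−i} distinct roots in an algebraic closure, gcd(k,n) = 1 and
q^{ℓ+i} + q^ℓ − q^{2i} − q^i + (q^i − q)²/4 < (2/9)(q^k − q)², the curve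
F(X,Y) = (f(X)Y − f(Y)X)/(X^qY − XY^q) = 0 has an absolutely irreducible
𝔽_{q^n}-rational component. -/
theorem stmt_4 (p r q n i k ℓ : ℕ) (hp : p.Prime) (hr : 0 < r) (hq : q = p ^ r)
    (hn : 0 < n) (hi : 1 ≤ i) (hik : i < k) (hiℓ : i ≤ ℓ)
    (F : Type) [Field F] [Fintype F] (hF : Fintype.card F = q ^ n)
    (α : ℕ → F) (b : F) (hb : b ≠ 0)
    (f : Polynomial F)
    (hfdef : f = Polynomial.X ^ q ^ i +
        (∑ j ∈ Finset.Ico (i + 1) k, Polynomial.C (α j) * Polynomial.X ^ q ^ j) +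
        Polynomial.C b * Polynomial.X ^ q ^ k)
    (hroots : (f.map (algebraMap F (AlgebraicClosure F))).roots.toFinset.card = q ^ (ℓ - i))
    (G : MvPolynomial (Fin 2) F)
    (hG : (MvPolynomial.X 0 ^ q * MvPolynomial.X 1 -
            MvPolynomial.X 0 * MvPolynomial.X 1 ^ q) * G =
          Polynomial.aeval (MvPolynomial.X 0) f * MvPolynomial.X 1 -
            Polynomial.aeval (MvPolynomial.X 1) f * MvPolynomial.X 0)
    (hgcd : Nat.gcd k n = 1)
    (hineq : (q : ℝ) ^ (ℓ + i) + (q : ℝ) ^ ℓ - (q : ℝ) ^ (2 * i) - (q : ℝ) ^ i +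
        ((q : ℝ) ^ i - (q : ℝ)) ^ 2 / 4 < 2 / 9 * ((q : ℝ) ^ k - (q : ℝ)) ^ 2) :
    ∃ G' : MvPolynomial (Fin 2) F, G' ∣ G ∧ 0 < G'.totalDegree ∧
      Irreducible (MvPolynomial.map (algebraMap F (AlgebraicClosure F)) G') := by
  classical
  set K := AlgebraicClosure F
  set φ := algebraMap F K
  set P := MvPolynomial.map φ G with hP
  have hq1 : 1 < q := by
    rw [hq]; exact Nat.one_lt_pow hr.ne' hp.one_lt
  have hk0 : k ≠ 0 := by omega
  have hqi1 : 1 < q ^ i := Nat.one_lt_pow (by omega) hq1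
  have hqik : q ^ i < q ^ k := Nat.pow_lt_pow_right hq1 hik
  have hqK : (q : K) = 0 := by
    have h1 : (q : F) ^ n = 0 := by
      rw [← Nat.cast_pow, ← hF, Nat.cast_card_eq_zero]
    have h2 : (q : F) = 0 := pow_eq_zero_iff (by omega) |>.1 h1
    simpa using congrArg φ h2
  have hqkK : ((q ^ k : ℕ) : K) = 0 := by simp [hqK, hk0]
  obtain ⟨t₀, ht₀, ht₀i⟩ := exists_slope (K := K) hqi1 hqik hqkK
  have ht₀q : t₀ ^ q ≠ t₀ := by
    intro h
    apply ht₀i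
    have : ∀ j : ℕ, t₀ ^ q ^ j = t₀ := by
      intro j
      induction j with
      | zero => simp
      | succ j ih => rw [pow_succ, pow_mul, ih, h]
    exact this i
  -- `P(X, tX) (t - t ^ q) X ^ (q + 1) = S + b (t - t ^ (q ^ k)) X ^ (q ^ k + 1)`, where `S` collects
  -- the terms with exponent `q ^ j + 1`, `i ≤ j < k`
  let c : ℕ → Polynomial K := fun j => Polynomial.X - Polynomial.X ^ q ^ j
  let S : Polynomial (Polynomial K) :=
    Polynomial.C (c i) * Polynomial.X ^ (q ^ i + 1) +
      ∑ j ∈ Finset.Ico (i + 1) k,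
        Polynomial.C (Polynomial.C (φ (α j)) * c j) * Polynomial.X ^ (q ^ j + 1)
  have hEq : (Polynomial.C (c 1) * pencil K P) * Polynomial.X ^ (q + 1) =
      S + Polynomial.C (Polynomial.C (φ b) * c k) * Polynomial.X ^ (q ^ k + 1) := by
    have h := congrArg (fun Q => pencil K (MvPolynomial.map φ Q)) hG
    simp only [map_mul, map_sub, ← hP] at h
    subst hfdef
    have hpe : pencil K P = MvPolynomial.eval₂ (Polynomial.C.comp Polynomial.C)
      ![Polynomial.X, Polynomial.C Polynomial.X * Polynomial.X] P := rfl
    simp [pencil] at h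
    rw [← hpe] at h
    simp only [S, c, map_sub, map_mul, map_pow, pow_one, mul_pow] at h ⊢
    have hs : ∑ x ∈ Finset.Ico (i + 1) k, Polynomial.C (Polynomial.C (φ (α x))) *
          (Polynomial.C Polynomial.X - Polynomial.C Polynomial.X ^ q ^ x) *
            (Polynomial.X : Polynomial (Polynomial K)) ^ (q ^ x + 1) =
        (∑ x ∈ Finset.Ico (i + 1) k,
          Polynomial.C (Polynomial.C (φ (α x))) * Polynomial.X ^ q ^ x) *
            (Polynomial.C Polynomial.X * Polynomial.X) -
        (∑ x ∈ Finset.Ico (i + 1) k, Polynomial.C (Polynomial.C (φ (α x))) *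
          (Polynomial.C Polynomial.X ^ q ^ x * Polynomial.X ^ q ^ x)) * Polynomial.X := by
      rw [Finset.sum_mul, Finset.sum_mul, ← Finset.sum_sub_distrib]
      exact Finset.sum_congr rfl fun x _ => by ring
    linear_combination h - hs
  have hdc : ∀ j, Polynomial.derivative (c j) = 1 - Polynomial.C ((q ^ j : ℕ) : K) *
      Polynomial.X ^ (q ^ j - 1) := by
    intro j
    simp [c, Polynomial.derivative_X_pow]
  have hc1 : (c 1).eval t₀ ≠ 0 := by
    simpa [c, sub_eq_zero] using Ne.symm ht₀q
  have hci : (c i).eval t₀ ≠ 0 := by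
    simpa [c, sub_eq_zero] using Ne.symm ht₀i
  have hck : (c k).eval t₀ = 0 := by
    simp [c, ht₀]
  have hφb : φ b ≠ 0 := by simpa using hb
  have hdk : Polynomial.derivative (Polynomial.C (φ b) * c k) = Polynomial.C (φ b) := by
    rw [Polynomial.derivative_C_mul, hdc, hqkK]
    simp
  have hLk : Polynomial.C (φ b) * c k ≠ 0 := by
    intro h
    rw [h, Polynomial.derivative_zero] at hdk
    exact hφb (Polynomial.C_eq_zero.1 hdk.symm)
  have hpow : ∀ j, j < k → q ^ j ≤ q ^ (k - 1) := fun j hj =>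
    Nat.pow_le_pow_right (by omega) (by omega)
  have hqk : 2 * q ^ (k - 1) ≤ q ^ k := by
    obtain ⟨m, rfl⟩ := Nat.exists_eq_succ_of_ne_zero hk0
    rw [Nat.succ_sub_one, pow_succ, mul_comm]
    exact Nat.mul_le_mul_left _ hq1
  have hqk1 : q ≤ q ^ (k - 1) := by simpa using hpow 1 (by omega)
  have hSdeg : S.natDegree ≤ q ^ (k - 1) + 1 := by
    apply Polynomial.natDegree_add_le_of_degree_le
    · exact (Polynomial.natDegree_C_mul_X_pow_le _ _).trans (by have := hpow i hik; omega)
    · apply Polynomial.natDegree_sum_le_of_forall_le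
      intro j hj
      have := hpow j (Finset.mem_Ico.1 hj).2
      exact (Polynomial.natDegree_C_mul_X_pow_le _ _).trans (by omega)
  have hSlt : S.degree <
      (Polynomial.C (Polynomial.C (φ b) * c k) * Polynomial.X ^ (q ^ k + 1)).degree := by
    rw [Polynomial.degree_C_mul_X_pow _ hLk]
    refine Polynomial.degree_le_natDegree.trans_lt ?_
    exact_mod_cast (by omega : S.natDegree < q ^ k + 1)
  have hc1ne : c 1 ≠ 0 := by
    intro h
    simp [h] at hc1
  have hlc : c 1 * (pencil K P).leadingCoeff = Polynomial.C (φ b) * c k := by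
    have h := congrArg Polynomial.leadingCoeff hEq
    rwa [Polynomial.leadingCoeff_mul_X_pow, Polynomial.leadingCoeff_mul, Polynomial.leadingCoeff_C,
      Polynomial.leadingCoeff_add_of_degree_lt hSlt, Polynomial.leadingCoeff_C_mul_X_pow] at h
  have hg : pencil K P ≠ 0 := by
    intro h
    rw [h] at hlc
    exact hLk (by simpa using hlc.symm)
  have hdeg : (pencil K P).natDegree + (q + 1) = q ^ k + 1 := by
    have h := congrArg Polynomial.natDegree hEq
    rwa [Polynomial.natDegree_mul_X_pow _ (mul_ne_zero (by simpa using hc1ne) hg),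
      Polynomial.natDegree_C_mul hc1ne, Polynomial.natDegree_add_eq_right_of_degree_lt hSlt,
      Polynomial.natDegree_C_mul_X_pow _ _ hLk] at h
  have h0 : (pencil K P).leadingCoeff.eval t₀ = 0 := by
    have h := congrArg (Polynomial.eval t₀) hlc
    rw [Polynomial.eval_mul, Polynomial.eval_mul, hck, mul_zero] at h
    exact (mul_eq_zero.1 h).resolve_left hc1
  have h1 : (Polynomial.derivative (pencil K P).leadingCoeff).eval t₀ ≠ 0 := by
    intro h
    have hder := congrArg (fun Q => Polynomial.eval t₀ (Polynomial.derivative Q)) hlc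
    simp only [hdk, Polynomial.derivative_mul (f := c 1), Polynomial.eval_add, Polynomial.eval_mul,
      h0, h, Polynomial.eval_C] at hder
    exact hφb (by simpa using hder.symm)
  -- on the line `Y = t₀X` the term of degree `q ^ k` disappears
  have hEq₀ : (Polynomial.C ((c 1).eval t₀) * (pencil K P).map (Polynomial.evalRingHom t₀)) *
      Polynomial.X ^ (q + 1) = S.map (Polynomial.evalRingHom t₀) := by
    have h := congrArg (Polynomial.map (Polynomial.evalRingHom t₀)) hEq
    simpa [hck] using h
  have hS₀ : S.map (Polynomial.evalRingHom t₀) ≠ 0 := by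
    intro h
    have h' := congrArg (fun Q => Polynomial.coeff Q (q ^ i + 1)) h
    have hz : ∀ j ∈ Finset.Ico (i + 1) k, q ^ i ≠ q ^ j := fun j hj =>
      (Nat.pow_lt_pow_right hq1 (by have := (Finset.mem_Ico.1 hj).1; omega)).ne
    have hsum : (∑ j ∈ Finset.Ico (i + 1) k,
        Polynomial.C (Polynomial.C (φ (α j)) * c j) * Polynomial.X ^ (q ^ j + 1)).coeff
          (q ^ i + 1) = 0 := by
      rw [Polynomial.finsetSum_coeff]
      refine Finset.sum_eq_zero fun j hj => ?_
      rw [Polynomial.coeff_C_mul_X_pow, if_neg]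
      have := hz j hj
      omega
    simp only [Polynomial.coeff_map, S, Polynomial.coeff_add, hsum] at h'
    exact hci (by simpa using h')
  have hres : (pencil K P).map (Polynomial.evalRingHom t₀) ≠ 0 := by
    intro h
    exact hS₀ (by rw [← hEq₀, h]; simp)
  have hresdeg : ((pencil K P).map (Polynomial.evalRingHom t₀)).natDegree + (q + 1) ≤
      q ^ (k - 1) + 1 := by
    have h := congrArg Polynomial.natDegree hEq₀
    rw [Polynomial.natDegree_mul_X_pow _ (mul_ne_zero (by simpa using hc1) hres),
      Polynomial.natDegree_C_mul hc1] at h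
    rw [h]
    exact Polynomial.natDegree_map_le.trans hSdeg
  obtain ⟨A, B, hAB, hA, hB⟩ := exists_large_factor P t₀ h0 h1 hres
  have hABdeg : (pencil K A).natDegree + (pencil K B).natDegree = (pencil K P).natDegree := by
    rw [← hAB, map_mul] at hg ⊢
    exact (Polynomial.natDegree_mul (left_ne_zero_of_mul hg) (right_ne_zero_of_mul hg)).symm
  obtain ⟨G', hG', hirr⟩ := exists_descent G A B hAB hA (by rwa [hAB]) (by omega)
  refine ⟨G', hG', ?_, hirr⟩
  by_contra h
  rw [not_lt, Nat.le_zero, MvPolynomial.totalDegree_eq_zero_iff_eq_C] at h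
  rw [h, MvPolynomial.map_C] at hirr
  by_cases h' : φ (G'.coeff 0) = 0
  · exact hirr.ne_zero (by rw [h', map_zero])
  · exact hirr.not_isUnit ((IsUnit.mk0 _ h').map _)
end

section
/- Let q > 5 be a prime power, n a positive integer, and let f(X) = Σ_{j=1}^{k} a_j X^{q^j} ∈ 𝔽_{q^n}[X] be a monic q-polynomial (so a_k = 1 and k ≥ 1; note the coefficient of X is zero). If f is an exceptional scattered polynomial of index 0, i.e., for infinitely many positive integers m one has: for all nonzero x, y in the degree-m extension 𝔽_{q^{mn}} of 𝔽_{q^n}, f(x)·y = f(y)·x implies y/x ∈ 𝔽_q, then f(X) = X^{q^k}. -/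
/-!
Let `K` be an algebraic closure of `F` and suppose that `f = ∑ a_j X^{q^j}` has a second nonzero
coefficient besides `a_k = 1`.

**The curve.** Put `H(x, Y) = f(Y) - (f(x)/x) Y`, a monic polynomial of degree `q^k` in `Y` over
`K[x]`. For `x ≠ 0` the roots `y` of `H(x, Y)` are exactly the solutions of `f(y) x = f(x) y`. Let
`S` be the finite set of `θ` with `θ^{q^j} = θ` whenever `a_j ≠ 0`. The product
`B = ∏_{θ ∈ S} (Y - θ x)` divides `H`; let `G = H / B`, of positive degree because a coefficient
`a_j` with `j < k` is nonzero.

**Irreducibility of `G`** (`irreducible_G`). After the substitution `y = z x` (`slope`) the top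
coefficient of `G` in `x` is a divisor of the separable polynomial `z^{q^k} - z`. Suppose
`G = F₁ F₂` with monic nonconstant factors. Choose a root `θ` of the top coefficient of `F₁`; then
`θ ∉ S` and `θ^{q^k} = θ`, so `H` restricted to the line `y = θ x` is nonzero of degree at most
`q^{k-1}`. As `F₂` and `B` keep their degrees on this line, `deg F₂ + |S| ≤ q^{k-1}`
(`factor_bound`). The same holds for `F₁`, and adding the two contradicts
`deg F₁ + deg F₂ = q^k - |S|` and `|S| > 0`.

**A Stepanov bound** (`IsCurve.stepanov`, `frob_points_le`). Let `G = 0` be an integral plane curve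
of degree `d = e + 1`, and let `Q = R P` with `R`, `P` large powers of `p`. Consider the points
`(x, y)` of the curve with `x^Q = x` such that `(x, y^Q)` is a *different* point of the curve with
the same abscissa. There are at most `d (2 d² + 2 d + (R - 1) P)` of them, about `d P` fewer than the
`d Q` points with `x^Q = x`. To prove this, note that `y^Q` is a root of
`(G(x, Y) - G(x, y)) / (Y - y)`, which is monic of degree `e` in `Y`. A dimension count produces a
nonzero family of coefficients for which the `R`-th power of
`∑ c x^{l + iP} y^{m + jP}` vanishes at all these points. The function is not identically zero:
otherwise, evaluating the `P`-th power parts at a point `φ` would give a nonzero function of low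
degree in the `P`-th power of the maximal ideal at `φ` (`IsCurve.frob_indep`,
`IsCurve.mult_le`). The number of zeros of a nonzero function is bounded by its degree
(`IsCurve.zeros_le`).

**Conclusion** (`exists_not_scattered`). Let `Q = q^{mn}` and suppose `f` is scattered over the
field with `Q` elements. Take `x^Q = x` with `f(x) ≠ 0` and a root `y` of `G(x, Y)`; there are
`deg G` such roots, as `H(x, Y)` has constant nonzero derivative. Then `(x, y^Q)` is again on the
curve. If `y^Q = y`, scatteredness forces `y = θ x` with `θ^q = θ`, so `θ ∈ S` and `y` would be a
double root of `H(x, Y)`. So all of these at least `d (Q - q^k)` points are counted by the Stepanov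
bound, which is impossible for large `m`.
-/

namespace ExcScattered
open Polynomial

/-! ### Counting on an integral plane curve -/

section Curve
variable {K A : Type*} [Field K] [CommRing A] [Algebra K A]

/-- The functions of degree at most `D` in the coordinates `x`, `y`. -/
def W (K : Type*) {A : Type*} [Field K] [CommRing A] [Algebra K A] (x y : A) (D : ℕ) :
    Submodule K A :=
  Submodule.span K {w | ∃ l m : ℕ, l + m ≤ D ∧ w = x ^ l * y ^ m}

/-- The span of the monomials `x^l y^m` with `l < n` and `m < d`. On a curve of degree `d` monic in
`y`, these monomials are independent, so this is a normal form for functions. -/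
def Box (K : Type*) {A : Type*} [Field K] [CommRing A] [Algebra K A] (x y : A) (d n : ℕ) :
    Submodule K A :=
  Submodule.span K (Set.range fun t : Fin n × Fin d => x ^ (t.1 : ℕ) * y ^ (t.2 : ℕ))

theorem mono_mem_W (x y : A) {l m D : ℕ} (h : l + m ≤ D) : x ^ l * y ^ m ∈ W K x y D :=
  Submodule.subset_span ⟨l, m, h, rfl⟩

theorem W_mono (x y : A) {D E : ℕ} (h : D ≤ E) : W K x y D ≤ W K x y E := by
  apply Submodule.span_mono
  rintro _ ⟨l, m, hlm, rfl⟩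
  exact ⟨l, m, hlm.trans h, rfl⟩

theorem mul_mem_W {x y : A} {D E : ℕ} {s t : A} (hs : s ∈ W K x y D) (ht : t ∈ W K x y E) :
    s * t ∈ W K x y (D + E) := by
  have h := Submodule.mul_mem_mul hs ht
  rw [W, W, Submodule.span_mul_span] at h
  refine Submodule.span_mono ?_ h
  rintro _ ⟨_, ⟨l, m, hlm, rfl⟩, _, ⟨l', m', hlm', rfl⟩, rfl⟩
  exact ⟨l + l', m + m', by omega, by simp only [pow_add]; ring⟩

instance (x y : A) (d n : ℕ) : FiniteDimensional K (Box K x y d n) :=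
  FiniteDimensional.span_of_finite K (Set.finite_range _)

theorem finrank_Box_le (x y : A) (d n : ℕ) : Module.finrank K (Box K x y d n) ≤ n * d := by
  refine (finrank_range_le_card (R := K) fun t : Fin n × Fin d => x ^ (t.1 : ℕ) * y ^ (t.2 : ℕ)).trans ?_
  simp

/-- The `K`-algebra `A` behaves like the coordinate ring of an affine plane curve of degree `d`
whose equation is monic of degree `d` in `y`: it is generated by `x` and `y`, the monomials
`x^l y^m` with `m < d` form a basis, and rewriting a function of degree `D` in this basis does not
raise the degree. -/
structure IsCurve (K : Type*) {A : Type*} [Field K] [CommRing A] [Algebra K A]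
    (x y : A) (d : ℕ) : Prop where
  dpos : 1 ≤ d
  le_box : ∀ D, W K x y D ≤ Box K x y d (D + 1)
  exhaust : ∀ s, ∃ D, s ∈ W K x y D
  indep : LinearIndependent K fun t : ℕ × Fin d => x ^ t.1 * y ^ (t.2 : ℕ)

variable [IsDomain A] {x y : A} {d : ℕ}

/-- If a nonzero `s` of degree `D` lies in an ideal `I`, then `A / I` has dimension at most
`d (D + d)`. Together with the multiples of `s`, a family independent modulo `I` spans a subspace
of the functions of bounded degree, and the number of monomials available leaves no more room. -/
theorem IsCurve.card_le (hC : IsCurve K x y d) {s : A} {D : ℕ} (hs : s ∈ W K x y D)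
    (hs0 : s ≠ 0) (I : Ideal A) (hI : s ∈ I) {ι : Type*} [Fintype ι] (v : ι → A)
    (hv : ∀ c : ι → K, ∑ i, c i • v i ∈ I → c = 0) : Fintype.card ι ≤ d * (D + d) := by
  classical
  choose M0 hM0 using fun i => hC.exhaust (v i)
  set M := ∑ i, M0 i with hM
  have hvM : ∀ i, v i ∈ W K x y M := fun i =>
    W_mono x y (Finset.single_le_sum (fun _ _ => Nat.zero_le _) (Finset.mem_univ i)) (hM0 i)
  let T : ((ι → K) × (Fin M × Fin d → K)) →ₗ[K] A :=
    (Fintype.linearCombination K v).coprod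
      ((LinearMap.mulLeft K s).comp (Fintype.linearCombination K
        fun t : Fin M × Fin d => x ^ (t.1 : ℕ) * y ^ (t.2 : ℕ)))
  have hTap : ∀ c t, T (c, t) = ∑ i, c i • v i
      + s * ∑ u, t u • (x ^ (u.1 : ℕ) * y ^ (u.2 : ℕ)) := by
    intro c t
    simp [T, Fintype.linearCombination_apply, Finset.mul_sum]
  have hT : ∀ z, T z ∈ Box K x y d (M + D + d) := by
    rintro ⟨c, t⟩
    rw [hTap]
    refine Submodule.add_mem _ (Submodule.sum_mem _ fun i _ => Submodule.smul_mem _ _ ?_) ?_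
    · have h2 := hC.le_box (M + D + d - 1)
        (W_mono x y (by have := hC.dpos; omega) (hvM i))
      rwa [Nat.sub_add_cancel (by have := hC.dpos; omega)] at h2
    · rw [Finset.mul_sum]
      refine Submodule.sum_mem _ fun u _ => ?_
      rw [mul_smul_comm]
      refine Submodule.smul_mem _ _ ?_
      have h2 := hC.le_box (M + D + d - 1)
        (W_mono x y (by have := hC.dpos; have := u.1.2; have := u.2.2; omega)
          (mul_mem_W hs (mono_mem_W (K := K) x y (le_refl ((u.1 : ℕ) + (u.2 : ℕ))))))
      rwa [Nat.sub_add_cancel (by have := hC.dpos; omega)] at h2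
  have hli : LinearIndependent K
      (fun t : Fin M × Fin d => x ^ (t.1 : ℕ) * y ^ (t.2 : ℕ)) :=
    hC.indep.comp (fun t : Fin M × Fin d => ((t.1 : ℕ), t.2)) (by
      rintro ⟨a, b⟩ ⟨a', b'⟩ h
      simp only [Prod.mk.injEq] at h
      exact Prod.ext (Fin.ext h.1) h.2)
  have hinj : Function.Injective (T.codRestrict _ hT) := by
    rw [← LinearMap.ker_eq_bot, LinearMap.ker_codRestrict, LinearMap.ker_eq_bot']
    rintro ⟨c, t⟩ h
    rw [hTap] at h
    have hc : c = 0 := hv c (by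
      rw [eq_neg_of_add_eq_zero_left h]
      exact I.neg_mem (I.mul_mem_right _ hI))
    subst hc
    simp only [Pi.zero_apply, zero_smul, Finset.sum_const_zero, zero_add, mul_eq_zero, hs0,
      false_or] at h
    have := Fintype.linearIndependent_iff.1 hli t h
    exact Prod.ext rfl (funext this)
  have h1 := (LinearMap.finrank_le_finrank_of_injective hinj).trans (finrank_Box_le x y d _)
  simp only [Module.finrank_prod, Module.finrank_fintype_fun_eq_card, Fintype.card_prod,
    Fintype.card_fin] at h1
  nlinarith

/-- A nonzero function of degree `D` vanishes at a point to order at most `d (D + d)`. Elements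
`v i ∈ 𝔪^i \ 𝔪^(i+1)`, which exist by Krull's intersection theorem, are independent modulo `𝔪^P`. -/
theorem IsCurve.mult_le [IsNoetherianRing A] (hC : IsCurve K x y d) {s : A} {D : ℕ}
    (hs : s ∈ W K x y D) (hs0 : s ≠ 0) (φ : A →ₐ[K] K) (P : ℕ)
    (hP : s ∈ RingHom.ker φ ^ P) : P ≤ d * (D + d) := by
  set m := RingHom.ker φ with hm
  have hmtop : m ≠ ⊤ := RingHom.ker_ne_top φ
  have hmbot : m ≠ ⊥ := by
    intro h
    have h1 : x - algebraMap K A (φ x) ∈ m := by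
      rw [hm, RingHom.mem_ker]; simp
    rw [h, Ideal.mem_bot, sub_eq_zero] at h1
    have h2 := hC.indep.comp (fun i : Fin 2 => ((i : ℕ), (⟨0, hC.dpos⟩ : Fin d)))
      fun i j hij => Fin.ext (Prod.ext_iff.1 hij).1
    have h3 := Fintype.linearIndependent_iff.1 h2 ![-φ x, 1] (by
      simp [Fin.sum_univ_two, Algebra.smul_def, ← h1]) 1
    simp at h3
  have hne : ∀ i, ∃ v ∈ m ^ i, v ∉ m ^ (i + 1) := by
    intro i
    by_contra! hcon
    have heq : ∀ j, m ^ i ≤ m ^ (i + j) := by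
      intro j
      induction j with
      | zero => exact le_rfl
      | succ j ih =>
        calc m ^ i ≤ m ^ (i + 1) := hcon
          _ = m ^ i * m := pow_succ _ _
          _ ≤ m ^ (i + j) * m := Ideal.mul_mono_left ih
          _ = m ^ (i + (j + 1)) := (pow_succ _ _).symm
    have h2 : m ^ i ≤ ⨅ j, m ^ j := le_iInf fun j =>
      (heq j).trans (Ideal.pow_le_pow_right (by omega))
    rw [Ideal.iInf_pow_eq_bot_of_isDomain m hmtop, le_bot_iff] at h2
    exact hmbot (eq_zero_of_pow_eq_zero h2)
  choose v hv1 hv2 using hne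
  have := hC.card_le hs hs0 (m ^ P) hP (fun i : Fin P => v i) (by
    intro c hc
    have key : ∀ n (hn : n < P), c ⟨n, hn⟩ = 0 := by
      intro n
      induction n using Nat.strong_induction_on with
      | _ n ih =>
        intro hn
        by_contra hcn
        have h3 : c ⟨n, hn⟩ • v n ∈ m ^ (n + 1) := by
          rw [← Finset.add_sum_erase _ _ (Finset.mem_univ (⟨n, hn⟩ : Fin P))] at hc
          refine (Submodule.add_mem_iff_left _ ?_).1 (Ideal.pow_le_pow_right hn hc)
          refine Submodule.sum_mem _ fun i hi => ?_
          rcases lt_trichotomy (i : ℕ) n with h | h | h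
          · rw [ih i h i.2, zero_smul]; exact Submodule.zero_mem _
          · exact absurd (Fin.ext h) (Finset.ne_of_mem_erase hi)
          · rw [Algebra.smul_def]
            exact Ideal.mul_mem_left _ _ (Ideal.pow_le_pow_right h (hv1 i))
        apply hv2 n
        have h4 := Ideal.mul_mem_left _ (algebraMap K A (c ⟨n, hn⟩)⁻¹) h3
        rwa [← Algebra.smul_def, smul_smul, inv_mul_cancel₀ hcn, one_smul] at h4
    exact funext fun i => key i i.2)
  simpa using this

/-- A nonzero function of degree `D` has at most `d (D + d)` zeros. Functions separating the zeros
are independent modulo the ideal of functions vanishing at all of them. -/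
theorem IsCurve.zeros_le (hC : IsCurve K x y d) {s : A} {D : ℕ}
    (hs : s ∈ W K x y D) (hs0 : s ≠ 0) (Z : Finset (A →ₐ[K] K))
    (hZ : ∀ φ ∈ Z, φ s = 0) : Z.card ≤ d * (D + d) := by
  classical
  have hsep : ∀ φ ψ : A →ₐ[K] K, ∃ e, φ ≠ ψ → φ e = 1 ∧ ψ e = 0 := by
    intro φ ψ
    by_cases h : φ = ψ
    · exact ⟨0, fun h' => absurd h h'⟩
    obtain ⟨w, hw⟩ : ∃ w, φ w ≠ ψ w := by
      by_contra! h'; exact h (AlgHom.ext h')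
    refine ⟨algebraMap K A (φ w - ψ w)⁻¹ * (w - algebraMap K A (ψ w)), fun _ => ?_⟩
    have := sub_ne_zero.2 hw
    simp [this]
  choose e he using hsep
  have := hC.card_le hs hs0 (⨅ φ : Z, RingHom.ker φ.1)
    (by simp only [Ideal.mem_iInf, RingHom.mem_ker]; exact fun i => hZ _ i.2)
    (fun φ : Z => ∏ ψ ∈ Z.erase φ.1, e φ.1 ψ) (by
      intro c hc
      funext φ
      simp only [Ideal.mem_iInf, RingHom.mem_ker] at hc
      have h := hc φ
      rw [map_sum, Finset.sum_eq_single φ] at h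
      · rw [map_smul, map_prod, Finset.prod_eq_one] at h
        · simpa using h
        · exact fun ψ hψ => (he _ _ (Finset.ne_of_mem_erase hψ).symm).1
      · intro ψ _ hne
        rw [map_smul, map_prod, Finset.prod_eq_zero (i := φ.1), smul_zero]
        · exact Finset.mem_erase.2 ⟨fun h => hne (Subtype.ext h).symm, φ.2⟩
        · exact (he _ _ fun h => hne (Subtype.ext h)).2
      · exact fun h => absurd (Finset.mem_univ _) h)
  simpa using this


theorem IsCurve.exists_point (hC : IsCurve K x y d) [Infinite (A →ₐ[K] K)] {u : A}
    (hu : u ≠ 0) : ∃ φ : A →ₐ[K] K, φ u ≠ 0 := by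
  by_contra! h
  obtain ⟨D, hD⟩ := hC.exhaust u
  obtain ⟨Z, hZ⟩ := Infinite.exists_subset_card_eq (A →ₐ[K] K) (d * (D + d) + 1)
  have := hC.zeros_le hD hu Z fun φ _ => h φ
  omega

/-- The monomials `x^l y^m` with `l < a`, `m < d` stay independent over the field of `p^v`-th powers
of functions, when `p^v` is large. If `∑ x^l y^m u^P = 0` with `P = p^v`, then replacing each `u`
by its value at a point `φ` changes the sum by an element of the `P`-th power of the ideal of `φ`,
contradicting the multiplicity bound. -/
theorem IsCurve.frob_indep [IsNoetherianRing A] (hC : IsCurve K x y d)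
    [Infinite (A →ₐ[K] K)] {p : ℕ} [ExpChar A p] (v a : ℕ) (hP : d * (a + 2 * d) < p ^ v)
    (u : Fin a × Fin d → A)
    (h : ∑ t, x ^ (t.1 : ℕ) * y ^ (t.2 : ℕ) * u t ^ p ^ v = 0) : u = 0 := by
  by_contra hu
  obtain ⟨t₀, ht₀⟩ := Function.ne_iff.1 hu
  obtain ⟨φ, hφ⟩ := hC.exists_point ht₀
  set s : A := ∑ t : Fin a × Fin d, (φ (u t)) ^ p ^ v • (x ^ (t.1 : ℕ) * y ^ (t.2 : ℕ)) with hs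
  have hsW : s ∈ W K x y (a + d) := Submodule.sum_mem _ fun t _ => Submodule.smul_mem _ _
    (mono_mem_W x y (by have := t.1.2; have := t.2.2; omega))
  have hli : LinearIndependent K
      (fun t : Fin a × Fin d => x ^ (t.1 : ℕ) * y ^ (t.2 : ℕ)) :=
    hC.indep.comp (fun t : Fin a × Fin d => ((t.1 : ℕ), t.2)) (by
      rintro ⟨a, b⟩ ⟨a', b'⟩ h
      simp only [Prod.mk.injEq] at h
      exact Prod.ext (Fin.ext h.1) h.2)
  have hs0 : s ≠ 0 := fun h0 =>
    pow_ne_zero _ hφ (Fintype.linearIndependent_iff.1 hli _ h0 t₀)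
  have hsm : s ∈ RingHom.ker φ ^ p ^ v := by
    have : s = ∑ t : Fin a × Fin d, x ^ (t.1 : ℕ) * y ^ (t.2 : ℕ)
        * (algebraMap K A (φ (u t)) - u t) ^ p ^ v := by
      rw [← sub_zero s, ← h, hs, ← Finset.sum_sub_distrib]
      refine Finset.sum_congr rfl fun t _ => ?_
      rw [sub_pow_expChar_pow, Algebra.smul_def, map_pow]
      ring
    rw [this]
    refine Ideal.sum_mem _ fun t _ => Ideal.mul_mem_left _ _ (Ideal.pow_mem_pow ?_ _)
    rw [RingHom.mem_ker]; simp
  have := hC.mult_le hsW hs0 φ _ hsm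
  have h2 : d * (a + d + d) = d * (a + 2 * d) := by ring
  omega

/-- Stepanov's method. The set `Z` consists of points whose `x`-coordinate is fixed by
`z ↦ z^(p^w p^v)` and at which `y^(p^w p^v)` is a root of the monic polynomial of degree `e` with
lower coefficients `r j`. The bound saves about `(e + 1) p^v` over the trivial one. -/
theorem IsCurve.stepanov [IsNoetherianRing A] [IsAlgClosed K] {e : ℕ}
    (hC : IsCurve K x y (e + 1)) [Infinite (A →ₐ[K] K)] {p : ℕ} [hp : ExpChar K p]
    (w v : ℕ) (r : Fin e → A)
    (hr : ∀ j, r j ∈ W K x y (e + 1)) (hR : 2 * (e + 1) * (e + 2) ≤ p ^ w)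
    (hP : (e + 1) * (2 * (e + 1) ^ 2 + 2 * (e + 1)) < p ^ v) (Z : Finset (A →ₐ[K] K))
    (hZx : ∀ φ ∈ Z, (φ x) ^ (p ^ w * p ^ v) = φ x)
    (hZy : ∀ φ ∈ Z, ((φ y) ^ (p ^ w * p ^ v)) ^ e =
      - ∑ j : Fin e, φ (r j) * ((φ y) ^ (p ^ w * p ^ v)) ^ (j : ℕ)) :
    Z.card ≤ (e + 1) * (2 * (e + 1) ^ 2 + 2 * (e + 1) + (p ^ w - 1) * p ^ v) := by
  have : ExpChar A p := expChar_of_injective_algebraMap (algebraMap K A).injective p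
  set R := p ^ w with hRdef
  set P := p ^ v with hPdef
  set a := 2 * (e + 1) ^ 2 with ha
  obtain ⟨b, hb⟩ : ∃ b, R = b + (e + 2) := ⟨R - (e + 2), by
    have : 1 * (e + 2) ≤ 2 * (e + 1) * (e + 2) := Nat.mul_le_mul_right _ (by omega)
    omega⟩
  -- `N` bounds the degrees of all the linear constraints
  set N := b + (a + (e + 1)) * R + (e + 1) with hN
  -- the `R`-th powers of the monomials of `G` below, once `x ^ (R * P)` is replaced by `x` and
  -- `y ^ (R * P)` is set aside
  let mon : Fin b × Fin a × Fin (e + 1) → A := fun t =>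
    x ^ ((t.1 : ℕ) + t.2.1 * R) * y ^ (t.2.2 * R)
  let S := Fintype.linearCombination K mon
  have hSW : ∀ β, S β ∈ W K x y (N - (e + 1) - 1) := by
    intro β
    rw [Fintype.linearCombination_apply]
    refine Submodule.sum_mem _ fun t _ => Submodule.smul_mem _ _ (mono_mem_W x y ?_)
    have h1 := t.1.2
    have h2 : ((t.2.1 : ℕ) + t.2.2) * R ≤ (a + (e + 1)) * R :=
      Nat.mul_le_mul_right _ (by have := t.2.1.2; have := t.2.2.2; omega)
    have h3 : ((t.2.1 : ℕ) + t.2.2) * R = t.2.1 * R + t.2.2 * R := by ring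
    omega
  have hSB : ∀ β, S β ∈ Box K x y (e + 1) N := by
    intro β
    have h2 := hC.le_box (N - 1) (W_mono x y (by omega) (hSW β))
    rwa [Nat.sub_add_cancel (by omega)] at h2
  have hbpos : 0 < b := by nlinarith
  have hrSB : ∀ j β, r j * S β ∈ Box K x y (e + 1) N := by
    intro j β
    have h2 := hC.le_box (N - 1) (W_mono x y (by omega) (mul_mem_W (hr j) (hSW β)))
    rwa [Nat.sub_add_cancel (by omega)] at h2
  -- reducing `(y ^ (R * P)) ^ e` by the monic relation leaves these `e` linear conditions
  let L : (Fin (e + 1) → Fin b × Fin a × Fin (e + 1) → K) →ₗ[K] (Fin e → Box K x y (e + 1) N) :=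
    LinearMap.pi fun j => LinearMap.codRestrict (Box K x y (e + 1) N)
      (S.comp (LinearMap.proj j.castSucc) -
        (LinearMap.mulLeft K (r j)).comp (S.comp (LinearMap.proj (Fin.last e))))
      (fun β => Submodule.sub_mem _ (hSB _) (hrSB _ _))
  have hker : LinearMap.ker L ≠ ⊥ := by
    apply LinearMap.ker_ne_bot_of_finrank_lt
    simp only [Module.finrank_pi_fintype, Finset.sum_const, Finset.card_univ, Fintype.card_fin,
      smul_eq_mul, Fintype.card_prod, Module.finrank_self, mul_one]
    refine (Nat.mul_le_mul_left e (finrank_Box_le x y (e + 1) N)).trans_lt ?_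
    have key : e * N < (e + 1) * (b * a) := by
      have h := Nat.mul_le_mul_left ((e + 1) ^ 2) hR
      rw [hN, ha]
      rw [hb] at h ⊢
      nlinarith [h]
    calc e * (N * (e + 1)) = (e * N) * (e + 1) := by ring
      _ < ((e + 1) * (b * a)) * (e + 1) := Nat.mul_lt_mul_of_pos_right key (by omega)
      _ = _ := by ring
  obtain ⟨β, hβ, hβ0⟩ := Submodule.exists_mem_ne_zero_of_ne_bot hker
  have hrel : ∀ j : Fin e, S (β j.castSucc) = r j * S (β (Fin.last e)) := by
    intro j
    have := congrArg Subtype.val (congrFun (LinearMap.mem_ker.1 hβ) j)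
    exact sub_eq_zero.1 this
  have hRpos : 0 < R := by omega
  have hPpos : 0 < P := by omega
  -- `R`-th roots are the coefficients of the auxiliary function, and their `P`-th roots make the
  -- `P`-th power parts visible
  choose α hα using fun j t => IsAlgClosed.exists_pow_nat_eq (β j t) hRpos
  choose γ hγ using fun j t => IsAlgClosed.exists_pow_nat_eq (α j t) hPpos
  set G : A := ∑ j : Fin (e + 1), ∑ t : Fin b × Fin a × Fin (e + 1),
    α j t • (x ^ ((t.2.1 : ℕ) + t.1 * P) * y ^ ((t.2.2 : ℕ) + j * P)) with hG
  have hGW : G ∈ W K x y (a + (e + 1) + (b + (e + 1)) * P) := by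
    refine Submodule.sum_mem _ fun j _ => Submodule.sum_mem _ fun t _ =>
      Submodule.smul_mem _ _ (mono_mem_W x y ?_)
    have h2 : ((t.1 : ℕ) + j) * P ≤ (b + (e + 1)) * P :=
      Nat.mul_le_mul_right _ (by have := t.1.2; have := j.2; omega)
    have h3 : ((t.1 : ℕ) + j) * P = t.1 * P + j * P := by ring
    have := t.2.1.2
    have := t.2.2.2
    omega
  have hli : LinearIndependent K
      (fun t : Fin b × Fin (e + 1) => x ^ (t.1 : ℕ) * y ^ (t.2 : ℕ)) :=
    hC.indep.comp (fun t : Fin b × Fin (e + 1) => ((t.1 : ℕ), t.2)) (by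
      rintro ⟨a, b⟩ ⟨a', b'⟩ h
      simp only [Prod.mk.injEq] at h
      exact Prod.ext (Fin.ext h.1) h.2)
  have hG0 : G ≠ 0 := by
    intro h0
    have hu := hC.frob_indep (p := p) v a hP
      (fun t => ∑ ij : Fin b × Fin (e + 1),
        γ ij.2 (ij.1, t.1, t.2) • (x ^ (ij.1 : ℕ) * y ^ (ij.2 : ℕ))) (by
      rw [← h0, hG]
      calc _ = ∑ t : Fin a × Fin (e + 1), ∑ ij : Fin b × Fin (e + 1), α ij.2 (ij.1, t.1, t.2) •
            (x ^ ((t.1 : ℕ) + ij.1 * P) * y ^ ((t.2 : ℕ) + ij.2 * P)) := by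
            refine Finset.sum_congr rfl fun t _ => ?_
            rw [sum_pow_char_pow, Finset.mul_sum]
            refine Finset.sum_congr rfl fun ij _ => ?_
            rw [_root_.smul_pow, ← hPdef, hγ, mul_smul_comm]
            congr 1
            ring
        _ = _ := by
            rw [Finset.sum_comm]
            simp only [Fintype.sum_prod_type]
            rw [Finset.sum_comm])
    apply hβ0
    funext j t
    have := Fintype.linearIndependent_iff.1 hli _ (congrFun hu t.2) (t.1, j)
    rw [← hα, ← hγ]
    simp only at this
    rw [this]
    simp [hRpos.ne', hPpos.ne']
  have hGZ : ∀ φ ∈ Z, φ G = 0 := by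
    intro φ hφ
    have h1 : φ G ^ R = ∑ j : Fin (e + 1), (φ y ^ (R * P)) ^ (j : ℕ) * φ (S (β j)) := by
      simp only [hG, map_sum, sum_pow_char_pow, hRdef, map_smul, smul_eq_mul, mul_pow, map_mul,
        map_pow]
      refine Finset.sum_congr rfl fun j _ => ?_
      simp only [S, Fintype.linearCombination_apply, map_sum, Finset.mul_sum]
      refine Finset.sum_congr rfl fun t _ => ?_
      rw [← hRdef, hα]
      simp only [mon, map_smul, smul_eq_mul, map_mul, map_pow]
      have h5 : (φ x ^ ((t.2.1 : ℕ) + t.1 * P)) ^ R = φ x ^ ((t.1 : ℕ) + t.2.1 * R) := by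
        calc _ = (φ x ^ (R * P)) ^ (t.1 : ℕ) * φ x ^ (t.2.1 * R : ℕ) := by ring
          _ = _ := by rw [hZx φ hφ]; ring
      rw [h5]
      ring
    rw [Fin.sum_univ_castSucc] at h1
    simp only [Fin.val_castSucc, Fin.val_last] at h1
    rw [hZy φ hφ] at h1
    simp only [hrel, map_mul] at h1
    have h2 : φ G ^ R = 0 := by
      rw [h1, neg_mul, Finset.sum_mul, ← sub_eq_add_neg, ← Finset.sum_sub_distrib]
      exact Finset.sum_eq_zero fun j _ => by ring
    exact eq_zero_of_pow_eq_zero h2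
  refine (hC.zeros_le hGW hG0 Z hGZ).trans (Nat.mul_le_mul_left _ ?_)
  have : R - 1 = b + (e + 1) := by omega
  rw [this]
  omega

end Curve

/-! ### Points of a plane curve with Frobenius-stable fibre -/

section Plane
variable {K : Type*} [Field K]

theorem of_eq_aeval (G : K[X][X]) (p : K[X]) :
    AdjoinRoot.of G p = aeval (AdjoinRoot.of G X) p := by
  have := aeval_algebraMap_apply (AdjoinRoot G) (X : K[X]) p
  rw [aeval_X_left_apply] at this
  exact this.symm

theorem of_mem_W (G : K[X][X]) {p : K[X]} {D : ℕ} (h : p.natDegree ≤ D) :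
    AdjoinRoot.of G p ∈ W K (AdjoinRoot.of G X) (AdjoinRoot.root G) D := by
  rw [of_eq_aeval G p, aeval_eq_sum_range]
  refine Submodule.sum_mem _ fun i hi => Submodule.smul_mem _ _ ?_
  have := mono_mem_W (K := K) (AdjoinRoot.of G X) (AdjoinRoot.root G) (l := i) (m := 0) (D := D)
    (by have := Finset.mem_range.1 hi; omega)
  simpa using this

theorem Box_mono {A : Type*} [CommRing A] [Algebra K A] (x y : A) (d : ℕ) {n n' : ℕ}
    (h : n ≤ n') : Box K x y d n ≤ Box K x y d n' := by
  apply Submodule.span_mono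
  rintro _ ⟨t, rfl⟩
  exact ⟨(⟨t.1, t.1.2.trans_le h⟩, t.2), rfl⟩

/-- The coordinate ring of a plane curve of total degree `d`, monic of degree `d` in `y`. The
hypothesis `hc` says that the total degree of `G` is at most its degree in `y`. -/
theorem isCurve_adjoinRoot {G : K[X][X]} (hG : G.Monic) (hd : 1 ≤ G.natDegree)
    (hc : ∀ j, (G.coeff j).natDegree ≤ G.natDegree - j) :
    IsCurve K (AdjoinRoot.of G X) (AdjoinRoot.root G) G.natDegree := by
  set x := AdjoinRoot.of G X with hx
  set y := AdjoinRoot.root G with hy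
  set d := G.natDegree with hdd
  refine ⟨hd, ?_, ?_, ?_⟩
  · have key : ∀ m l : ℕ, x ^ l * y ^ m ∈ Box K x y d (l + m + 1) := by
      intro m
      induction m using Nat.strong_induction_on with
      | _ m ih =>
        intro l
        by_cases hm : m < d
        · exact Submodule.subset_span ⟨(⟨l, by omega⟩, ⟨m, hm⟩), rfl⟩
        obtain ⟨m', rfl⟩ := Nat.exists_eq_add_of_le (not_lt.1 hm)
        have hyd : y ^ d = - ∑ j ∈ Finset.range d, AdjoinRoot.of G (G.coeff j) * y ^ j := by
          have h1 : aeval y G = 0 := by rw [hy, AdjoinRoot.aeval_eq, AdjoinRoot.mk_self]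
          rw [aeval_eq_sum_range, Finset.sum_range_succ, ← hdd, hdd, hG.coeff_natDegree,
            one_smul, ← hdd] at h1
          rw [eq_neg_iff_add_eq_zero, add_comm, ← h1]
          congr 1
          exact Finset.sum_congr rfl fun j _ => by rw [Algebra.smul_def]; rfl
        rw [pow_add, hyd, neg_mul, mul_neg, Finset.sum_mul, Finset.mul_sum]
        refine Submodule.neg_mem _ (Submodule.sum_mem _ fun j hj => ?_)
        have hj' := Finset.mem_range.1 hj
        rw [of_eq_aeval, aeval_eq_sum_range, Finset.sum_mul, Finset.sum_mul, Finset.mul_sum]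
        refine Submodule.sum_mem _ fun i hi => ?_
        have hi' := Finset.mem_range.1 hi
        have hcj := hc j
        have h3 := ih (j + m') (by omega) (l + i)
        have h4 : x ^ l * ((G.coeff j).coeff i • AdjoinRoot.of G X ^ i * y ^ j * y ^ m')
            = (G.coeff j).coeff i • (x ^ (l + i) * y ^ (j + m')) := by
          simp only [← hx, smul_mul_assoc, mul_smul_comm]
          congr 1
          ring
        rw [h4]
        exact Submodule.smul_mem _ _ (Box_mono x y d (by omega) h3)
    intro D
    refine Submodule.span_le.2 ?_
    rintro _ ⟨l, m, hlm, rfl⟩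
    exact Box_mono x y d (by omega) (key m l)
  · intro s
    obtain ⟨p, rfl⟩ := AdjoinRoot.mk_surjective s
    induction p using Polynomial.induction_on' with
    | add p q hp hq =>
      obtain ⟨D, hD⟩ := hp
      obtain ⟨E, hE⟩ := hq
      exact ⟨D + E, by
        rw [map_add]
        exact Submodule.add_mem _ (W_mono (K := K) x y (by omega) hD) (W_mono (K := K) x y (by omega) hE)⟩
    | monomial n p =>
      refine ⟨p.natDegree + n, ?_⟩
      rw [← C_mul_X_pow_eq_monomial, map_mul, map_pow, AdjoinRoot.mk_C, AdjoinRoot.mk_X]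
      refine mul_mem_W (of_mem_W G le_rfl) ?_
      simpa using mono_mem_W (K := K) x y (l := 0) (m := n) (D := n) (by omega)
  · have h1 := (basisMonomials K).linearIndependent
    have h2 : LinearIndependent K[X] fun m : Fin d => y ^ (m : ℕ) := by
      have := (AdjoinRoot.powerBasis' hG).basis.linearIndependent
      rw [PowerBasis.coe_basis] at this
      exact this
    have h3 := _root_.linearIndependent_smul h1 h2
    convert h3 using 1
    funext t
    rw [coe_basisMonomials]
    beta_reduce
    rw [← X_pow_eq_monomial, Algebra.smul_def, AdjoinRoot.algebraMap_eq,
      map_pow]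

/-- The point `(x₀, y₀)` of the curve `G = 0`, as an evaluation homomorphism. -/
noncomputable def pt (G : K[X][X]) (x₀ y₀ : K)
    (h : (G.map (evalRingHom x₀)).eval y₀ = 0) : AdjoinRoot G →ₐ[K] K :=
  AdjoinRoot.liftAlgHom G (aeval x₀ : K[X] →ₐ[K] K) y₀ (by
    rw [eval_map] at h
    rw [← h]
    rfl)

theorem pt_of {G : K[X][X]} {x₀ y₀ : K} (h : (G.map (evalRingHom x₀)).eval y₀ = 0) (c : K[X]) :
    pt G x₀ y₀ h (AdjoinRoot.of G c) = c.eval x₀ := by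
  simp [pt, coe_aeval_eq_eval]

theorem pt_root {G : K[X][X]} {x₀ y₀ : K} (h : (G.map (evalRingHom x₀)).eval y₀ = 0) :
    pt G x₀ y₀ h (AdjoinRoot.root G) = y₀ := by
  simp [pt]

theorem infinite_points [IsAlgClosed K] {G : K[X][X]} (hG : G.Monic) (hd : 1 ≤ G.natDegree) :
    Infinite (AdjoinRoot G →ₐ[K] K) := by
  have h : ∀ x₀ : K, ∃ y₀, (G.map (evalRingHom x₀)).eval y₀ = 0 := by
    intro x₀
    refine IsAlgClosed.exists_root _ ?_
    rw [degree_eq_natDegree (hG.map _).ne_zero, hG.natDegree_map]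
    exact_mod_cast (by omega : G.natDegree ≠ 0)
  choose y₀ hy using h
  have := IsAlgClosed.instInfinite (K := K)
  refine Infinite.of_injective (fun x₀ => pt G x₀ (y₀ x₀) (hy x₀)) fun a b hab => ?_
  have := DFunLike.congr_fun hab (AdjoinRoot.of G X)
  simpa [pt_of] using this

/-- Stepanov's bound for points `(x, y)` with `x` rational over the field of `Q = p^w p^v` elements
such that `(x, y^Q)` is another point of the curve. Then `y^Q` is a root of the quotient of `G` by
`Y - y`, and `IsCurve.stepanov` applies. -/
theorem frob_points_le [IsAlgClosed K] {p : ℕ} [ExpChar K p] {G : K[X][X]} (hG : G.Monic)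
    (hprime : Prime G) {e : ℕ} (hd : G.natDegree = e + 1)
    (hc : ∀ j, (G.coeff j).natDegree ≤ G.natDegree - j) (w v : ℕ)
    (hR : 2 * (e + 1) * (e + 2) ≤ p ^ w)
    (hP : (e + 1) * (2 * (e + 1) ^ 2 + 2 * (e + 1)) < p ^ v) (T : Finset (K × K))
    (hT : ∀ t ∈ T, t.1 ^ (p ^ w * p ^ v) = t.1 ∧ (G.map (evalRingHom t.1)).eval t.2 = 0 ∧
      (G.map (evalRingHom t.1)).eval (t.2 ^ (p ^ w * p ^ v)) = 0 ∧
      t.2 ^ (p ^ w * p ^ v) ≠ t.2) :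
    T.card ≤ (e + 1) * (2 * (e + 1) ^ 2 + 2 * (e + 1) + (p ^ w - 1) * p ^ v) := by
  classical
  have : IsDomain (AdjoinRoot G) := AdjoinRoot.isDomain_of_prime hprime
  have : Infinite (AdjoinRoot G →ₐ[K] K) := infinite_points hG (by omega)
  have hC := isCurve_adjoinRoot hG (by omega) hc
  set x := AdjoinRoot.of G X with hx
  set y := AdjoinRoot.root G with hy
  -- `Gq = G / (Y - y)` over the coordinate ring
  set Gq : (AdjoinRoot G)[X] := (G.map (AdjoinRoot.of G)) /ₘ (X - C y) with hGq
  have hmul : (X - C y) * Gq = G.map (AdjoinRoot.of G) :=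
    mul_divByMonic_eq_iff_isRoot.2 (AdjoinRoot.isRoot_root G)
  have hGqm : Gq.Monic := Monic.of_mul_monic_left (monic_X_sub_C y) (hmul ▸ hG.map _)
  have hGqd : Gq.natDegree = e := by
    rw [hGq, natDegree_divByMonic _ (monic_X_sub_C y), natDegree_X_sub_C, hG.natDegree_map, hd]
    rfl
  have hW : ∀ j, Gq.coeff j ∈ W K x y (e + 1) := by
    intro j
    rw [hGq, coeff_divByMonic_X_sub_C]
    refine Submodule.sum_mem _ fun i hi => ?_
    have hi' := Finset.mem_Icc.1 hi
    rw [hG.natDegree_map, hd] at hi'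
    rw [coeff_map]
    have h1 := mul_mem_W (mono_mem_W (K := K) x y (l := 0) (m := i - (j + 1)) le_rfl)
      (of_mem_W G (hc i))
    rw [pow_zero, one_mul] at h1
    exact W_mono x y (by omega) h1
  rw [hd] at hC
  set Z : Finset (AdjoinRoot G →ₐ[K] K) :=
    T.attach.image fun t => pt G t.1.1 t.1.2 (hT t.1 t.2).2.1 with hZ
  have hcard : Z.card = T.card := by
    rw [hZ, Finset.card_image_of_injective, Finset.card_attach]
    intro s t hst
    have h1 := DFunLike.congr_fun hst x
    have h2 := DFunLike.congr_fun hst y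
    simp only [hx, hy, pt_of, pt_root, eval_X] at h1 h2
    exact Subtype.ext (Prod.ext h1 h2)
  rw [← hcard]
  refine hC.stepanov w v (fun j : Fin e => Gq.coeff j) (fun j => hW j) hR hP Z ?_ ?_
  · intro φ hφ
    obtain ⟨t, -, rfl⟩ := Finset.mem_image.1 hφ
    rw [hx, pt_of, eval_X]
    exact (hT t.1 t.2).1
  · intro φ hφ
    obtain ⟨t, -, rfl⟩ := Finset.mem_image.1 hφ
    obtain ⟨-, h1, h2, h3⟩ := hT t.1 t.2
    set φ := pt G t.1.1 t.1.2 h1 with hφd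
    have hφy : φ y = t.1.2 := pt_root h1
    rw [hφy]
    set y₁ := t.1.2 ^ (p ^ w * p ^ v)
    have h4 : G.map (evalRingHom t.1.1) = (X - C t.1.2) * Gq.map (φ : AdjoinRoot G →+* K) := by
      have := congrArg (Polynomial.map (φ : AdjoinRoot G →+* K)) hmul
      rw [Polynomial.map_mul, Polynomial.map_sub, map_X, map_C, Polynomial.map_map] at this
      have h5 : (φ : AdjoinRoot G →+* K) y = t.1.2 := hφy
      rw [h5] at this
      rw [this]
      congr 1
      refine RingHom.ext fun c => ?_
      simp [hφd, pt_of]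
    rw [h4, eval_mul, eval_sub, eval_X, eval_C, mul_eq_zero, sub_eq_zero] at h2
    have h6 := h2.resolve_left h3
    rw [eval_eq_sum_range, hGqm.natDegree_map, hGqd, Finset.sum_range_succ, coeff_map] at h6
    have h7 : Gq.coeff e = 1 := by rw [← hGqd]; exact hGqm.coeff_natDegree
    rw [h7, map_one, one_mul, add_comm] at h6
    rw [eq_neg_of_add_eq_zero_left h6, Finset.sum_range]
    simp [coeff_map]

end Plane

/-! ### The curve attached to a linearized polynomial and its irreducibility -/

section Form
variable {K : Type*} [Field K]

/-- The substitution `y = z x`. In the source the inner variable is `x` and the outer one is `y`;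
in the target the inner variable is `z` and the outer one is `x`, so degree and leading coefficient
in the target are total degree and leading form. -/
noncomputable def slope (K : Type*) [Field K] : K[X][X] →+* K[X][X] :=
  eval₂RingHom (mapRingHom C) (C X * X)

theorem slope_coeff (G : K[X][X]) (i j : ℕ) :
    ((slope K G).coeff (i + j)).coeff j = (G.coeff j).coeff i := by
  induction G using Polynomial.induction_on' with
  | add p q hp hq => simp only [map_add, coeff_add, hp, hq]
  | monomial n c =>
    induction c using Polynomial.induction_on' with
    | add p q hp hq => simp only [map_add, coeff_add, hp, hq]
    | monomial m c =>
      have h : slope K (monomial n (monomial m c)) = monomial (m + n) (monomial n c) := by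
        simp only [← C_mul_X_pow_eq_monomial]
        simp [slope, mul_pow, eval₂_pow]
        ring
      rw [h, coeff_monomial, coeff_monomial]
      by_cases h1 : n = j
      · subst h1
        by_cases h2 : m = i
        · simp [h2]
        · simp [h2, coeff_monomial]
      · by_cases h2 : m + n = i + j
        · simp [h1, h2, coeff_monomial]
        · simp [h1, h2]

/-- The `q`-polynomial `∑ α_j X^{q^j}`, `1 ≤ j ≤ k`. -/
noncomputable def fpoly (q k : ℕ) (α : ℕ → K) : K[X] :=
  ∑ j ∈ Finset.Icc 1 k, C (α j) * X ^ q ^ j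

/-- The quotient `fpoly / X`. -/
noncomputable def hpoly (q k : ℕ) (α : ℕ → K) : K[X] :=
  ∑ j ∈ Finset.Icc 1 k, C (α j) * X ^ (q ^ j - 1)

/-- The polynomial `f(Y) - (f(x)/x) Y` in `K[x][Y]`. -/
noncomputable def H (q k : ℕ) (α : ℕ → K) : K[X][X] :=
  (fpoly q k α).map C - C (hpoly q k α) * X

open Classical in
/-- The set of `θ` with `θ^{q^j} = θ` for all `j` in the support of `α`, that is, of slopes of lines
`y = θ x` contained in `H = 0`. It is cut out of the roots of `X^{q^k} - X` to be a `Finset`; the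
restriction is harmless when `α k ≠ 0`, see `mem_S`. -/
noncomputable def S (q k : ℕ) (α : ℕ → K) : Finset K :=
  (X ^ q ^ k - X : K[X]).roots.toFinset.filter
    fun θ => ∀ j ∈ Finset.Icc 1 k, α j ≠ 0 → θ ^ q ^ j = θ

/-- The product of the lines `y = θ x`, `θ ∈ S`. -/
noncomputable def B (q k : ℕ) (α : ℕ → K) : K[X][X] :=
  ∏ θ ∈ S q k α, (X - C (C θ * X))

variable {q k : ℕ} {α : ℕ → K}

theorem mem_S (hq : 1 < q) (hk : 1 ≤ k) (hα : α k = 1) {θ : K} :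
    θ ∈ S q k α ↔ ∀ j ∈ Finset.Icc 1 k, α j ≠ 0 → θ ^ q ^ j = θ := by
  classical
  simp only [S, Finset.mem_filter, Multiset.mem_toFinset]
  rw [and_iff_right_iff_imp]
  intro h
  rw [mem_roots (FiniteField.X_pow_card_pow_sub_X_ne_zero K (Nat.one_le_iff_ne_zero.1 hk) hq), IsRoot.def]
  have := h k (by simp; omega) (by simp [hα])
  simp [this]

theorem X_mul_hpoly (hq : 1 < q) : hpoly q k α * X = fpoly q k α := by
  rw [hpoly, fpoly, Finset.sum_mul]
  refine Finset.sum_congr rfl fun j _ => ?_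
  rw [mul_assoc, ← pow_succ, Nat.sub_add_cancel (Nat.one_le_pow _ _ (by omega))]

theorem derivative_fpoly (hq0 : (q : K) = 0) : derivative (fpoly q k α) = 0 := by
  rw [fpoly, derivative_sum]
  refine Finset.sum_eq_zero fun j hj => ?_
  have : j ≠ 0 := by have := Finset.mem_Icc.1 hj; omega
  simp [derivative_X_pow, hq0, this]

theorem natDegree_fpoly (hq : 1 < q) (hk : 1 ≤ k) (hα : α k = 1) :
    (fpoly q k α).Monic ∧ (fpoly q k α).natDegree = q ^ k := by
  have h1 : fpoly q k α = X ^ q ^ k + ∑ j ∈ Finset.Ico 1 k, C (α j) * X ^ q ^ j := by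
    rw [fpoly, ← Finset.Ico_insert_right hk, Finset.sum_insert (by simp), hα]
    simp
  have h2 : (∑ j ∈ Finset.Ico 1 k, C (α j) * X ^ q ^ j).degree < ((q ^ k : ℕ) : WithBot ℕ) := by
    refine (degree_sum_le _ _).trans_lt ?_
    rw [Finset.sup_lt_iff (WithBot.bot_lt_coe _)]
    intro j hj
    refine (degree_C_mul_X_pow_le _ _).trans_lt ?_
    exact_mod_cast Nat.pow_lt_pow_right hq (Finset.mem_Ico.1 hj).2
  rw [h1]
  have hm := monic_X_pow_add h2
  refine ⟨hm, natDegree_eq_of_degree_eq_some ?_⟩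
  rw [degree_add_eq_left_of_degree_lt (by rwa [degree_X_pow]), degree_X_pow]

theorem monic_H (hq : 1 < q) (hk : 1 ≤ k) (hα : α k = 1) :
    (H q k α).Monic ∧ (H q k α).natDegree = q ^ k := by
  obtain ⟨h1, h2⟩ := natDegree_fpoly hq hk hα
  have hlt : (C (hpoly q k α) * X : K[X][X]).degree < ((fpoly q k α).map C).degree := by
    rw [h1.degree_map, degree_eq_natDegree h1.ne_zero, h2]
    refine (degree_C_mul_X_le _).trans_lt ?_
    exact_mod_cast Nat.one_lt_pow (by omega) hq
  rw [H]
  refine ⟨(h1.map C).sub_of_left hlt, ?_⟩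
  rw [natDegree_sub_eq_left_of_natDegree_lt, h1.natDegree_map, h2]
  rw [h1.natDegree_map, h2]
  refine ((natDegree_C_mul_le _ _).trans natDegree_X_le).trans_lt (Nat.one_lt_pow (by omega) hq)

theorem monic_B : (B q k α).Monic ∧ (B q k α).natDegree = (S q k α).card := by
  refine ⟨monic_prod_of_monic _ _ fun θ _ => monic_X_sub_C _, ?_⟩
  rw [B, natDegree_prod_of_monic _ _ fun θ _ => monic_X_sub_C _]
  simp only [natDegree_X_sub_C, Finset.sum_const, smul_eq_mul, mul_one]

theorem B_dvd_H (hq : 1 < q) (hk : 1 ≤ k) (hα : α k = 1) : B q k α ∣ H q k α := by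
  have hinj : Function.Injective fun θ : K => (C θ * X : K[X]) := fun a b h =>
    C_injective (mul_right_cancel₀ X_ne_zero h)
  have h1 : B q k α =
      (((S q k α).map ⟨_, hinj⟩).val.map fun c => (X - C c : K[X][X])).prod := by
    rw [B, Finset.map_val, Multiset.map_map]
    rfl
  rw [h1, Multiset.prod_X_sub_C_dvd_iff_le_roots (monic_H hq hk hα).1.ne_zero,
    Finset.val_le_iff_val_subset]
  intro c hc
  obtain ⟨θ, hθ, rfl⟩ := Finset.mem_map.1 (show c ∈ Finset.map _ _ from hc)
  rw [mem_roots (monic_H hq hk hα).1.ne_zero, IsRoot.def]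
  rw [mem_S hq hk hα] at hθ
  simp only [Function.Embedding.coeFn_mk, H, eval_sub, eval_mul, eval_C, eval_X]
  rw [show hpoly q k α * (C θ * X) = hpoly q k α * X * C θ by ring, X_mul_hpoly hq, sub_eq_zero, fpoly,
    Polynomial.map_sum, eval_finsetSum, Finset.sum_mul]
  refine Finset.sum_congr rfl fun j hj => ?_
  simp only [Polynomial.map_mul, map_C, Polynomial.map_pow, map_X, eval_mul, eval_C, eval_pow,
    eval_X, mul_pow]
  by_cases h0 : α j = 0
  · simp [h0]
  · rw [← C_pow, hθ j hj h0]
    ring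

theorem slope_H (hq : 1 < q) : slope K (H q k α) =
    ∑ j ∈ Finset.Icc 1 k, C (C (α j) * (X ^ q ^ j - X)) * X ^ q ^ j := by
  have h1 : slope K ((fpoly q k α).map C) = ∑ j ∈ Finset.Icc 1 k, C (C (α j) * X ^ q ^ j) * X ^ q ^ j := by
    rw [fpoly, Polynomial.map_sum, map_sum]
    refine Finset.sum_congr rfl fun j _ => ?_
    simp [slope, mul_pow, mul_assoc]
  have h2 : slope K (C (hpoly q k α) * X) = ∑ j ∈ Finset.Icc 1 k, C (C (α j) * X) * X ^ q ^ j := by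
    have : slope K (C (hpoly q k α) * X) = (hpoly q k α * X).map C * C X := by
      simp [slope]; ring
    rw [this, X_mul_hpoly hq, fpoly, Polynomial.map_sum, Finset.sum_mul]
    refine Finset.sum_congr rfl fun j _ => ?_
    simp
  rw [H, map_sub, h1, h2, ← Finset.sum_sub_distrib]
  refine Finset.sum_congr rfl fun j _ => ?_
  rw [mul_sub, C_sub, sub_mul]

theorem slope_B : slope K (B q k α) =
    X ^ (S q k α).card * C (∏ θ ∈ S q k α, (X - C θ)) := by
  rw [B, map_prod, map_prod, ← Finset.prod_const, ← Finset.prod_mul_distrib]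
  refine Finset.prod_congr rfl fun θ _ => ?_
  simp [slope]; ring

theorem coeff_slope_H (hq : 1 < q) {i : ℕ} (hi : i ∈ Finset.Icc 1 k) :
    (slope K (H q k α)).coeff (q ^ i) = C (α i) * (X ^ q ^ i - X) := by
  rw [slope_H hq, finsetSum_coeff, Finset.sum_eq_single i]
  · rw [coeff_C_mul, coeff_X_pow_self, mul_one]
  · intro j _ hj
    rw [coeff_C_mul, coeff_X_pow, if_neg, mul_zero]
    exact fun h => hj (Nat.pow_right_injective hq h).symm
  · exact fun h => absurd hi h

theorem natDegree_slope_H (hq : 1 < q) (hk : 1 ≤ k) (hα : α k = 1) :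
    (slope K (H q k α)).natDegree = q ^ k ∧
      (slope K (H q k α)).leadingCoeff = X ^ q ^ k - X := by
  have hc := coeff_slope_H (α := α) (k := k) hq (i := k) (by simp; omega)
  rw [hα, C_1, one_mul] at hc
  have hn : (slope K (H q k α)).natDegree = q ^ k := by
    refine natDegree_eq_of_le_of_coeff_ne_zero ?_ ?_
    · rw [slope_H hq]
      refine natDegree_sum_le_of_forall_le _ _ fun j hj => ?_
      exact (natDegree_C_mul_X_pow_le _ _).trans
        (Nat.pow_le_pow_right (by omega) (Finset.mem_Icc.1 hj).2)
    · rw [hc]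
      exact FiniteField.X_pow_card_pow_sub_X_ne_zero K (Nat.one_le_iff_ne_zero.1 hk) hq
  exact ⟨hn, by rw [leadingCoeff, hn, hc]⟩

/-- A polynomial with nonzero constant derivative has no double root. -/
theorem no_double_root {P Q₁ Q₂ : K[X]} {c θ : K} (hP : derivative P = C c) (hc : c ≠ 0)
    (h : P = Q₁ * Q₂) (h1 : Q₁.eval θ = 0) (h2 : Q₂.eval θ = 0) : False := by
  apply hc
  have := congrArg (eval θ) hP
  rw [h, derivative_mul] at this
  simpa [h1, h2] using this.symm

/-- The quotient `G = H / B` has total degree `q^k - |S|`, and its leading form divides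
`z^{q^k} - z`. -/
theorem natDegree_slope {G : K[X][X]} (hq : 1 < q) (hk : 1 ≤ k) (hα : α k = 1)
    (hG : H q k α = B q k α * G) :
    (slope K G).natDegree + (S q k α).card = q ^ k ∧
      (∏ θ ∈ S q k α, (X - C θ)) * (slope K G).leadingCoeff = X ^ q ^ k - X := by
  obtain ⟨h1, h2⟩ := natDegree_slope_H (α := α) hq hk hα
  have hb0 : (∏ θ ∈ S q k α, (X - C θ) : K[X]) ≠ 0 :=
    Finset.prod_ne_zero_iff.2 fun θ _ => X_sub_C_ne_zero θ
  have hm := congrArg (slope K) hG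
  rw [map_mul, slope_B] at hm
  have hG0 : slope K G ≠ 0 := by
    intro h
    rw [h, mul_zero] at hm
    rw [hm] at h1
    have := Nat.pow_pos (n := k) (show 0 < q by omega)
    simp at h1
    omega
  rw [hm, natDegree_mul (mul_ne_zero (pow_ne_zero _ X_ne_zero) (C_ne_zero.2 hb0)) hG0,
    natDegree_mul (pow_ne_zero _ X_ne_zero) (C_ne_zero.2 hb0), natDegree_C, natDegree_X_pow,
    add_zero] at h1
  rw [hm, leadingCoeff_mul, leadingCoeff_mul, leadingCoeff_X_pow, leadingCoeff_C, one_mul] at h2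
  exact ⟨by omega, h2⟩

/-- If `G = F₁ F₂`, restrict `H = B F₁ F₂` to the line `y = θ x` for a root `θ` of the leading form
of `F₁`. The degree of `H` drops to at most `q^{k-1}` there because `θ^{q^k} = θ`. The degrees of
`B` and `F₂` are unchanged because `θ` is a simple root of `z^{q^k} - z`, and `H` does not vanish
on the line because `θ ∉ S`. -/
theorem factor_bound [IsAlgClosed K] {G F₁ F₂ : K[X][X]} (hq : 1 < q) (hq0 : (q : K) = 0)
    (hk : 1 ≤ k) (hα : α k = 1) (hG : H q k α = B q k α * G) (hF : G = F₁ * F₂)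
    (hF₁ : F₁.Monic) (h1 : 1 ≤ F₁.natDegree) (he : (slope K F₁).natDegree = F₁.natDegree)
    (he₂ : (slope K F₂).natDegree = F₂.natDegree) :
    F₂.natDegree + (S q k α).card ≤ q ^ (k - 1) := by
  obtain ⟨-, hl⟩ := natDegree_slope hq hk hα hG
  have hder : derivative (X ^ q ^ k - X : K[X]) = C (-1) := by
    simp [derivative_X_pow, hq0, Nat.one_le_iff_ne_zero.1 hk]
  rw [hF, map_mul, leadingCoeff_mul] at hl
  set b : K[X] := ∏ θ ∈ S q k α, (X - C θ) with hb
  set l₁ := (slope K F₁).leadingCoeff with hl₁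
  set l₂ := (slope K F₂).leadingCoeff with hl₂
  obtain ⟨θ, hθ⟩ : ∃ θ, l₁.eval θ = 0 := by
    have h2 : l₁.coeff F₁.natDegree = 1 := by
      have := slope_coeff F₁ 0 F₁.natDegree
      rw [zero_add, hF₁.coeff_natDegree, coeff_one_zero] at this
      rw [hl₁, leadingCoeff, he, this]
    have h3 : F₁.natDegree ≤ l₁.natDegree := le_natDegree_of_ne_zero (by simp [h2])
    refine IsAlgClosed.exists_root _ fun h => ?_
    have : l₁.natDegree = 0 := natDegree_eq_of_degree_eq_some h
    omega
  have hθb : b.eval θ ≠ 0 := fun h => no_double_root hder (by simp)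
    (show _ = b * (l₁ * l₂) by rw [hl]) h (by simp [hθ])
  have hθl₂ : l₂.eval θ ≠ 0 := fun h => no_double_root hder (by simp)
    (show _ = (b * l₁) * l₂ by rw [← hl]; ring) (by simp [hθ]) h
  have hθk : θ ^ q ^ k = θ := by
    have := congrArg (eval θ) hl
    simp only [eval_mul, hθ, zero_mul, mul_zero, eval_sub, eval_pow, eval_X] at this
    exact (sub_eq_zero.1 this.symm)
  have hθS : θ ∉ S q k α := fun h => hθb (by
    rw [hb, eval_prod]
    exact Finset.prod_eq_zero h (by simp))
  rw [mem_S hq hk hα] at hθS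
  push Not at hθS
  obtain ⟨i, hi, hαi, hθi⟩ := hθS
  -- restriction to the line `y = θ x`
  let ψ : K[X][X] →+* K[X] := mapRingHom (evalRingHom θ)
  have hψ := congrArg ψ (congrArg (slope K) hG)
  rw [hF, map_mul, slope_B, map_mul, map_mul, map_mul, map_mul] at hψ
  have hne : ψ (slope K (H q k α)) ≠ 0 := by
    intro h
    have := congrArg (fun P => coeff P (q ^ i)) h
    simp only [ψ, coe_mapRingHom, coeff_map, coeff_slope_H hq hi] at this
    simp [hαi, sub_eq_zero, hθi] at this
  have hdeg : (ψ (slope K (H q k α))).natDegree ≤ q ^ (k - 1) := by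
    rw [slope_H hq, map_sum]
    refine natDegree_sum_le_of_forall_le _ _ fun j hj => ?_
    have hj' := Finset.mem_Icc.1 hj
    have : ψ (C (C (α j) * (X ^ q ^ j - X)) * X ^ q ^ j) =
        C (α j * (θ ^ q ^ j - θ)) * X ^ q ^ j := by simp [ψ]
    rw [this]
    by_cases hjk : j = k
    · rw [hjk, hθk]; simp
    · exact (natDegree_C_mul_X_pow_le _ _).trans (Nat.pow_le_pow_right (by omega) (by omega))
  have hψX : ψ (X ^ (S q k α).card) = X ^ (S q k α).card := by simp [ψ]
  rw [hψX] at hψ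
  have hd₂ : F₂.natDegree ≤ (ψ (slope K F₂)).natDegree := by
    refine le_natDegree_of_ne_zero ?_
    simp only [ψ, coe_mapRingHom, coeff_map, ← he₂]
    exact hθl₂
  rw [hψ] at hne hdeg
  have n2 := right_ne_zero_of_mul hne
  have n1 := left_ne_zero_of_mul hne
  rw [natDegree_mul n1 n2, natDegree_mul (left_ne_zero_of_mul n1) (right_ne_zero_of_mul n1),
    natDegree_X_pow] at hdeg
  have n3 := right_ne_zero_of_mul n2
  rw [natDegree_mul (left_ne_zero_of_mul n2) n3] at hdeg
  omega

theorem monic_G {G : K[X][X]} (hq : 1 < q) (hk : 1 ≤ k) (hα : α k = 1)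
    (hG : H q k α = B q k α * G) :
    G.Monic ∧ G.natDegree + (S q k α).card = q ^ k := by
  have h1 := monic_H (α := α) hq hk hα
  have h2 : G.Monic := Monic.of_mul_monic_left monic_B.1 (hG ▸ h1.1)
  refine ⟨h2, ?_⟩
  rw [← h1.2, hG, monic_B.1.natDegree_mul h2, monic_B.2, add_comm]

/-- The total degree of `G` equals its degree in `y`. -/
theorem natDegree_coeff_G {G : K[X][X]} (hq : 1 < q) (hk : 1 ≤ k) (hα : α k = 1)
    (hG : H q k α = B q k α * G) (j : ℕ) : (G.coeff j).natDegree ≤ G.natDegree - j := by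
  have h1 := (monic_G hq hk hα hG).2
  have h2 := (natDegree_slope hq hk hα hG).1
  rcases lt_or_ge G.natDegree j with hj | hj
  · simp [coeff_eq_zero_of_natDegree_lt hj]
  refine natDegree_le_iff_coeff_eq_zero.2 fun i hi => ?_
  rw [← slope_coeff, coeff_eq_zero_of_natDegree_lt (n := i + j) (by omega), coeff_zero]

theorem le_natDegree_slope {F₁ : K[X][X]} (h : F₁.Monic) :
    F₁.natDegree ≤ (slope K F₁).natDegree := by
  refine le_natDegree_of_ne_zero fun h0 => ?_
  have := slope_coeff F₁ 0 F₁.natDegree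
  rw [zero_add, h.coeff_natDegree, h0] at this
  simp at this

theorem irreducible_G [IsAlgClosed K] {G : K[X][X]} (hq : 1 < q) (hq0 : (q : K) = 0)
    (hk : 1 ≤ k) (hα : α k = 1) (hG : H q k α = B q k α * G)
    (hS : (S q k α).card < q ^ k) : Irreducible G := by
  obtain ⟨hGm, hGd⟩ := monic_G hq hk hα hG
  have hsl := (natDegree_slope hq hk hα hG).1
  refine (hGm.irreducible_iff_natDegree).2 ⟨?_, ?_⟩
  · rintro rfl
    rw [natDegree_one] at hGd
    omega
  intro F₁ F₂ h₁ h₂ h₁₂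
  by_contra! hd
  have e₁ := le_natDegree_slope h₁
  have e₂ := le_natDegree_slope h₂
  have hne : ∀ {F : K[X][X]}, F.natDegree ≠ 0 → F.natDegree ≤ (slope K F).natDegree →
      slope K F ≠ 0 := by
    intro F hF hle h0
    rw [h0, natDegree_zero] at hle
    omega
  have hsum : (slope K F₁).natDegree + (slope K F₂).natDegree = F₁.natDegree + F₂.natDegree := by
    rw [← natDegree_mul (hne hd.1 e₁) (hne hd.2 e₂), ← map_mul, h₁₂, ← h₁.natDegree_mul h₂, h₁₂]
    omega
  have b₁ := factor_bound hq hq0 hk hα hG h₁₂.symm h₁ (by omega) (by omega) (by omega)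
  have b₂ := factor_bound hq hq0 hk hα hG (by rw [mul_comm, h₁₂]) h₂ (by omega) (by omega)
    (by omega)
  have h0S : 0 < (S q k α).card := by
    refine Finset.card_pos.2 ⟨0, (mem_S hq hk hα).2 fun j _ _ => ?_⟩
    exact zero_pow (pow_ne_zero _ (by omega))
  have hpow : 2 * q ^ (k - 1) ≤ q ^ k := by
    obtain ⟨k', rfl⟩ := Nat.exists_eq_add_of_le hk
    rw [add_tsub_cancel_left, add_comm, pow_succ, mul_comm]
    exact Nat.mul_le_mul_left _ hq
  have hdeg := h₁.natDegree_mul h₂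
  rw [h₁₂] at hdeg
  omega

end Form

/-! ### Failure of scatteredness over large fields -/

section Final
variable {K : Type} [Field K] {q k : ℕ} {α : ℕ → K}

theorem H_map (x₀ : K) : (H q k α).map (evalRingHom x₀) =
    fpoly q k α - C ((hpoly q k α).eval x₀) * X := by
  have h : (evalRingHom x₀).comp C = RingHom.id K := RingHom.ext fun c => by simp
  rw [H, Polynomial.map_sub, Polynomial.map_map, h, Polynomial.map_id]
  simp

theorem eval_H_eq_zero (hq : 1 < q) {x₀ z : K} (hx : x₀ ≠ 0) :
    ((H q k α).map (evalRingHom x₀)).eval z = 0 ↔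
      (fpoly q k α).eval z * x₀ = (fpoly q k α).eval x₀ * z := by
  have h := congrArg (eval x₀) (X_mul_hpoly (k := k) (α := α) hq)
  rw [eval_mul, eval_X] at h
  rw [H_map, eval_sub, eval_mul, eval_C, eval_X, ← h, sub_eq_zero]
  constructor
  · intro h; rw [h]; ring
  · intro h; exact mul_right_cancel₀ hx (by rw [h]; ring)

theorem eval_B_eq_zero {x₀ z : K} :
    ((B q k α).map (evalRingHom x₀)).eval z = 0 ↔ ∃ θ ∈ S q k α, z = θ * x₀ := by
  rw [B, Polynomial.map_prod, eval_prod, Finset.prod_eq_zero_iff]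
  simp [sub_eq_zero]

/-- A `q`-polynomial that is not a monomial is not scattered over the field with `q^(m n)` elements,
for every large `m`. -/
theorem exists_not_scattered [IsAlgClosed K] {p r n : ℕ} [CharP K p] (hp : p.Prime) (hr : 0 < r)
    (hq : q = p ^ r) (hn : 0 < n) (hk : 1 ≤ k) (hα : α k = 1) (hαn : ∀ j, α j ^ q ^ n = α j)
    {j₀ : ℕ} (h1 : 1 ≤ j₀) (h2 : j₀ < k) (hj₀ : α j₀ ≠ 0) :
    ∃ M, ∀ m, M ≤ m → ∃ x y : K, x ^ q ^ (m * n) = x ∧ y ^ q ^ (m * n) = y ∧ x ≠ 0 ∧ y ≠ 0 ∧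
      (fpoly q k α).eval x * y = (fpoly q k α).eval y * x ∧ (y / x) ^ q ≠ y / x := by
  classical
  have : Fact p.Prime := ⟨hp⟩
  have hq1 : 1 < q := hq ▸ Nat.one_lt_pow hr.ne' hp.one_lt
  have hq0 : (q : K) = 0 := by
    rw [hq, Nat.cast_pow, CharP.cast_eq_zero, zero_pow hr.ne']
  obtain ⟨G, hG⟩ := B_dvd_H (α := α) hq1 hk hα
  obtain ⟨hGm, hGd⟩ := monic_G hq1 hk hα hG
  have hS : (S q k α).card < q ^ k := by
    have hsub : S q k α ⊆ (X ^ q ^ j₀ - X : K[X]).roots.toFinset := by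
      intro θ hθ
      rw [Multiset.mem_toFinset,
        mem_roots (FiniteField.X_pow_card_pow_sub_X_ne_zero K (by omega) hq1)]
      have := (mem_S hq1 hk hα).1 hθ j₀ (by simp; omega) hj₀
      simp [this]
    calc _ ≤ _ := Finset.card_le_card hsub
      _ ≤ _ := Multiset.toFinset_card_le _
      _ ≤ _ := card_roots' _
      _ = q ^ j₀ := FiniteField.X_pow_card_pow_sub_X_natDegree_eq K (by omega) hq1
      _ < _ := Nat.pow_lt_pow_right hq1 h2
  have hprime : Prime G := (irreducible_G hq1 hq0 hk hα hG hS).prime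
  obtain ⟨e, he⟩ : ∃ e, G.natDegree = e + 1 := ⟨G.natDegree - 1, by omega⟩
  -- split `Q = p ^ w * p ^ v` with `w` fixed and `v` growing with `m`
  set w := 2 * (e + 1) * (e + 2) with hw
  set c := 2 * (e + 1) ^ 2 + 2 * (e + 1) with hc
  have hRw : w ≤ p ^ w := (Nat.lt_pow_self hp.one_lt).le
  refine ⟨w + ((e + 1) * c + c + q ^ k + 1), fun m hm => ?_⟩
  obtain ⟨v, hv, hvc⟩ : ∃ v, r * (m * n) = w + v ∧ (e + 1) * c + c + q ^ k < v := by
    have h3 : m ≤ r * (m * n) := by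
      calc m = 1 * (m * 1) := by ring
        _ ≤ r * (m * n) := Nat.mul_le_mul hr (Nat.mul_le_mul_left _ hn)
    exact ⟨r * (m * n) - w, by omega, by omega⟩
  have hQ : q ^ (m * n) = p ^ w * p ^ v := by rw [hq, ← pow_mul, hv, pow_add]
  set Q := q ^ (m * n) with hQd
  have hvP : v < p ^ v := Nat.lt_pow_self hp.one_lt
  by_contra! hcon
  have hQk : q ^ k < Q := by
    rw [hQ]
    have := Nat.pos_of_ne_zero (pow_ne_zero w hp.ne_zero)
    nlinarith
  have hmn : m * n ≠ 0 := by
    intro h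
    rw [hQd, h, pow_zero] at hQk
    have := Nat.pow_pos (n := k) (show 0 < q by omega)
    omega
  have hαQ : ∀ j, α j ^ Q = α j := by
    intro j
    rw [hQd, mul_comm, pow_mul]
    clear hcon hQk hQ hQd hv hvc hvP hm hmn
    induction m with
    | zero => simp
    | succ m ih => rw [pow_succ, pow_mul, ih, hαn]
  have hfQ : ∀ z : K, (fpoly q k α).eval z ^ Q = (fpoly q k α).eval (z ^ Q) := by
    intro z
    have hQp : Q = p ^ (w + v) := by rw [hQ, pow_add]
    simp only [fpoly, eval_finsetSum, eval_mul, eval_C, eval_pow, eval_X]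
    rw [hQp, sum_pow_char_pow, ← hQp]
    refine Finset.sum_congr rfl fun j _ => ?_
    rw [mul_pow, hαQ, pow_right_comm]
  set fK := fpoly q k α with hfK
  obtain ⟨hfm, hfd⟩ := natDegree_fpoly hq1 hk hα (α := α)
  -- the admissible abscissae
  set X₀ : Finset K := (X ^ Q - X : K[X]).roots.toFinset \ fK.roots.toFinset with hX₀
  have hX₀c : Q - q ^ k ≤ X₀.card := by
    have h3 : (X ^ Q - X : K[X]).roots.toFinset.card = Q := by
      have hsep : (X ^ Q - X : K[X]).Separable := galois_poly_separable p Q (by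
        rw [hQ, ← pow_add]
        exact dvd_pow_self p (by omega))
      rw [Multiset.toFinset_card_of_nodup (nodup_roots hsep), IsAlgClosed.card_roots_eq_natDegree]
      exact FiniteField.X_pow_card_pow_sub_X_natDegree_eq K hmn hq1
    have h4 : fK.roots.toFinset.card ≤ q ^ k :=
      (Multiset.toFinset_card_le _).trans ((card_roots' _).trans hfd.le)
    refine le_trans ?_ (Finset.le_card_sdiff _ _)
    omega
  have hX₀m : ∀ x ∈ X₀, x ^ Q = x ∧ fK.eval x ≠ 0 ∧ x ≠ 0 := by
    intro x hx
    obtain ⟨h3, h4⟩ := Finset.mem_sdiff.1 hx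
    rw [Multiset.mem_toFinset, mem_roots (FiniteField.X_pow_card_pow_sub_X_ne_zero K hmn hq1),
      IsRoot.def] at h3
    rw [Multiset.mem_toFinset, mem_roots hfm.ne_zero, IsRoot.def] at h4
    refine ⟨by simpa [sub_eq_zero] using h3, h4, ?_⟩
    rintro rfl
    apply h4
    have := congrArg (eval 0) (X_mul_hpoly (k := k) (α := α) hq1)
    simpa using this.symm
  have hHder : ∀ x, derivative ((H q k α).map (evalRingHom x)) = C (-(hpoly q k α).eval x) := by
    intro x
    rw [H_map, derivative_sub, derivative_fpoly hq0]
    simp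
  have hh0 : ∀ x ∈ X₀, -(hpoly q k α).eval x ≠ 0 := by
    intro x hx h
    apply (hX₀m x hx).2.1
    rw [hfK, ← X_mul_hpoly hq1, eval_mul, neg_eq_zero.1 h, zero_mul]
  have hmap : ∀ x, (H q k α).map (evalRingHom x) =
      (B q k α).map (evalRingHom x) * G.map (evalRingHom x) := by
    intro x; rw [hG, Polynomial.map_mul]
  -- the points of `G = 0` over the admissible abscissae
  set T : Finset (K × K) := X₀.sigma (fun x => (G.map (evalRingHom x)).roots.toFinset)
    |>.image fun t => (t.1, t.2) with hT
  have hTm : ∀ t ∈ T, t.1 ∈ X₀ ∧ (G.map (evalRingHom t.1)).eval t.2 = 0 := by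
    intro t ht
    obtain ⟨s, hs, rfl⟩ := Finset.mem_image.1 ht
    obtain ⟨h3, h4⟩ := Finset.mem_sigma.1 hs
    rw [Multiset.mem_toFinset, mem_roots (hGm.map _).ne_zero] at h4
    exact ⟨h3, h4⟩
  have hTc : T.card = X₀.card * (e + 1) := by
    rw [hT, Finset.card_image_of_injective, Finset.card_sigma, Finset.sum_const_nat]
    · intro x hx
      have hsep : (G.map (evalRingHom x)).Separable := by
        have : ((H q k α).map (evalRingHom x)).Separable := by
          rw [separable_def, hHder]
          exact ⟨0, C (-(hpoly q k α).eval x)⁻¹, by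
            rw [zero_mul, zero_add, ← C_mul, inv_mul_cancel₀ (hh0 x hx), C_1]⟩
        rw [hmap] at this
        exact this.of_mul_right
      rw [Multiset.toFinset_card_of_nodup (nodup_roots hsep), ← he,
        ← hGm.natDegree_map (evalRingHom x)]
      exact IsAlgClosed.card_roots_eq_natDegree
    · rintro ⟨a, b⟩ ⟨a', b'⟩ h
      simpa using h
  -- every point over an admissible abscissa is counted by the Stepanov bound
  have hbound := frob_points_le (p := p) hGm hprime he (natDegree_coeff_G hq1 hk hα hG) w v hRw
    (by rw [← hc]; omega) T (by
    intro t ht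
    obtain ⟨hx, hy⟩ := hTm t ht
    rw [← hQ]
    set x := t.1
    set y := t.2
    obtain ⟨hxQ, hfx, hx0⟩ := hX₀m x hx
    have hHy : ((H q k α).map (evalRingHom x)).eval y = 0 := by
      rw [hmap, eval_mul, hy, mul_zero]
    have hyS : ∀ θ ∈ S q k α, y ≠ θ * x := fun θ hθ h =>
      no_double_root (hHder x) (hh0 x hx) (hmap x) (eval_B_eq_zero.2 ⟨θ, hθ, h⟩) hy
    have hrel := (eval_H_eq_zero hq1 hx0).1 hHy
    refine ⟨hxQ, hy, ?_, ?_⟩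
    · have hHyQ : ((H q k α).map (evalRingHom x)).eval (y ^ Q) = 0 := by
        rw [eval_H_eq_zero hq1 hx0, ← hfK, ← hfQ]
        have := congrArg (· ^ Q) hrel
        simp only [mul_pow, ← hfK, hfQ, hxQ] at this
        rw [hfQ]
        exact this
      rw [hmap, eval_mul, mul_eq_zero] at hHyQ
      refine hHyQ.resolve_left fun h => ?_
      obtain ⟨θ, hθ, hyθ⟩ := eval_B_eq_zero.1 h
      refine hyS (y / x) ((mem_S hq1 hk hα).2 fun j hj hαj => ?_) (div_mul_cancel₀ _ hx0).symm
      have h5 : (y / x) ^ Q = θ := by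
        rw [div_pow, hxQ, hyθ, mul_div_cancel_right₀ _ hx0]
      have h6 := (mem_S hq1 hk hα).1 hθ j hj hαj
      have h7 : ((y / x) ^ q ^ j) ^ Q = (y / x) ^ Q := by
        rw [pow_right_comm, h5, h6]
      have hQp : Q = p ^ (w + v) := by rw [hQ, pow_add]
      rw [hQp] at h7
      exact iterateFrobenius_inj K p (w + v) h7
    · intro hyQ
      have hy0 : y ≠ 0 := by
        intro h
        refine hyS 0 ((mem_S hq1 hk hα).2 fun j _ _ => ?_) (by rw [h, zero_mul])
        exact zero_pow (pow_ne_zero _ (by omega))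
      have h5 := hcon x y hxQ hyQ hx0 hy0 hrel.symm
      have h6 : ∀ j, (y / x) ^ q ^ j = y / x := by
        intro j
        induction j with
        | zero => simp
        | succ j ih => rw [pow_succ, pow_mul, ih, h5]
      exact hyS (y / x) ((mem_S hq1 hk hα).2 fun j _ _ => h6 j) (div_mul_cancel₀ _ hx0).symm)
  rw [hTc, mul_comm, ← hc] at hbound
  have h8 := Nat.le_of_mul_le_mul_left hbound e.succ_pos
  have hRpos : 0 < p ^ w := Nat.pow_pos hp.pos
  obtain ⟨R, hR⟩ : ∃ R, p ^ w = R + 1 := ⟨p ^ w - 1, by omega⟩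
  rw [hR] at h8 hQ
  rw [add_tsub_cancel_right] at h8
  have : (R + 1) * p ^ v = R * p ^ v + p ^ v := by ring
  omega

end Final

/-! ### Finite subfields of the algebraic closure -/

section Descent

/-- Scatteredness over every field with `q^(m n)` elements, applied to the subfield of `K` fixed by
`z ↦ z^(q^(m n))`. -/
theorem scattered_in_closure {K F : Type} [Field F] [Fintype F] [Field K] [IsAlgClosed K]
    [Algebra F K] {p s q n : ℕ} [CharP K p] (hp : p.Prime) (hs : 0 < s) (hq : q = p ^ s)
    (hF : Fintype.card F = q ^ n) {m : ℕ} (hm : m * n ≠ 0) (f : F[X])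
    (hexc : ∀ (E : Type) [Field E] [Algebra F E] [Fintype E], Fintype.card E = q ^ (m * n) →
      ∀ x y : E, x ≠ 0 → y ≠ 0 → aeval x f * y = aeval y f * x → (y / x) ^ q = y / x)
    {x y : K} (hx : x ^ q ^ (m * n) = x) (hy : y ^ q ^ (m * n) = y) (hx0 : x ≠ 0) (hy0 : y ≠ 0)
    (h : aeval x f * y = aeval y f * x) : (y / x) ^ q = y / x := by
  classical
  have : Fact p.Prime := ⟨hp⟩
  have hq1 : 1 < q := hq ▸ Nat.one_lt_pow hs.ne' hp.one_lt
  obtain ⟨Q, hQ⟩ : ∃ Q, Q = q ^ (m * n) := ⟨_, rfl⟩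
  have hQp : Q = p ^ (s * (m * n)) := by rw [hQ, hq, ← pow_mul]
  have hQ0 : Q ≠ 0 := hQp ▸ pow_ne_zero _ hp.ne_zero
  let E : IntermediateField F K :=
    { carrier := {z | z ^ Q = z}
      mul_mem' := fun {a b} ha hb => by
        rw [Set.mem_ofPred_eq] at *
        rw [mul_pow, ha, hb]
      add_mem' := fun {a b} ha hb => by
        rw [Set.mem_ofPred_eq] at *
        rw [hQp] at *
        rw [add_pow_char_pow, ha, hb]
      algebraMap_mem' := fun c => by
        rw [Set.mem_ofPred_eq, ← map_pow, hQ, mul_comm, pow_mul, ← hF]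
        congr 1
        exact FiniteField.pow_card_pow m c
      inv_mem' := fun z hz => by
        rw [Set.mem_ofPred_eq] at *
        rw [inv_pow, hz] }
  have hmem : ∀ z, z ∈ E ↔ z ^ Q = z := fun z => Iff.rfl
  have hEf : (E : Set K) = ((X ^ Q - X : K[X]).roots.toFinset : Set K) := by
    ext z
    rw [Finset.mem_coe, Multiset.mem_toFinset, hQ,
      mem_roots (FiniteField.X_pow_card_pow_sub_X_ne_zero K hm hq1), IsRoot.def, SetLike.mem_coe,
      hmem, hQ]
    simp [sub_eq_zero]
  have hfin : Finite E := by
    have : (E : Set K).Finite := hEf ▸ Finset.finite_toSet _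
    exact this
  let _ : Fintype E := Fintype.ofFinite E
  have hcard : Fintype.card E = q ^ (m * n) := by
    rw [← Nat.card_eq_fintype_card]
    change Nat.card (E : Set K) = _
    rw [hEf, Nat.card_coe_set_eq, Set.ncard_coe_finset]
    have hsep : (X ^ Q - X : K[X]).Separable := galois_poly_separable p Q (by
      rw [hQp]
      exact dvd_pow_self p (mul_ne_zero hs.ne' hm))
    rw [Multiset.toFinset_card_of_nodup (nodup_roots hsep), IsAlgClosed.card_roots_eq_natDegree, hQ]
    exact FiniteField.X_pow_card_pow_sub_X_natDegree_eq K hm hq1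
  have hval : ∀ z : E, ((aeval z f : E) : K) = aeval (z : K) f := fun z =>
    (aeval_algebraMap_apply K z f).symm
  have key := hexc E hcard ⟨x, by rw [hmem, hQ, hx]⟩ ⟨y, by rw [hmem, hQ, hy]⟩
    (fun h0 => hx0 (congrArg Subtype.val h0)) (fun h0 => hy0 (congrArg Subtype.val h0))
    (Subtype.ext (by
      rw [MulMemClass.coe_mul, MulMemClass.coe_mul, hval, hval]
      exact h))
  exact congrArg Subtype.val key

end Descent

end ExcScattered

/-- for q > 5, the unique exceptional scattered monic q-polynomial of index 0
(with zero coefficient of X) is X^{q^k}. "Exceptional" means: for infinitely many m, f is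
scattered of index 0 over the degree-m extension 𝔽_{q^{mn}}. Membership of z in 𝔽_q is
expressed as z^q = z. -/
theorem stmt_7 (p r q n k : ℕ) (hp : p.Prime) (hr : 0 < r) (hq : q = p ^ r)
    (hq5 : 5 < q) (hn : 0 < n) (hk : 1 ≤ k)
    (F : Type) [Field F] [Fintype F] (hF : Fintype.card F = q ^ n)
    (a : ℕ → F) (hak : a k = 1)
    (f : Polynomial F)
    (hfdef : f = ∑ j ∈ Finset.Icc 1 k, Polynomial.C (a j) * Polynomial.X ^ q ^ j)
    (hexc : {m : ℕ | 0 < m ∧ ∀ (E : Type) [Field E] [Algebra F E] [Fintype E],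
        Fintype.card E = q ^ (m * n) →
        ∀ x y : E, x ≠ 0 → y ≠ 0 →
          Polynomial.aeval x f * y = Polynomial.aeval y f * x →
          (y / x) ^ q = y / x}.Infinite) :
    f = Polynomial.X ^ q ^ k := by
  by_cases hcon : ∃ j, 1 ≤ j ∧ j < k ∧ a j ≠ 0
  · exfalso
    obtain ⟨j₀, h1, h2, h3⟩ := hcon
    have hchar : CharP F p := by
      obtain ⟨p', hp'⟩ := CharP.exists F
      obtain ⟨s, hs, hs'⟩ := FiniteField.card F p'
      rw [hF, hq, ← pow_mul] at hs'
      have hdvd : p ∣ p' ^ (s : ℕ) := hs' ▸ dvd_pow_self p (Nat.mul_pos hr hn).ne'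
      rwa [(Nat.prime_dvd_prime_iff_eq hp hs).1 (hp.dvd_of_dvd_pow hdvd)]
    let K := AlgebraicClosure F
    have : CharP K p := charP_of_injective_algebraMap (algebraMap F K).injective p
    have hfK : ∀ z : K, Polynomial.aeval z f =
        (ExcScattered.fpoly q k fun j => algebraMap F K (a j)).eval z := by
      intro z
      rw [hfdef, ExcScattered.fpoly]
      simp [Polynomial.eval_finsetSum]
    obtain ⟨M, hM⟩ := ExcScattered.exists_not_scattered (K := K) (q := q) (k := k) (p := p) (r := r)
      (n := n) (α := fun j => algebraMap F K (a j)) hp hr hq hn hk (by simp [hak])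
      (fun j => by rw [← map_pow, ← hF, FiniteField.pow_card]) h1 h2
      (by simpa using h3)
    obtain ⟨m, ⟨hm0, hm⟩, hMm⟩ := hexc.exists_gt M
    obtain ⟨x, y, hx, hy, hx0, hy0, hxy, hne⟩ := hM m hMm.le
    rw [← hfK, ← hfK] at hxy
    exact hne (ExcScattered.scattered_in_closure hp hr hq hF (Nat.mul_pos hm0 hn).ne' f hm
      hx hy hx0 hy0 hxy)
  · push Not at hcon
    rw [hfdef, Finset.sum_eq_single k]
    · simp [hak]
    · intro j hj hjk
      have := Finset.mem_Icc.1 hj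
      rw [hcon j this.1 (by omega)]
      simp
    · intro h
      exact absurd (Finset.mem_Icc.2 ⟨hk, le_rfl⟩) h
end

section
/- Let q be a prime power, n and k positive integers with k ≥ 3, λ ∈ 𝔽_{q^n} with λ ≠ 0, and φ(X) = Σ_{j=1}^{k−1} α_j X^{q^j} with α_j ∈ 𝔽_{q^n}. Let F ∈ 𝔽_{q^n}[X,Y] be the polynomial satisfying (X^q·Y − X·Y^q)·F(X,Y) = X^q·Y − X·Y^q + X^q·φ(Y) − φ(X)·Y^q + λ·(X^q·Y^{q^k} − X^{q^k}·Y^q). Then F has a factor G ∈ 𝔽_{q^n}[X,Y] of positive degree whose image in K[X,Y] is irreducible, where K is an algebraic closure of 𝔽_{q^n} (i.e., the curve F = 0 has an absolutely irreducible 𝔽_{q^n}-rational component). -/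
/-!
Let `K` be an algebraic closure of `F = 𝔽_{q ^ n}`. The components of the curve `G = 0` over `K` are
controlled by its branches at one point at infinity and by its intersections with the line at
infinity.

*Branches.* With `e = q + ⋯ + q ^ (k - 1)`, the lowest form of `G` in the weighting in which the
monomials `X ^ (e j) Y ^ j` have weight `0` is `1 - lam T ^ (q - 1)` (`low_G`). Its roots `w` stand
for the branches `Y = w X ^ (-e) + ⋯` at `(1 : 0 : 0)`. They are simple, so each branch lies on a
single component (`root_mul`, `comp_unique`), and for degree reasons each component contains a branch
(`isUnit_of_low`, `exists_root`).

*Symmetries.* Numerator and denominator of `G` are determinant-like, so `GL₂(𝔽_q)` acts on the curve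
(`act_G`). Shears fix the branches, hence the components; they generate `SL₂(𝔽_q)`, so in particular
`diag(c, c⁻¹)` fixes all components (`act_diag_inv`). The group `𝔽_q^*`, acting by `diag(1, b)`, is
transitive on the branches, hence on the components.

*Frobenius.* Let `σ` be the Frobenius of `F` and `c = σ w / w ∈ 𝔽_q^*`. Then `σ` acts on the
components as `diag(1, c⁻¹)`. As `diag(c, c⁻¹)` takes the branch `w` to a branch
`w c ^ (±(k - 2))`, the element `c ^ (k - 2)` acts trivially on components, so `σ ^ (k - 1)` also acts
as `diag(1, c⁻¹)`. Choose `t ∈ 𝔽_{q ^ (k - 1)} ∖ 𝔽_q`, possible as `k ≥ 3`. The top form of `G` is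
`lam (T ^ (q ^ (k - 1)) - T) ^ q / (T - T ^ q)` up to a power of `X`, so the intersection
multiplicities at `(1 : t : 0)` of the components with the line at infinity sum to `q` (`mult_G`,
`sum_mult`). They are preserved by `σ ^ (k - 1)`, which fixes `t`, hence by `diag(1, c⁻¹)`. A counting
argument (`group_main`) now applies: the orbit of components has order dividing `q - 1`, prime to
`q`, and the weights sum to `q`, so the stabilizer of the weights is the stabilizer of the components.
Thus `diag(1, c⁻¹)`, and with it `σ`, fixes all components (`exists_fixed`), and these are defined
over `F` (`exists_component`).
-/

namespace LinCurve

open MvPolynomial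

variable {K : Type*} [Field K]

/-! ### Linear substitutions and the weighted lowest form -/

/-- The linear substitution `X ↦ a X + b Y`, `Y ↦ c X + d Y`, where `X = X 0` and `Y = X 1`. -/
noncomputable def act (a b c d : K) : MvPolynomial (Fin 2) K →ₐ[K] MvPolynomial (Fin 2) K :=
  aeval ![C a * X 0 + C b * X 1, C c * X 0 + C d * X 1]

lemma act_X0 (a b c d : K) : act a b c d (X 0) = C a * X 0 + C b * X 1 := by
  simp [act]

lemma act_X1 (a b c d : K) : act a b c d (X 1) = C c * X 0 + C d * X 1 := by
  simp [act]

lemma act_C (a b c d x : K) : act a b c d (C x) = C x := by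
  simp [act]

lemma act_act (a b c d a' b' c' d' : K) (h : MvPolynomial (Fin 2) K) :
    act a b c d (act a' b' c' d' h) =
      act (a' * a + b' * c) (a' * b + b' * d) (c' * a + d' * c) (c' * b + d' * d) h := by
  have : (act a b c d).comp (act a' b' c' d') =
      act (a' * a + b' * c) (a' * b + b' * d) (c' * a + d' * c) (c' * b + d' * d) := by
    apply MvPolynomial.algHom_ext
    intro i
    fin_cases i
    · simp only [Fin.zero_eta, AlgHom.comp_apply, act_X0, act_X1, map_add, map_mul, act_C]
      ring
    · simp only [Fin.mk_one, AlgHom.comp_apply, act_X0, act_X1, map_add, map_mul, act_C]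
      ring
  exact DFunLike.congr_fun this h

lemma act_one (h : MvPolynomial (Fin 2) K) : act 1 0 0 1 h = h := by
  have : act (1 : K) 0 0 1 = AlgHom.id K _ := by
    apply MvPolynomial.algHom_ext
    intro i
    fin_cases i
    · simp [act_X0]
    · simp [act_X1]
  rw [this]; rfl

noncomputable def actEquiv (a b c d : K) (hd : a * d - b * c ≠ 0) :
    MvPolynomial (Fin 2) K ≃ₐ[K] MvPolynomial (Fin 2) K :=
  have ht : (a * d - b * c) * (a * d - b * c)⁻¹ = 1 := mul_inv_cancel₀ hd
  AlgEquiv.ofAlgHom (act a b c d)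
    (act (d * (a * d - b * c)⁻¹) (-b * (a * d - b * c)⁻¹) (-c * (a * d - b * c)⁻¹)
      (a * (a * d - b * c)⁻¹))
    (by
      ext1 i
      rw [AlgHom.comp_apply, act_act]
      conv_rhs => rw [AlgHom.id_apply, ← act_one (X i)]
      congr 2 <;> first | ring1 | linear_combination ht)
    (by
      ext1 i
      rw [AlgHom.comp_apply, act_act]
      conv_rhs => rw [AlgHom.id_apply, ← act_one (X i)]
      congr 2 <;> first | ring1 | linear_combination ht)

lemma act_irreducible (a b c d : K) (hd : a * d - b * c ≠ 0) {h : MvPolynomial (Fin 2) K}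
    (hh : Irreducible h) : Irreducible (act a b c d h) :=
  (MulEquiv.irreducible_iff (actEquiv a b c d hd)).2 hh

lemma constantCoeff_act (a b c d : K) (h : MvPolynomial (Fin 2) K) :
    constantCoeff (act a b c d h) = constantCoeff h := by
  have : (constantCoeff : MvPolynomial (Fin 2) K →+* K).comp (act a b c d).toRingHom =
      constantCoeff := by
    apply MvPolynomial.ringHom_ext
    · intro x; simp
    · intro i
      fin_cases i <;> simp [act_X0, act_X1]
  exact DFunLike.congr_fun this h

lemma coeff_act_diag (a d : K) (h : MvPolynomial (Fin 2) K) (s : Fin 2 →₀ ℕ) :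
    coeff s (act a 0 0 d h) = a ^ s 0 * d ^ s 1 * coeff s h := by
  induction h using MvPolynomial.induction_on' with
  | monomial u x =>
    have : act a 0 0 d (monomial u x) = monomial u (a ^ u 0 * d ^ u 1 * x) := by
      rw [act, aeval_monomial, Finsupp.prod_fintype _ _ (by simp), monomial_eq,
        Finsupp.prod_fintype _ _ (by simp)]
      simp [Fin.prod_univ_two, mul_pow, algebraMap_eq]
      ring1
    rw [this, coeff_monomial, coeff_monomial]
    split_ifs with hu
    · rw [hu]
    · simp
  | add p q hp hq => rw [map_add, coeff_add, coeff_add, hp, hq]; ring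

/-- The substitution `X ↦ s⁻¹`, `Y ↦ T s ^ e` into Laurent series in `s` over `K[T]`. It follows the
parametrized branches `Y = T X ^ (-e)` as `X` tends to infinity; the monomial `X ^ i Y ^ j` goes to
`T ^ j s ^ (e j - i)`. Hahn series over `ℤ` supply the order function. -/
noncomputable def psi (K : Type*) [Field K] (e : ℕ) :
    MvPolynomial (Fin 2) K →+* HahnSeries ℤ (Polynomial K) :=
  eval₂Hom (HahnSeries.C.comp Polynomial.C)
    ![HahnSeries.single (-1) 1, HahnSeries.single (e : ℤ) Polynomial.X]

lemma psi_C (e : ℕ) (x : K) : psi K e (C x) = HahnSeries.single 0 (Polynomial.C x) := by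
  simp [psi]

lemma psi_X0 (e : ℕ) : psi K e (X 0) = HahnSeries.single (-1) 1 := by
  simp [psi]

lemma psi_X1 (e : ℕ) : psi K e (X 1) = HahnSeries.single (e : ℤ) Polynomial.X := by
  simp [psi]

lemma psi_mono (e : ℕ) (x : K) (i j : ℕ) : psi K e (C x * X 0 ^ i * X 1 ^ j) =
    HahnSeries.single ((e : ℤ) * j - i) (Polynomial.C x * Polynomial.X ^ j) := by
  rw [map_mul, map_mul, map_pow, map_pow, psi_C, psi_X0, psi_X1, HahnSeries.single_pow,
    HahnSeries.single_pow, HahnSeries.single_mul_single, HahnSeries.single_mul_single]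
  congr 1
  · congr 1
    simp
    ring1
  · simp

lemma monomial_eq' (u : Fin 2 →₀ ℕ) (x : K) :
    (monomial u x : MvPolynomial (Fin 2) K) = C x * X 0 ^ u 0 * X 1 ^ u 1 := by
  rw [monomial_eq, Finsupp.prod_fintype _ _ (by simp)]
  simp [Fin.prod_univ_two, mul_assoc]

/-- Different monomials have different images under `psi`, so all coefficients of `h` can be read
off from `psi K e h`. -/
lemma coeff_psi (e : ℕ) (h : MvPolynomial (Fin 2) K) (s : Fin 2 →₀ ℕ) :
    ((psi K e h).coeff ((e : ℤ) * s 1 - s 0)).coeff (s 1) = coeff s h := by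
  induction h using MvPolynomial.induction_on' with
  | monomial u x =>
    rw [monomial_eq', psi_mono, ← monomial_eq', HahnSeries.coeff_single, coeff_monomial]
    by_cases hu : u = s
    · simp [hu]
    · rw [if_neg hu]
      split_ifs with h1
      · rw [Polynomial.coeff_C_mul_X_pow]
        split_ifs with h2
        · exfalso
          apply hu
          rw [h2] at h1
          ext i
          fin_cases i
          · simp; omega
          · simpa using h2.symm
        · rfl
      · rfl
  | add p q hp hq => rw [map_add, HahnSeries.coeff_add, Polynomial.coeff_add, hp, hq, coeff_add]

/-- The coefficient of `s ^ 0` in `psi K e h`, a polynomial in `T`. It collects the monomials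
`X ^ (e j) Y ^ j` of `h`, and is the lowest weighted form of `h` when `psi K e h` has order `0`. -/
noncomputable def low (e : ℕ) (h : MvPolynomial (Fin 2) K) : Polynomial K := (psi K e h).coeff 0

lemma coeff_low (e : ℕ) (h : MvPolynomial (Fin 2) K) (b : ℕ) :
    (low e h).coeff b = coeff (Finsupp.single 0 (e * b) + Finsupp.single 1 b) h := by
  have := coeff_psi e h (Finsupp.single 0 (e * b) + Finsupp.single 1 b)
  simpa [low] using this

lemma coeff_low_zero (e : ℕ) (h : MvPolynomial (Fin 2) K) :
    (low e h).coeff 0 = constantCoeff h := by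
  rw [coeff_low]; simp [constantCoeff_eq]

lemma eval_low_diag (e : ℕ) (a d z : K) (h : MvPolynomial (Fin 2) K) :
    (low e (act a 0 0 d h)).eval z = (low e h).eval (a ^ e * d * z) := by
  have : low e (act a 0 0 d h) = (low e h).comp (Polynomial.C (a ^ e * d) * Polynomial.X) := by
    ext b
    rw [Polynomial.comp_C_mul_X_coeff, coeff_low, coeff_low, coeff_act_diag]
    simp
    ring
  rw [this]; simp

lemma low_map (e : ℕ) (σ : K →+* K) (h : MvPolynomial (Fin 2) K) :
    low e (map σ h) = (low e h).map σ := by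
  ext b
  rw [Polynomial.coeff_map, coeff_low, coeff_low, coeff_map]

/-- The substitution `X ↦ X + c Y` multiplies `psi X` by `1 + c T s ^ (e + 1)`, which does not
affect coefficients of non-positive exponent. -/
lemma psi_shear_coeff (e : ℕ) (c : K) (z : HahnSeries ℤ (Polynomial K))
    (hz : ∀ j < 0, z.coeff j = 0) (i : ℕ) :
    (∀ j < 0, (z * (1 + HahnSeries.single ((e : ℤ) + 1) (Polynomial.C c * Polynomial.X)) ^ i).coeff j
      = 0) ∧
    (z * (1 + HahnSeries.single ((e : ℤ) + 1) (Polynomial.C c * Polynomial.X)) ^ i).coeff 0 =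
      z.coeff 0 := by
  induction i with
  | zero => simpa using hz
  | succ i ih =>
    rw [pow_succ, ← mul_assoc]
    obtain ⟨h1, h2⟩ := ih
    set y := z * (1 + HahnSeries.single ((e : ℤ) + 1) (Polynomial.C c * Polynomial.X)) ^ i
    have key : ∀ j ≤ 0, (y * (1 + HahnSeries.single ((e : ℤ) + 1)
        (Polynomial.C c * Polynomial.X))).coeff j = y.coeff j := by
      intro j hj
      rw [mul_add, mul_one, HahnSeries.coeff_add, HahnSeries.coeff_mul_single,
        h1 (j - ((e : ℤ) + 1)) (by omega)]
      simp
    refine ⟨fun j hj => ?_, ?_⟩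
    · rw [key j hj.le, h1 j hj]
    · rw [key 0 le_rfl, h2]

lemma psi_shear_X0 (e : ℕ) (c : K) : psi K e (act 1 c 0 1 (X 0)) = psi K e (X 0) *
      (1 + HahnSeries.single ((e : ℤ) + 1) (Polynomial.C c * Polynomial.X)) := by
  rw [act_X0, map_add, map_mul, map_mul, psi_C, psi_C, psi_X0, psi_X1, mul_add, mul_one,
    HahnSeries.single_mul_single, HahnSeries.single_mul_single, HahnSeries.single_mul_single]
  simp

lemma low_shear_mono (e : ℕ) (c x : K) (i j : ℕ) (hij : (0 : ℤ) ≤ (e : ℤ) * j - i) :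
    low e (act 1 c 0 1 (C x * X 0 ^ i * X 1 ^ j)) = low e (C x * X 0 ^ i * X 1 ^ j) := by
  have h1 : psi K e (act 1 c 0 1 (C x * X 0 ^ i * X 1 ^ j)) =
      psi K e (C x * X 0 ^ i * X 1 ^ j) *
      (1 + HahnSeries.single ((e : ℤ) + 1) (Polynomial.C c * Polynomial.X)) ^ i := by
    have h2 : act 1 c 0 1 (X 1 : MvPolynomial (Fin 2) K) = X 1 := by
      rw [act_X1]; simp
    simp only [map_mul, map_pow, act_C, h2, psi_shear_X0]
    generalize psi K e (X 0) = u
    generalize psi K e (X 1) = v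
    generalize psi K e (C x) = w
    rw [mul_pow]
    ring1
  rw [low, low, h1]
  refine (psi_shear_coeff e c _ (fun l hl => ?_) i).2
  rw [psi_mono, HahnSeries.coeff_single, if_neg]
  omega

lemma low_add (e : ℕ) (g h : MvPolynomial (Fin 2) K) : low e (g + h) = low e g + low e h := by
  simp [low]

lemma low_sum (e : ℕ) {ι : Type*} (s : Finset ι) (g : ι → MvPolynomial (Fin 2) K) :
    low e (∑ i ∈ s, g i) = ∑ i ∈ s, low e (g i) := by
  classical
  induction s using Finset.induction_on with
  | empty => simp [low]
  | insert a s ha ih => rw [Finset.sum_insert ha, Finset.sum_insert ha, low_add, ih]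

/-- A shear `X ↦ X + c Y` preserves the lowest form of a polynomial of non-negative order. -/
lemma low_shear (e : ℕ) (c : K) (h : MvPolynomial (Fin 2) K)
    (hh : ∀ j < 0, (psi K e h).coeff j = 0) :
    low e (act 1 c 0 1 h) = low e h := by
  have hs : ∀ s ∈ h.support, (0 : ℤ) ≤ (e : ℤ) * s 1 - s 0 := by
    intro s hs
    by_contra hlt
    rw [mem_support_iff, ← coeff_psi e h s, hh _ (not_le.1 hlt)] at hs
    simp at hs
  rw [h.as_sum, map_sum, low_sum, low_sum]
  refine Finset.sum_congr rfl fun s hs' => ?_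
  rw [monomial_eq']
  exact low_shear_mono e c _ _ _ (hs s hs')

/-! ### The curve, its lowest form and its degree -/

lemma hahn_order {x : HahnSeries ℤ (Polynomial K)} {n : ℤ} (h0 : ∀ j < n, x.coeff j = 0)
    (hn : x.coeff n ≠ 0) : x.order = n := by
  apply le_antisymm (HahnSeries.order_le_of_coeff_ne_zero hn)
  by_contra hlt
  have hx : x ≠ 0 := by rintro rfl; simp at hn
  have h2 := h0 _ (not_le.1 hlt)
  rw [HahnSeries.coeff_order_eq_zero] at h2
  exact hx h2

/-- The linearized polynomial `z + ∑ a_j z ^ (q ^ j) + lam z ^ (q ^ k)`. The right-hand side of the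
equation of the curve is `X ^ q f(Y) - f(X) Y ^ q`. -/
noncomputable def fpoly (q k : ℕ) (lam : K) (a : ℕ → K) (z : MvPolynomial (Fin 2) K) :
    MvPolynomial (Fin 2) K :=
  z + ∑ j ∈ Finset.Ico 1 k, C (a j) * z ^ q ^ j + C lam * z ^ q ^ k

/-- The curve `G = 0` over a field `K` of characteristic `p`, with `q = p ^ r`. The exponent
`e = q + ⋯ + q ^ (k - 1)` is the order of vanishing of `Y` in terms of `1 / X` along the branches of
the curve at the point `(1 : 0 : 0)`. -/
structure Setup (p r q k e : ℕ) (lam : K) (a : ℕ → K) (G : MvPolynomial (Fin 2) K) : Prop where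
  prime : p.Prime
  char : CharP K p
  rpos : 0 < r
  q_eq : q = p ^ r
  k_ge : 3 ≤ k
  e_eq : e = ∑ i ∈ Finset.Ico 1 k, q ^ i
  lam_ne : lam ≠ 0
  eq : (X 0 ^ q * X 1 - X 0 * X 1 ^ q) * G =
    X 0 ^ q * fpoly q k lam a (X 1) - fpoly q k lam a (X 0) * X 1 ^ q

namespace Setup

variable {p r q k e : ℕ} {lam : K} {a : ℕ → K} {G : MvPolynomial (Fin 2) K}
  (S : Setup p r q k e lam a G)

include S

lemma q_ge : 2 ≤ q := by
  rw [S.q_eq]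
  exact S.prime.two_le.trans (Nat.le_self_pow S.rpos.ne' p)

lemma q_cast : (q : K) = 0 := by
  have := S.char
  rw [S.q_eq, Nat.cast_pow, CharP.cast_eq_zero, zero_pow S.rpos.ne']

/-- That is, `e (q - 1) = q ^ k - q`. -/
lemma e_mul : e * q + q = q ^ k + e := by
  have h : ∀ m, (∑ i ∈ Finset.Ico 1 (m + 1), q ^ i) * q + q =
      q ^ (m + 1) + ∑ i ∈ Finset.Ico 1 (m + 1), q ^ i := by
    intro m
    induction m with
    | zero => simp
    | succ m ih =>
      rw [Finset.sum_Ico_succ_top (by omega)]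
      rw [add_mul, add_right_comm, ih]; ring
  have := S.k_ge
  obtain ⟨m, rfl⟩ : ∃ m, k = m + 1 := ⟨k - 1, by omega⟩
  rw [S.e_eq]; exact h m

lemma q_le_e : q ≤ e := by
  rw [S.e_eq]
  have := Finset.single_le_sum (f := fun i => q ^ i) (fun i _ => Nat.zero_le _)
    (show 1 ∈ Finset.Ico 1 k by have := S.k_ge; simp; omega)
  simpa using this

lemma e_mul' : e * (q - 1) + (q - 1) = q ^ k - 1 := by
  have h1 := S.e_mul
  have h2 := S.q_ge
  obtain ⟨m, hm⟩ : ∃ m, q = m + 1 := ⟨q - 1, by omega⟩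
  rw [Nat.sub_eq_of_eq_add hm]
  have : e * q = e * m + e := by rw [hm]; ring
  omega

lemma add_pow_q {A : Type*} [CommRing A] [Algebra K A] [Nontrivial A] (x y : A) (j : ℕ) :
    (x + y) ^ q ^ j = x ^ q ^ j + y ^ q ^ j := by
  have := S.char
  have := Fact.mk S.prime
  have : CharP A p := charP_of_injective_algebraMap (algebraMap K A).injective p
  rw [S.q_eq, ← pow_mul, add_pow_char_pow]

omit S in
lemma pow_q {c : K} (hc : c ^ q = c) (j : ℕ) : c ^ q ^ j = c := by
  induction j with
  | zero => simp
  | succ j ih => rw [pow_succ, pow_mul, ih, hc]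

lemma fpoly_lin {c d : K} (hc : c ^ q = c) (hd : d ^ q = d) (x y : MvPolynomial (Fin 2) K) :
    fpoly q k lam a (C c * x + C d * y) =
      C c * fpoly q k lam a x + C d * fpoly q k lam a y := by
  have h : ∀ j, (C c * x + C d * y) ^ q ^ j = C c * x ^ q ^ j + C d * y ^ q ^ j := by
    intro j
    rw [S.add_pow_q, mul_pow, mul_pow, ← C_pow, ← C_pow, pow_q hc, pow_q hd]
  simp only [fpoly, h]
  simp only [mul_add, Finset.sum_add_distrib, Finset.mul_sum]
  have e1 : ∀ (c : K) (x : MvPolynomial (Fin 2) K), ∑ j ∈ Finset.Ico 1 k, C (a j) * (C c * x ^ q ^ j) =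
      ∑ j ∈ Finset.Ico 1 k, C c * (C (a j) * x ^ q ^ j) := fun c x =>
    Finset.sum_congr rfl fun j _ => by ring
  rw [e1, e1]
  ring

lemma lin_ne : (X 0 ^ q * X 1 - X 0 * X 1 ^ q : MvPolynomial (Fin 2) K) ≠ 0 := by
  intro h
  have h2 := congrArg (coeff (Finsupp.single 0 q + Finsupp.single 1 1)) h
  have e1 : (X 0 ^ q * X 1 : MvPolynomial (Fin 2) K) =
    monomial (Finsupp.single 0 q + Finsupp.single 1 1) 1 := by
    rw [monomial_eq']; simp
  have e2 : (X 0 * X 1 ^ q : MvPolynomial (Fin 2) K) =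
    monomial (Finsupp.single 0 1 + Finsupp.single 1 q) 1 := by
    rw [monomial_eq']; simp
  rw [e1, e2, coeff_sub, coeff_monomial, coeff_monomial, if_pos rfl, if_neg] at h2
  · simp at h2
  · intro h3
    have := DFunLike.congr_fun h3 0
    simp at this
    have := S.q_ge
    omega

/-- The curve is invariant under `GL₂(𝔽_q)`: numerator and denominator of `G` are both multiplied by
the determinant. -/
lemma act_G {x y z w : K} (hx : x ^ q = x) (hy : y ^ q = y) (hz : z ^ q = z) (hw : w ^ q = w)
    (hd : x * w - y * z ≠ 0) : act x y z w G = G := by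
  have hC : ∀ {c d : K}, c ^ q = c → d ^ q = d →
      (C c * X 0 + C d * X 1 : MvPolynomial (Fin 2) K) ^ q = C c * X 0 ^ q + C d * X 1 ^ q := by
    intro c d hc hd
    have := S.add_pow_q (C c * X 0 : MvPolynomial (Fin 2) K) (C d * X 1) 1
    rw [pow_one] at this
    rw [this, mul_pow, mul_pow, ← C_pow, ← C_pow, hc, hd]
  have hf : ∀ u, act x y z w (fpoly q k lam a u) = fpoly q k lam a (act x y z w u) := by
    intro u
    simp [fpoly]
  have h1 := congrArg (act x y z w) S.eq
  simp only [map_sub, map_mul, map_pow, hf, act_X0, act_X1, hC hx hy, hC hz hw,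
    S.fpoly_lin hx hy, S.fpoly_lin hz hw] at h1
  have h2 : C (x * w - y * z) * (X 0 ^ q * X 1 - X 0 * X 1 ^ q) * act x y z w G =
      C (x * w - y * z) * (X 0 ^ q * X 1 - X 0 * X 1 ^ q) * G := by
    rw [mul_assoc _ _ G, S.eq, C_sub, C_mul, C_mul]
    linear_combination h1
  exact mul_left_cancel₀ (mul_ne_zero (by rwa [Ne, C_eq_zero]) S.lin_ne) h2

omit S in
lemma psi_lin : psi K e (X 0 ^ q * X 1 - X 0 * X 1 ^ q) =
    HahnSeries.single ((e : ℤ) - q) Polynomial.X -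
      HahnSeries.single ((e : ℤ) * q - 1) (Polynomial.X ^ q) := by
  have e1 := psi_mono e (1 : K) q 1
  have e2 := psi_mono e (1 : K) 1 q
  simp only [map_one, one_mul, pow_one, Nat.cast_one, mul_one] at e1 e2
  rw [map_sub, e1, e2]

lemma psi_rhs_coeff (t : ℤ) (ht : t ≤ (e : ℤ) - q) :
    (psi K e (X 0 ^ q * fpoly q k lam a (X 1) - fpoly q k lam a (X 0) * X 1 ^ q)).coeff t =
      if t = (e : ℤ) - q then Polynomial.X - Polynomial.C lam * Polynomial.X ^ q else 0 := by
  have hN : X 0 ^ q * fpoly q k lam a (X 1) - fpoly q k lam a (X 0) * X 1 ^ q =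
      (X 0 ^ q * X 1 - X 0 * X 1 ^ q) +
      ∑ j ∈ Finset.Ico 1 k, (C (a j) * X 0 ^ q * X 1 ^ q ^ j - C (a j) * X 0 ^ q ^ j * X 1 ^ q)
      + (C lam * X 0 ^ q * X 1 ^ q ^ k - C lam * X 0 ^ q ^ k * X 1 ^ q) := by
    rw [Finset.sum_sub_distrib]
    simp only [fpoly, mul_add, add_mul, Finset.mul_sum, Finset.sum_mul]
    rw [Finset.sum_congr rfl fun j _ => (by ring : (X 0 ^ q * (C (a j) * X 1 ^ q ^ j) :
      MvPolynomial (Fin 2) K) = C (a j) * X 0 ^ q * X 1 ^ q ^ j)]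
    ring
  have hq := S.q_ge
  have hqe := S.q_le_e
  have hem : (e : ℤ) * q + q = (q : ℤ) ^ k + e := by exact_mod_cast S.e_mul
  rw [hN, map_add, map_add, psi_lin, map_sum]
  simp only [HahnSeries.coeff_add, HahnSeries.coeff_sub, HahnSeries.coeff_sum, map_sub, psi_mono]
  have hbig : ∀ j, 1 ≤ j → (e : ℤ) - q < (e : ℤ) * (q ^ j : ℕ) - q := by
    intro j hj
    have : 2 ≤ q ^ j := hq.trans (Nat.le_self_pow (by omega) q)
    have h2 : (e : ℤ) * 2 ≤ e * (q ^ j : ℕ) := by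
      apply mul_le_mul_of_nonneg_left <;> [exact_mod_cast this; positivity]
    omega
  have hsum : ∑ j ∈ Finset.Ico 1 k,
      ((HahnSeries.single ((e : ℤ) * (q ^ j : ℕ) - q)
          (Polynomial.C (a j) * Polynomial.X ^ q ^ j)).coeff t -
        (HahnSeries.single ((e : ℤ) * q - (q ^ j : ℕ))
          (Polynomial.C (a j) * Polynomial.X ^ q)).coeff t) = 0 := by
    apply Finset.sum_eq_zero
    intro j hj
    rw [Finset.mem_Ico] at hj
    have h1 := hbig j hj.1
    have h2 : (q : ℤ) ^ j < (q : ℤ) ^ k := by exact_mod_cast Nat.pow_lt_pow_right (by omega) hj.2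
    rw [HahnSeries.coeff_single, HahnSeries.coeff_single, if_neg (by omega), if_neg, sub_zero]
    push_cast; omega
  rw [hsum]
  have h1 := hbig k (by have := S.k_ge; omega)
  have h2 : (e : ℤ) * 2 ≤ e * q := by
    apply mul_le_mul_of_nonneg_left <;> [exact_mod_cast hq; positivity]
  rw [HahnSeries.coeff_single, HahnSeries.coeff_single, HahnSeries.coeff_single,
    HahnSeries.coeff_single, if_neg (show ¬ t = (e : ℤ) * q - 1 by omega),
    if_neg (show ¬ t = (e : ℤ) * (q ^ k : ℕ) - q by omega)]
  have h3 : (e : ℤ) * q - (q ^ k : ℕ) = e - q := by push_cast; omega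
  rw [h3]
  split_ifs <;> simp [sub_eq_add_neg]

lemma rhs_low_ne : (Polynomial.X - Polynomial.C lam * Polynomial.X ^ q : Polynomial K) ≠ 0 := by
  intro h
  have := congrArg (fun f => Polynomial.coeff f 1) h
  have hq := S.q_ge
  simp [Polynomial.coeff_X_pow, show ¬ (1 = q) by omega] at this

lemma order_rhs : (psi K e (X 0 ^ q * fpoly q k lam a (X 1) - fpoly q k lam a (X 0) * X 1 ^ q)).order
    = (e : ℤ) - q := by
  apply hahn_order
  · intro j hj
    rw [S.psi_rhs_coeff j hj.le, if_neg hj.ne]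
  · rw [S.psi_rhs_coeff _ le_rfl, if_pos rfl]
    exact S.rhs_low_ne

lemma psi_lin_coeff (t : ℤ) (ht : t ≤ (e : ℤ) - q) :
    (psi K e (X 0 ^ q * X 1 - X 0 * X 1 ^ q)).coeff t =
      if t = (e : ℤ) - q then Polynomial.X else 0 := by
  have hq := S.q_ge
  have hqe := S.q_le_e
  have h2 : (e : ℤ) * 2 ≤ e * q := by
    apply mul_le_mul_of_nonneg_left <;> [exact_mod_cast hq; positivity]
  rw [psi_lin, HahnSeries.coeff_sub, HahnSeries.coeff_single, HahnSeries.coeff_single,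
    if_neg (show ¬ t = (e : ℤ) * q - 1 by omega), sub_zero]
  split_ifs <;> rfl

lemma order_lin : (psi K e (X 0 ^ q * X 1 - X 0 * X 1 ^ q)).order = (e : ℤ) - q := by
  apply hahn_order
  · intro j hj
    rw [S.psi_lin_coeff j hj.le, if_neg hj.ne]
  · rw [S.psi_lin_coeff _ le_rfl, if_pos rfl]
    exact Polynomial.X_ne_zero

lemma psi_G_ne : psi K e G ≠ 0 := by
  intro h
  have h1 := congrArg (psi K e) S.eq
  rw [map_mul, h, mul_zero] at h1
  have h2 := S.psi_rhs_coeff _ le_rfl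
  rw [← h1, if_pos rfl] at h2
  exact S.rhs_low_ne h2.symm

lemma order_G : (psi K e G).order = 0 := by
  have h1 := congrArg (fun z => (psi K e z).order) S.eq
  simp only [map_mul] at h1
  rw [HahnSeries.order_mul _ S.psi_G_ne, S.order_rhs, S.order_lin] at h1
  · omega
  · intro h
    have h2 := S.psi_lin_coeff _ le_rfl
    rw [h, if_pos rfl] at h2
    exact Polynomial.X_ne_zero h2.symm

/-- The lowest form of `G`, with its `q - 1` simple roots, one for each branch at `(1 : 0 : 0)`. -/
lemma low_G : low e G = 1 - Polynomial.C lam * Polynomial.X ^ (q - 1) := by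
  have h1 := HahnSeries.coeff_mul_order_add_order (psi K e (X 0 ^ q * X 1 - X 0 * X 1 ^ q))
    (psi K e G)
  rw [← map_mul, S.eq, S.order_lin, S.order_G, add_zero, S.psi_rhs_coeff _ le_rfl, if_pos rfl,
    HahnSeries.leadingCoeff_eq, HahnSeries.leadingCoeff_eq, S.order_lin, S.order_G,
    S.psi_lin_coeff _ le_rfl, if_pos rfl] at h1
  apply mul_left_cancel₀ (Polynomial.X_ne_zero (R := K))
  change Polynomial.X * (psi K e G).coeff 0 = _
  rw [← h1, mul_sub, mul_one, mul_left_comm, ← pow_succ']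
  have := S.q_ge
  rw [show q - 1 + 1 = q by omega]

lemma constantCoeff_G : constantCoeff G = 1 := by
  rw [← coeff_low_zero e, S.low_G]
  have := S.q_ge
  simp [Polynomial.coeff_X_pow, show ¬ (0 = q - 1) by omega]

lemma G_ne : G ≠ 0 := by
  intro h
  have := S.constantCoeff_G
  simp [h] at this

lemma totalDegree_G : G.totalDegree ≤ q ^ k - 1 := by
  have hq := S.q_ge
  have hk := S.k_ge
  have hL : (X 0 ^ q * X 1 - X 0 * X 1 ^ q : MvPolynomial (Fin 2) K).totalDegree = q + 1 := by
    apply IsHomogeneous.totalDegree _ S.lin_ne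
    apply IsHomogeneous.sub
    · exact (isHomogeneous_X_pow 0 q).mul (isHomogeneous_X _ 1)
    · rw [add_comm]
      exact (isHomogeneous_X _ 0).mul (isHomogeneous_X_pow 1 q)
  have hf : ∀ i : Fin 2, (fpoly q k lam a (X i)).totalDegree ≤ q ^ k := by
    intro i
    have hm : ∀ (c : K) (m : ℕ), (C c * X i ^ m : MvPolynomial (Fin 2) K).totalDegree ≤ m := by
      intro c m
      refine (totalDegree_mul _ _).trans ?_
      rw [totalDegree_C, totalDegree_X_pow, zero_add]
    refine (totalDegree_add _ _).trans (max_le ((totalDegree_add _ _).trans (max_le ?_ ?_)) (hm _ _))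
    · rw [totalDegree_X]
      exact Nat.one_le_pow _ _ (by omega)
    · apply totalDegree_finsetSum_le
      intro j hj
      rw [Finset.mem_Ico] at hj
      exact (hm _ _).trans (Nat.pow_le_pow_right (by omega) hj.2.le)
  have hN : (X 0 ^ q * fpoly q k lam a (X 1) - fpoly q k lam a (X 0) * X 1 ^ q).totalDegree
      ≤ q + q ^ k := by
    refine (totalDegree_sub _ _).trans (max_le ((totalDegree_mul _ _).trans ?_)
      ((totalDegree_mul _ _).trans ?_))
    · rw [totalDegree_X_pow]
      exact Nat.add_le_add_left (hf 1) _
    · rw [totalDegree_X_pow, add_comm]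
      exact Nat.add_le_add_left (hf 0) _
  rw [← S.eq, totalDegree_mul_of_isDomain S.lin_ne S.G_ne, hL] at hN
  omega

end Setup

/-! ### Branches at infinity determine components -/

/-- `h` is an irreducible component of `G = 0`, normalized to have constant coefficient `1`, which
contains the branch `Y = w X ^ (-e) + ⋯` at infinity. -/
structure IsComp (e : ℕ) (G : MvPolynomial (Fin 2) K) (w : K) (h : MvPolynomial (Fin 2) K) :
    Prop where
  irr : Irreducible h
  dvd : h ∣ G
  const : constantCoeff h = 1
  root : (low e h).eval w = 0

namespace Setup

variable {p r q k e : ℕ} {lam : K} {a : ℕ → K} {G : MvPolynomial (Fin 2) K}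
  (S : Setup p r q k e lam a G)

include S

lemma const_ne {x : MvPolynomial (Fin 2) K} (hx : x ∣ G) : constantCoeff x ≠ 0 := by
  obtain ⟨y, rfl⟩ := hx
  intro h
  have := S.constantCoeff_G
  rw [map_mul, h, zero_mul] at this
  exact zero_ne_one this

lemma coeff_zero_ne {x : MvPolynomial (Fin 2) K} (hx : x ∣ G) : (psi K e x).coeff 0 ≠ 0 := by
  intro h
  apply S.const_ne hx
  rw [← coeff_low_zero e, low, h, Polynomial.coeff_zero]

lemma psi_ne {x : MvPolynomial (Fin 2) K} (hx : x ∣ G) : psi K e x ≠ 0 := by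
  intro h
  have := S.coeff_zero_ne hx
  simp [h] at this

/-- Both cofactors have non-zero constant coefficient, hence non-positive order, and the orders add up
to `0`. -/
lemma order_dvd {x : MvPolynomial (Fin 2) K} (hx : x ∣ G) : (psi K e x).order = 0 := by
  obtain ⟨y, hy⟩ := hx
  have hx' : x ∣ G := ⟨y, hy⟩
  have hy' : y ∣ G := ⟨x, by rw [hy, mul_comm]⟩
  have h1 := HahnSeries.order_le_of_coeff_ne_zero (S.coeff_zero_ne hx')
  have h2 := HahnSeries.order_le_of_coeff_ne_zero (S.coeff_zero_ne hy')
  have h3 := HahnSeries.order_mul (S.psi_ne hx') (S.psi_ne hy')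
  rw [← map_mul, ← hy, S.order_G] at h3
  omega

lemma low_mul {x y : MvPolynomial (Fin 2) K} (hxy : x * y ∣ G) :
    low e (x * y) = low e x * low e y := by
  have hx := S.order_dvd (dvd_of_mul_right_dvd hxy)
  have hy := S.order_dvd (dvd_of_mul_left_dvd hxy)
  have := HahnSeries.coeff_mul_order_add_order (psi K e x) (psi K e y)
  rw [HahnSeries.leadingCoeff_eq, HahnSeries.leadingCoeff_eq, hx, hy, add_zero, ← map_mul] at this
  exact this

/-- A factor without branches at `(1 : 0 : 0)` is constant: the complementary factor contains the
monomial `X ^ (e (q - 1)) Y ^ (q - 1)`, whose degree `q ^ k - 1` is at least that of `G`. -/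
lemma isUnit_of_low {x : MvPolynomial (Fin 2) K} (hx : x ∣ G) (h0 : (low e x).natDegree = 0) :
    IsUnit x := by
  obtain ⟨y, hy⟩ := hx
  have hq := S.q_ge
  have h1 := S.low_mul (x := x) (y := y) (by rw [hy])
  rw [← hy, S.low_G, Polynomial.eq_C_of_natDegree_eq_zero h0] at h1
  have h2 := congrArg (fun f => Polynomial.coeff f (q - 1)) h1
  simp only [Polynomial.coeff_sub, Polynomial.coeff_C_mul, Polynomial.coeff_X_pow, if_true,
    Polynomial.coeff_one, show ¬ (q - 1 = 0) by omega, if_false, mul_one, zero_sub] at h2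
  have h3 : (low e y).coeff (q - 1) ≠ 0 := by
    intro h
    rw [h, mul_zero, neg_eq_zero] at h2
    exact S.lam_ne h2
  rw [coeff_low] at h3
  have h4 := le_totalDegree (mem_support_iff.2 h3)
  rw [Finsupp.sum_fintype _ _ (by simp), Fin.sum_univ_two] at h4
  simp only [Finsupp.add_apply, Finsupp.single_eq_same, ne_eq, one_ne_zero, zero_ne_one,
    not_false_eq_true, Finsupp.single_eq_of_ne, add_zero, zero_add] at h4
  have hx0 : x ≠ 0 := by rintro rfl; exact S.G_ne (by rw [hy, zero_mul])
  have hy0 : y ≠ 0 := by rintro rfl; exact S.G_ne (by rw [hy, mul_zero])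
  have h5 := S.totalDegree_G
  rw [hy, totalDegree_mul_of_isDomain hx0 hy0, ← S.e_mul'] at h5
  have h6 : x.totalDegree = 0 := by omega
  rw [totalDegree_eq_zero_iff_eq_C] at h6
  rw [h6]
  refine IsUnit.map C (IsUnit.mk0 _ fun h => hx0 ?_)
  rw [h6, h, C_0]

lemma eval_low_G (w : K) : (low e G).eval w = 1 - lam * w ^ (q - 1) := by
  rw [S.low_G]; simp

lemma root_eq {x : MvPolynomial (Fin 2) K} (hx : x ∣ G) {w : K} (hw : (low e x).eval w = 0) :
    lam * w ^ (q - 1) = 1 := by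
  obtain ⟨y, hy⟩ := hx
  have h1 := S.low_mul (x := x) (y := y) (by rw [hy])
  have h2 := S.eval_low_G w
  rw [hy, h1, Polynomial.eval_mul, hw, zero_mul] at h2
  linear_combination h2

/-- A branch lies on only one component, since the roots of `low e G` are simple. -/
lemma root_mul {x y : MvPolynomial (Fin 2) K} (hxy : x * y ∣ G) {w : K}
    (hx : (low e x).eval w = 0) (hy : (low e y).eval w = 0) : False := by
  have hw := S.root_eq (dvd_of_mul_right_dvd hxy) hx
  have hq := S.q_ge
  obtain ⟨z, hz⟩ := hxy
  have h1 := S.low_mul (x := x * y) (y := z) (by rw [hz])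
  rw [S.low_mul (x := x) (y := y) (by rw [hz]; exact dvd_mul_right _ _), ← hz, S.low_G] at h1
  have h2 := congrArg (fun f => (Polynomial.derivative f).eval w) h1
  -- A double root would be a root of the derivative, which is a non-zero multiple of `X ^ (q - 2)`
  -- because `q - 1 = -1` in `K`.
  simp only [Polynomial.derivative_mul, Polynomial.derivative_sub, Polynomial.derivative_one,
    Polynomial.derivative_X_pow, Polynomial.derivative_C, Polynomial.eval_sub, Polynomial.eval_add,
    Polynomial.eval_mul, hx, hy, Polynomial.eval_zero, Polynomial.eval_C, Polynomial.eval_pow,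
    Polynomial.eval_X] at h2
  rw [Nat.cast_sub (by omega), S.q_cast] at h2
  have h3 : w * w ^ (q - 1 - 1) = w ^ (q - 1) := by
    rw [← pow_succ', show q - 1 - 1 + 1 = q - 1 by omega]
  have h4 : lam * w ^ (q - 1) = 0 := by
    rw [← h3]
    push_cast at h2
    linear_combination w * h2
  rw [h4] at hw
  exact zero_ne_one hw

/-- Among the irreducible factors of a divisor of `G`, one contains any given branch of that divisor. -/
lemma exists_irr (w : K) (x : MvPolynomial (Fin 2) K) : x ∣ G → (low e x).eval w = 0 →
    ∃ h, h ∣ x ∧ Irreducible h ∧ constantCoeff h = 1 ∧ (low e h).eval w = 0 := by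
  refine WfDvdMonoid.induction_on_irreducible x ?_ ?_ ?_
  · intro h
    exact absurd (zero_dvd_iff.1 h) S.G_ne
  · intro u hu huG hw
    exfalso
    obtain ⟨v, hv⟩ := hu.exists_right_inv
    have h1 := S.low_mul (x := u) (y := v) (by rw [hv]; exact one_dvd _)
    have h2 := congrArg (Polynomial.eval w) h1
    rw [Polynomial.eval_mul, hw, zero_mul, hv] at h2
    have : low e (1 : MvPolynomial (Fin 2) K) = 1 := by
      rw [low, map_one]; simp
    rw [this] at h2
    simp at h2
  · intro y i hy hi ih hd hw
    rw [S.low_mul hd, Polynomial.eval_mul, mul_eq_zero] at hw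
    rcases hw with hw | hw
    · have hc := S.const_ne (dvd_of_mul_right_dvd hd)
      have hu : IsUnit (C (constantCoeff i)⁻¹ : MvPolynomial (Fin 2) K) :=
        IsUnit.map C (IsUnit.mk0 _ (inv_ne_zero hc))
      refine ⟨C (constantCoeff i)⁻¹ * i, ?_, ?_, ?_, ?_⟩
      · exact (hu.mul_left_dvd.2 dvd_rfl).trans (dvd_mul_right _ _)
      · exact (irreducible_isUnit_mul hu).2 hi
      · simp [hc]
      · rw [low, map_mul, psi_C, HahnSeries.coeff_single_zero_mul, Polynomial.eval_mul]
        rw [low] at hw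
        rw [hw, mul_zero]
    · obtain ⟨h, h1, h2⟩ := ih (dvd_of_mul_left_dvd hd) hw
      exact ⟨h, h1.trans (dvd_mul_left _ _), h2⟩

omit S in
lemma eq_of_associated {x y : MvPolynomial (Fin 2) K} (hx : constantCoeff x = 1)
    (hy : constantCoeff y = 1) (h : Associated x y) : x = y := by
  obtain ⟨u, rfl⟩ := h
  obtain ⟨c, hc, hu⟩ := MvPolynomial.isUnit_iff_eq_C_of_isReduced.1 u.isUnit
  rw [hu] at hy ⊢
  rw [map_mul, hx, constantCoeff_C, one_mul] at hy
  rw [hy, C_1, mul_one]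

lemma comp_unique {w : K} {x y : MvPolynomial (Fin 2) K} (hx : IsComp e G w x)
    (hy : IsComp e G w y) : x = y := by
  by_contra hne
  have hna : ¬ Associated x y := fun h => hne (eq_of_associated hx.const hy.const h)
  obtain ⟨g, hg⟩ := hx.dvd
  have h1 : y ∣ x * g := hg ▸ hy.dvd
  rcases hy.irr.prime.dvd_or_dvd h1 with h2 | h2
  · exact hna (hy.irr.associated_of_dvd hx.irr h2).symm
  · obtain ⟨g', rfl⟩ := h2
    exact S.root_mul (x := x) (y := y) ⟨g', by rw [hg, mul_assoc]⟩ hx.root hy.root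

lemma exists_comp {w : K} (hw : lam * w ^ (q - 1) = 1) : ∃ h, IsComp e G w h := by
  obtain ⟨h, h1, h2, h3, h4⟩ := S.exists_irr w G dvd_rfl (by rw [S.eval_low_G, hw, sub_self])
  exact ⟨h, h2, h1, h3, h4⟩

lemma exists_root [IsAlgClosed K] {x : MvPolynomial (Fin 2) K} (hx : x ∣ G) (hu : ¬ IsUnit x) :
    ∃ w, (low e x).eval w = 0 := by
  apply IsAlgClosed.exists_root
  intro h
  exact hu (S.isUnit_of_low hx (Polynomial.natDegree_eq_of_degree_eq_some h))

lemma neg_q {c : K} (hc : c ^ q = c) : (-c) ^ q = -c := by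
  have h := S.add_pow_q c (-c) 1
  rw [add_neg_cancel, pow_one, hc, zero_pow (by have := S.q_ge; omega)] at h
  linear_combination -h

lemma act_dvd {x y z w : K} (hx : x ^ q = x) (hy : y ^ q = y) (hz : z ^ q = z) (hw : w ^ q = w)
    (hd : x * w - y * z ≠ 0) {h : MvPolynomial (Fin 2) K} (hh : h ∣ G) : act x y z w h ∣ G := by
  have := map_dvd (act x y z w) hh
  rwa [S.act_G hx hy hz hw hd] at this

/-- Shears fix every branch at `(1 : 0 : 0)`, hence every component. -/
lemma shear [IsAlgClosed K] {c : K} (hc : c ^ q = c) {h : MvPolynomial (Fin 2) K}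
    (hi : Irreducible h) (hd : h ∣ G) (h1 : constantCoeff h = 1) : act 1 c 0 1 h = h := by
  obtain ⟨w, hw⟩ := S.exists_root hd hi.not_isUnit
  have hq : q ≠ 0 := by have := S.q_ge; omega
  refine S.comp_unique (w := w) ⟨act_irreducible _ _ _ _ (by simp) hi,
    S.act_dvd (one_pow _) hc (zero_pow hq) (one_pow _) (by simp) hd,
    by rw [constantCoeff_act, h1], ?_⟩ ⟨hi, hd, h1, hw⟩
  rw [low_shear, hw]
  intro j hj
  apply HahnSeries.coeff_eq_zero_of_lt_order
  rwa [S.order_dvd hd]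

/-- Every component is fixed by the opposite shears too, by conjugating with `X ↔ Y`. -/
lemma shear' [IsAlgClosed K] {c : K} (hc : c ^ q = c) {h : MvPolynomial (Fin 2) K}
    (hi : Irreducible h) (hd : h ∣ G) (h1 : constantCoeff h = 1) : act 1 0 c 1 h = h := by
  have hq : q ≠ 0 := by have := S.q_ge; omega
  have h2 := S.shear hc (h := act 0 1 1 0 h) (act_irreducible _ _ _ _ (by simp) hi)
    (S.act_dvd (zero_pow hq) (one_pow _) (one_pow _) (zero_pow hq) (by simp) hd)
    (by rw [constantCoeff_act, h1])
  have h3 := congrArg (act 0 1 1 0) h2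
  simpa [act_act, act_one] using h3

/-- The matrix `diag(c, c⁻¹)` is a product of shears, so it fixes every component. -/
lemma act_diag_inv [IsAlgClosed K] {c : K} (hc : c ^ q = c) (h0 : c ≠ 0)
    {h : MvPolynomial (Fin 2) K}
    (hi : Irreducible h) (hd : h ∣ G) (h1 : constantCoeff h = 1) : act c 0 0 c⁻¹ h = h := by
  have hn : (-1 : K) ^ q = -1 := S.neg_q (one_pow _)
  have hci : (-c⁻¹) ^ q = -c⁻¹ := S.neg_q (by rw [inv_pow, hc])
  -- The six shears multiply to `diag(c, c⁻¹)`.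
  have key : act 1 (-1) 0 1 (act 1 0 1 1 (act 1 (-1) 0 1 (act 1 c 0 1
      (act 1 0 (-c⁻¹) 1 (act 1 c 0 1 h))))) = h := by
    rw [S.shear hc hi hd h1, S.shear' hci hi hd h1, S.shear hc hi hd h1, S.shear hn hi hd h1,
      S.shear' (one_pow _) hi hd h1, S.shear hn hi hd h1]
  rw [← key]
  conv_rhs => simp only [act_act]
  rw [key]
  congr 1
  congr 1 <;> field_simp <;> ring1

end Setup

/-! ### Multiplicity of a point on the line at infinity -/

/-- The substitution `X ↦ X`, `Y ↦ T X` into `K[T][X]`. The coefficient of `X ^ d` in the image of `h`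
is the degree `d` form of `h`, evaluated at `(1, T)`. -/
noncomputable def theta (K : Type*) [Field K] :
    MvPolynomial (Fin 2) K →+* Polynomial (Polynomial K) :=
  eval₂Hom (Polynomial.C.comp Polynomial.C)
    ![Polynomial.X, Polynomial.C Polynomial.X * Polynomial.X]

lemma theta_C (x : K) : theta K (C x) = Polynomial.C (Polynomial.C x) := by
  simp [theta]

lemma theta_X0 : theta K (X 0) = Polynomial.X := by
  simp [theta]

lemma theta_X1 : theta K (X 1) = Polynomial.C Polynomial.X * Polynomial.X := by
  simp [theta]

lemma theta_map (σ : K →+* K) (h : MvPolynomial (Fin 2) K) :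
    theta K (map σ h) = (theta K h).map (Polynomial.mapRingHom σ) := by
  have : (theta K).comp (map σ) =
      (Polynomial.mapRingHom (Polynomial.mapRingHom σ)).comp (theta K) := by
    apply MvPolynomial.ringHom_ext
    · intro x; simp [theta_C]
    · intro i
      fin_cases i
      · simp [theta_X0]
      · simp [theta_X1]
  exact DFunLike.congr_fun this h

lemma theta_term (c : K) (q m : ℕ) : theta K (C c * (X 0 ^ q * X 1 ^ m - X 0 ^ m * X 1 ^ q)) =
    Polynomial.C (Polynomial.C c * (Polynomial.X ^ m - Polynomial.X ^ q)) *
      Polynomial.X ^ (q + m) := by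
  simp only [map_sub, map_mul, map_pow, theta_X0, theta_X1, theta_C]
  ring

/-- The multiplicity of `T = t` as a zero of the top degree form of `h` at `(1, T)`: the intersection
multiplicity of `h = 0` and the line at infinity at the point `(1 : t : 0)`. The value for `h = 0`
is `0`. -/
noncomputable def mult (t : K) (h : MvPolynomial (Fin 2) K) : ℕ :=
  (theta K h).leadingCoeff.rootMultiplicity t

lemma mult_map (σ : K →+* K) (t : K) (h : MvPolynomial (Fin 2) K) :
    mult (σ t) (map σ h) = mult t h := by
  rw [mult, theta_map, Polynomial.leadingCoeff_map_of_injective]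
  · rw [Polynomial.coe_mapRingHom, ← Polynomial.eq_rootMultiplicity_map σ.injective, mult]
  · exact Polynomial.map_injective σ σ.injective

lemma mult_mul (t : K) {x y : MvPolynomial (Fin 2) K} (h : theta K (x * y) ≠ 0) :
    mult t (x * y) = mult t x + mult t y := by
  rw [mult, map_mul, Polynomial.leadingCoeff_mul, Polynomial.rootMultiplicity_mul, mult, mult]
  rwa [← Polynomial.leadingCoeff_mul, ← map_mul, Polynomial.leadingCoeff_ne_zero]

namespace Setup

variable {p r q k e : ℕ} {lam : K} {a : ℕ → K} {G : MvPolynomial (Fin 2) K}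
  (S : Setup p r q k e lam a G)

include S

omit S in
lemma theta_lin : theta K (X 0 ^ q * X 1 - X 0 * X 1 ^ q) =
    Polynomial.C (Polynomial.X - Polynomial.X ^ q) * Polynomial.X ^ (q + 1) := by
  simp only [map_sub, map_mul, map_pow, theta_X0, theta_X1]
  ring

/-- The top form of the numerator at `(1, T)` is `lam (T ^ (q ^ k) - T ^ q)`, written here as a
`q`-th power multiple. -/
lemma theta_rhs : ∃ R : Polynomial (Polynomial K), R.natDegree < q + q ^ k ∧
    theta K (X 0 ^ q * fpoly q k lam a (X 1) - fpoly q k lam a (X 0) * X 1 ^ q) =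
    R + Polynomial.C (Polynomial.C lam * (Polynomial.X ^ q ^ (k - 1) - Polynomial.X) ^ q) *
      Polynomial.X ^ (q + q ^ k) := by
  have hq := S.q_ge
  have hk := S.k_ge
  have hqk : 1 < q ^ k := Nat.one_lt_pow (by omega) (by omega)
  refine ⟨Polynomial.C (Polynomial.X - Polynomial.X ^ q) * Polynomial.X ^ (q + 1) +
    ∑ j ∈ Finset.Ico 1 k, Polynomial.C (Polynomial.C (a j) *
      (Polynomial.X ^ q ^ j - Polynomial.X ^ q)) * Polynomial.X ^ (q + q ^ j), ?_, ?_⟩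
  · refine lt_of_le_of_lt (Polynomial.natDegree_add_le _ _) (max_lt ?_ ?_)
    · exact (Polynomial.natDegree_C_mul_X_pow_le _ _).trans_lt (by omega)
    · refine lt_of_le_of_lt (Polynomial.natDegree_sum_le_of_forall_le (n := q + q ^ (k - 1)) _ _
        fun j hj => (Polynomial.natDegree_C_mul_X_pow_le _ _).trans ?_) ?_
      · rw [Finset.mem_Ico] at hj
        have := Nat.pow_le_pow_right (n := q) (by omega) (show j ≤ k - 1 by omega)
        omega
      · have := Nat.pow_lt_pow_right (a := q) (by omega) (show k - 1 < k by omega)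
        omega
  · have h1 : (Polynomial.X ^ q ^ (k - 1) - Polynomial.X : Polynomial K) ^ q =
        Polynomial.X ^ q ^ k - Polynomial.X ^ q := by
      have h2 := S.add_pow_q (Polynomial.X ^ q ^ (k - 1) - Polynomial.X : Polynomial K)
        Polynomial.X 1
      rw [sub_add_cancel, pow_one, ← pow_mul, ← pow_succ, show k - 1 + 1 = k by omega] at h2
      rw [h2, add_sub_cancel_right]
    rw [h1]
    clear h1
    have h3 : (X 0 ^ q * fpoly q k lam a (X 1) - fpoly q k lam a (X 0) * X 1 ^ q :
        MvPolynomial (Fin 2) K) = (X 0 ^ q * X 1 - X 0 * X 1 ^ q) +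
        ∑ j ∈ Finset.Ico 1 k, C (a j) * (X 0 ^ q * X 1 ^ q ^ j - X 0 ^ q ^ j * X 1 ^ q) +
        C lam * (X 0 ^ q * X 1 ^ q ^ k - X 0 ^ q ^ k * X 1 ^ q) := by
      have h4 : (∑ j ∈ Finset.Ico 1 k, C (a j) * (X 0 ^ q * X 1 ^ q ^ j - X 0 ^ q ^ j * X 1 ^ q) :
            MvPolynomial (Fin 2) K) =
          X 0 ^ q * (∑ j ∈ Finset.Ico 1 k, C (a j) * X 1 ^ q ^ j) -
            (∑ j ∈ Finset.Ico 1 k, C (a j) * X 0 ^ q ^ j) * X 1 ^ q := by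
        rw [Finset.mul_sum, Finset.sum_mul, ← Finset.sum_sub_distrib]
        refine Finset.sum_congr rfl fun j _ => ?_
        generalize q ^ j = m
        ring
      rw [h4, fpoly, fpoly]
      generalize q ^ k = m
      ring
    rw [h3, map_add, map_add, theta_lin, map_sum,
      Finset.sum_congr rfl fun j _ => theta_term (a j) q (q ^ j), theta_term]

lemma lead_ne : (Polynomial.C lam * (Polynomial.X ^ q ^ (k - 1) - Polynomial.X) ^ q :
    Polynomial K) ≠ 0 := by
  have hq := S.q_ge
  have hk := S.k_ge
  refine mul_ne_zero (Polynomial.C_ne_zero.2 S.lam_ne) (pow_ne_zero _ ?_)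
  exact FiniteField.X_pow_card_sub_X_ne_zero K (Nat.one_lt_pow (by omega) (by omega))

lemma lead_rhs : (theta K (X 0 ^ q * fpoly q k lam a (X 1) -
      fpoly q k lam a (X 0) * X 1 ^ q)).leadingCoeff =
    Polynomial.C lam * (Polynomial.X ^ q ^ (k - 1) - Polynomial.X) ^ q := by
  obtain ⟨R, h1, h2⟩ := S.theta_rhs
  rw [h2, Polynomial.leadingCoeff_add_of_degree_lt, Polynomial.leadingCoeff_C_mul_X_pow]
  rw [Polynomial.degree_C_mul_X_pow _ S.lead_ne]
  exact lt_of_le_of_lt Polynomial.degree_le_natDegree (by exact_mod_cast h1)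

lemma theta_rhs_ne : theta K (X 0 ^ q * fpoly q k lam a (X 1) -
      fpoly q k lam a (X 0) * X 1 ^ q) ≠ 0 := by
  intro h
  have h1 := S.lead_rhs
  rw [h, Polynomial.leadingCoeff_zero] at h1
  exact S.lead_ne h1.symm

lemma theta_ne {x : MvPolynomial (Fin 2) K} (hx : x ∣ G) : theta K x ≠ 0 := by
  obtain ⟨y, rfl⟩ := hx
  have h := S.theta_rhs_ne
  rw [← S.eq] at h
  intro h0
  simp [h0] at h

lemma separable : (Polynomial.X ^ q ^ (k - 1) - Polynomial.X : Polynomial K).Separable := by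
  have := S.char
  have hk := S.k_ge
  apply galois_poly_separable p
  rw [S.q_eq, ← pow_mul]
  exact dvd_pow_self p (Nat.mul_ne_zero S.rpos.ne' (by omega))

/-- The curve meets the line at infinity with multiplicity exactly `q` at each point with coordinate
in `𝔽_{q ^ (k - 1)}` but not in `𝔽_q`. -/
lemma mult_G {t : K} (h1 : t ^ q ^ (k - 1) = t) (h2 : t ^ q ≠ t) : mult t G = q := by
  have h := S.theta_rhs_ne
  have hr : mult t (X 0 ^ q * fpoly q k lam a (X 1) - fpoly q k lam a (X 0) * X 1 ^ q) = q := by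
    classical
    have hle := Polynomial.rootMultiplicity_le_one_of_separable S.separable t
    have hD : (Polynomial.X ^ q ^ (k - 1) - Polynomial.X : Polynomial K) ≠ 0 :=
      S.separable.ne_zero
    have hpos : 0 < (Polynomial.X ^ q ^ (k - 1) - Polynomial.X : Polynomial K).rootMultiplicity t := by
      rw [Polynomial.rootMultiplicity_pos hD]
      simp [h1]
    rw [mult, S.lead_rhs, Polynomial.rootMultiplicity_mul S.lead_ne, Polynomial.rootMultiplicity_C,
      ← Polynomial.count_roots, Polynomial.roots_pow, Multiset.count_nsmul, Polynomial.count_roots]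
    rw [show (Polynomial.X ^ q ^ (k - 1) - Polynomial.X : Polynomial K).rootMultiplicity t = 1 by
      omega]
    simp
  rw [← S.eq] at h hr
  rw [mult_mul t h] at hr
  have hl : mult t (X 0 ^ q * X 1 - X 0 * X 1 ^ q) = 0 := by
    rw [mult, theta_lin, Polynomial.leadingCoeff_C_mul_X_pow]
    apply Polynomial.rootMultiplicity_eq_zero
    simpa [sub_eq_zero] using h2.symm
  omega

/-- As `k ≥ 3`, the field `𝔽_{q ^ (k - 1)}` is larger than `𝔽_q`. -/
lemma exists_point [IsAlgClosed K] : ∃ t : K, t ^ q ^ (k - 1) = t ∧ t ^ q ≠ t := by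
  classical
  by_contra! hc
  have hq := S.q_ge
  have hk := S.k_ge
  have h1 : 1 < q ^ (k - 1) := Nat.one_lt_pow (by omega) (by omega)
  have h2 : q < q ^ (k - 1) := by
    conv_lhs => rw [← pow_one q]
    exact Nat.pow_lt_pow_right (by omega) (by omega)
  have hcard : (Polynomial.X ^ q ^ (k - 1) - Polynomial.X : Polynomial K).roots.toFinset.card
      = q ^ (k - 1) := by
    rw [Multiset.toFinset_card_of_nodup (Polynomial.nodup_roots S.separable),
      ← (IsAlgClosed.splits _).natDegree_eq_card_roots,
      FiniteField.X_pow_card_sub_X_natDegree_eq K h1]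
  have hsub : (Polynomial.X ^ q ^ (k - 1) - Polynomial.X : Polynomial K).roots.toFinset ⊆
      (Polynomial.X ^ q - Polynomial.X : Polynomial K).roots.toFinset := by
    intro t ht
    rw [Multiset.mem_toFinset, Polynomial.mem_roots
      (FiniteField.X_pow_card_sub_X_ne_zero K (by omega))] at ht ⊢
    simp only [Polynomial.IsRoot, Polynomial.eval_sub, Polynomial.eval_pow, Polynomial.eval_X,
      sub_eq_zero] at ht ⊢
    exact hc t ht
  have h3 := Finset.card_le_card hsub
  have h4 := (Multiset.toFinset_card_le _).trans
    (Polynomial.card_roots' (Polynomial.X ^ q - Polynomial.X : Polynomial K))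
  rw [FiniteField.X_pow_card_sub_X_natDegree_eq K (by omega)] at h4
  omega

end Setup

/-! ### Frobenius fixes a component -/

section Group

variable {M : Type*} [CommGroup M] {X : Type*}

/-- The elements of a commutative group which leave the function `f` invariant by translation. -/
def stab (f : M → X) : Subgroup M where
  carrier := {b | ∀ x, f (b * x) = f x}
  mul_mem' := by
    intro b c hb hc x
    rw [mul_assoc, hb, hc]
  one_mem' := by
    intro x
    rw [one_mul]
  inv_mem' := by
    intro b hb x
    rw [← hb, mul_inv_cancel_left]

lemma mem_stab {f : M → X} {b : M} : b ∈ stab f ↔ ∀ x, f (b * x) = f x := Iff.rfl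

variable [Fintype M]

/-- If the fibers of `f` are the cosets of `B`, a sum over the group is `|B|` times a sum over the
image of `f`. -/
lemma sum_fiber [DecidableEq X] (f : M → X) (B : Subgroup M)
    (hB : ∀ x y, f x = f y ↔ x * y⁻¹ ∈ B) (F : X → ℕ) :
    ∑ x, F (f x) = Nat.card B * ∑ h ∈ Finset.univ.image f, F h := by
  rw [Finset.sum_comp, Finset.mul_sum]
  refine Finset.sum_congr rfl fun h hh => ?_
  obtain ⟨y, -, rfl⟩ := Finset.mem_image.1 hh
  rw [smul_eq_mul]
  congr 1
  rw [Nat.card_congr (Equiv.subtypeEquiv (Equiv.mulRight y)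
    (p := (· ∈ B)) (q := fun x => x ∈ Finset.univ.filter fun x => f x = f y) fun x => by
      simp [hB])]
  rw [Nat.card_eq_fintype_card, Fintype.card_coe]

/-- A group `M` of order prime to `q` permutes transitively the objects `f x`, and the weights `F`
of these objects sum to `q`. Then a translation preserving all the weights fixes all the objects:
with `B` and `C` the stabilizers of `f` and `F ∘ f`, the order of `C` divides
`∑ x, F (f x) = |B| q`, so it divides `|B|`, while `B ≤ C`. -/
lemma group_main [DecidableEq X] (f : M → X) (F : X → ℕ) (q : ℕ)
    (hf : ∀ x y c, f x = f y → f (x * c) = f (y * c))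
    (hq : (Nat.card M).Coprime q) (hsum : ∑ h ∈ Finset.univ.image f, F h = q) {c : M}
    (hc : ∀ x, F (f (c * x)) = F (f x)) : f c = f 1 := by
  classical
  have h1 := sum_fiber f (stab f) (fun x y => by
    constructor
    · intro h z
      have := hf x y (y⁻¹ * z) h
      rwa [mul_inv_cancel_left, ← mul_assoc] at this
    · intro h
      have := h y
      rwa [inv_mul_cancel_right] at this) F
  have h2 := sum_fiber (fun x b => F (f (x * b))) (stab (F ∘ f)) (fun x y => by
    constructor
    · intro h z
      have := congrFun h (y⁻¹ * z)
      simpa [mul_assoc] using this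
    · intro h
      funext z
      have := h (y * z)
      simpa [mul_assoc] using this) (fun g => g 1)
  simp only [mul_one] at h2
  rw [hsum] at h1
  have h3 : Nat.card (stab (F ∘ f)) ∣ Nat.card (stab f) := by
    refine Nat.Coprime.dvd_of_dvd_mul_right
      (Nat.Coprime.coprime_dvd_left (Subgroup.card_subgroup_dvd_card _) hq) (n := q) ?_
    rw [← h1, h2]
    exact dvd_mul_right _ _
  have h4 : stab f ≤ stab (F ∘ f) := fun b hb x => congrArg F (hb x)
  have h5 := Subgroup.eq_of_le_of_card_ge h4 (Nat.le_of_dvd Nat.card_pos h3)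
  have h6 : c ∈ stab f := by
    rw [h5]; exact hc
  simpa using h6 1

end Group


namespace Setup

variable {p r q k e : ℕ} {lam : K} {a : ℕ → K} {G : MvPolynomial (Fin 2) K}
  (S : Setup p r q k e lam a G)

include S

lemma mult_prod (t : K) (s : Finset (MvPolynomial (Fin 2) K)) : ∏ h ∈ s, h ∣ G →
    mult t (∏ h ∈ s, h) = ∑ h ∈ s, mult t h := by
  classical
  induction s using Finset.induction_on with
  | empty =>
    intro _
    simp [mult]
  | insert x s hx ih =>
    intro hd
    rw [Finset.prod_insert hx] at hd ⊢
    rw [mult_mul t (S.theta_ne hd), Finset.sum_insert hx, ih (dvd_of_mul_left_dvd hd)]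

omit S in
lemma pow_q_of_root (hq : 2 ≤ q) {b : K} (hb : b ^ (q - 1) = 1) : b ^ q = b := by
  rw [← Nat.sub_add_cancel (show 1 ≤ q by omega), pow_succ, hb, one_mul]

lemma root_ne {l w : K} (hw : l * w ^ (q - 1) = 1) : w ≠ 0 := by
  have hq := S.q_ge
  rintro rfl
  rw [zero_pow (by omega), mul_zero] at hw
  exact zero_ne_one hw

lemma unit_ne {b : K} (hb : b ^ (q - 1) = 1) : b ≠ 0 :=
  S.root_ne (l := 1) (by rw [hb, one_mul])

/-- Scaling `Y` permutes the components as it permutes the branches. -/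
lemma isComp_diag {w : K} {h : MvPolynomial (Fin 2) K} (hh : IsComp e G w h) {b : K}
    (hb : b ^ q = b) (hb0 : b ≠ 0) : IsComp e G (w / b) (act 1 0 0 b h) where
  irr := act_irreducible _ _ _ _ (by simpa using hb0) hh.irr
  dvd := S.act_dvd (one_pow _) (zero_pow (by have := S.q_ge; omega))
    (zero_pow (by have := S.q_ge; omega)) hb (by simpa using hb0) hh.dvd
  const := by rw [constantCoeff_act, hh.const]
  root := by
    rw [eval_low_diag, one_pow, one_mul, mul_div_cancel₀ _ hb0, hh.root]

/-- The components containing a branch at `(1 : 0 : 0)` are those in the orbit of one of them under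
`diag(1, b)`, and `G` is their product up to a unit. -/
lemma sum_mult [IsAlgClosed K] {t w : K} (h1 : t ^ q ^ (k - 1) = t) (h2 : t ^ q ≠ t)
    {h : MvPolynomial (Fin 2) K} (hh : IsComp e G w h) (s : Finset (MvPolynomial (Fin 2) K))
    (hs : ∀ x, x ∈ s ↔ ∃ b : K, b ^ (q - 1) = 1 ∧ act 1 0 0 b h = x) :
    ∑ x ∈ s, mult t x = q := by
  have hq := S.q_ge
  have hc : ∀ x ∈ s, ∃ u, IsComp e G u x := by
    intro x hx
    obtain ⟨b, hb, rfl⟩ := (hs x).1 hx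
    exact ⟨_, S.isComp_diag hh (pow_q_of_root hq hb) (S.unit_ne hb)⟩
  have hP : ∏ x ∈ s, x ∣ G := by
    apply Finset.prod_dvd_of_isRelPrime
    · intro x hx y hy hxy
      obtain ⟨u, hu⟩ := hc x hx
      obtain ⟨v, hv⟩ := hc y hy
      refine (hu.irr.isRelPrime_iff_not_dvd).2 fun hd => hxy ?_
      exact eq_of_associated hu.const hv.const (hu.irr.associated_of_dvd hv.irr hd)
    · intro x hx
      obtain ⟨u, hu⟩ := hc x hx
      exact hu.dvd
  rw [← S.mult_prod t s hP]
  obtain ⟨g, hg⟩ := hP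
  have hgu : IsUnit g := by
    by_contra hn
    obtain ⟨u, hu⟩ := S.exists_root ⟨_, by rw [hg, mul_comm]⟩ hn
    have hu1 := S.root_eq ⟨_, by rw [hg, mul_comm]⟩ hu
    have hw1 := S.root_eq hh.dvd hh.root
    have hu0 := S.root_ne hu1
    have hw0 := S.root_ne hw1
    have hb : (w / u) ^ (q - 1) = 1 := by
      rw [div_pow, div_eq_one_iff_eq (pow_ne_zero _ hu0)]
      exact mul_left_cancel₀ S.lam_ne (hw1.trans hu1.symm)
    have hr := (S.isComp_diag hh (pow_q_of_root hq hb) (S.unit_ne hb)).root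
    rw [div_div_cancel₀ hw0] at hr
    have hm : act 1 0 0 (w / u) h ∈ s := (hs _).2 ⟨_, hb, rfl⟩
    have hdP : act 1 0 0 (w / u) h ∣ ∏ x ∈ s, x := Finset.dvd_prod_of_mem (fun x => x) hm
    have hdG : act 1 0 0 (w / u) h * g ∣ G := by
      rw [hg]
      exact mul_dvd_mul_right hdP g
    exact S.root_mul hdG hr hu
  obtain ⟨v, hv⟩ := hgu.exists_right_inv
  have h3 := mult_mul t (x := g) (y := v) (by rw [hv, map_one]; exact one_ne_zero)
  have h4 : mult t (1 : MvPolynomial (Fin 2) K) = 0 := by simp [mult]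
  have h5 := S.mult_G h1 h2
  rw [hg, mult_mul t (by rw [← hg]; exact S.theta_ne dvd_rfl)] at h5
  rw [hv, h4] at h3
  rwa [Nat.eq_zero_of_add_eq_zero_right h3.symm, add_zero] at h5

omit S in
lemma isComp_map {u : K} {x : MvPolynomial (Fin 2) K} (σ : K ≃+* K)
    (hG : map (σ : K →+* K) G = G) (hx : IsComp e G u x) :
    IsComp e G (σ u) (map (σ : K →+* K) x) where
  irr := (MulEquiv.irreducible_iff (mapEquiv (Fin 2) σ)).2 hx.irr
  dvd := by
    have := map_dvd (map (σ : K →+* K)) hx.dvd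
    rwa [hG] at this
  const := by rw [constantCoeff_map, hx.const, map_one]
  root := by
    have := Polynomial.eval_map_apply (p := low e x) (σ : K →+* K) u
    rw [hx.root, map_zero] at this
    rw [low_map]
    exact this

lemma pow_e {c : K} (hc : c ^ q = c) : c ^ e = c ^ (k - 1) := by
  rw [S.e_eq, ← Finset.prod_pow_eq_pow_sum, Finset.prod_congr rfl fun i _ => pow_q hc i]
  simp

omit S in
lemma iterate_frob (n : ℕ) (σ : K ≃+* K) (hσ : ∀ x, σ x = x ^ q ^ n) (t : K) (j : ℕ) :
    σ^[j] t = t ^ (q ^ n) ^ j := by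
  induction j with
  | zero => simp
  | succ j ih => rw [Function.iterate_succ_apply', ih, hσ, pow_succ, pow_mul]

/-- Some component, and in fact each one, is fixed by Frobenius. -/
lemma exists_fixed [IsAlgClosed K] (n : ℕ) (σ : K ≃+* K) (hσ : ∀ x, σ x = x ^ q ^ n)
    (hG : map (σ : K →+* K) G = G) :
    ∃ h, Irreducible h ∧ h ∣ G ∧ map (σ : K →+* K) h = h := by
  classical
  have hq := S.q_ge
  have hk := S.k_ge
  obtain ⟨t, ht1, ht2⟩ := S.exists_point
  obtain ⟨w, hw⟩ := IsAlgClosed.exists_pow_nat_eq lam⁻¹ (show 0 < q - 1 by omega)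
  have hw1 : lam * w ^ (q - 1) = 1 := by rw [hw, mul_inv_cancel₀ S.lam_ne]
  have hw0 := S.root_ne hw1
  obtain ⟨h, hh⟩ := S.exists_comp hw1
  refine ⟨h, hh.irr, hh.dvd, ?_⟩
  have : NeZero (q - 1) := ⟨by omega⟩
  have : NeZero ((q - 1 : ℕ) : K) := ⟨by
    rw [Nat.cast_sub (by omega), S.q_cast]; simp⟩
  have hσw := S.root_eq (isComp_map σ hG hh).dvd (isComp_map σ hG hh).root
  have hσw0 := S.root_ne hσw
  have hc1 : (σ w / w) ^ (q - 1) = 1 := by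
    rw [div_pow, div_eq_one_iff_eq (pow_ne_zero _ hw0)]
    exact mul_left_cancel₀ S.lam_ne (hσw.trans hw1.symm)
  obtain ⟨c, hc⟩ : ∃ c : rootsOfUnity (q - 1) K, ((c : Kˣ) : K) = σ w / w :=
    ⟨rootsOfUnity.mkOfPowEq _ hc1, rootsOfUnity.coe_mkOfPowEq hc1⟩
  have hM : ∀ x : rootsOfUnity (q - 1) K, ((x : Kˣ) : K) ^ (q - 1) = 1 := fun x =>
    (mem_rootsOfUnity' _ _).1 x.2
  have hM0 : ∀ x : rootsOfUnity (q - 1) K, ((x : Kˣ) : K) ≠ 0 := fun x => S.unit_ne (hM x)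
  have hMq : ∀ x : rootsOfUnity (q - 1) K, ((x : Kˣ) : K) ^ q = ((x : Kˣ) : K) := fun x =>
    pow_q_of_root hq (hM x)
  set f : rootsOfUnity (q - 1) K → MvPolynomial (Fin 2) K :=
    fun x => act 1 0 0 ((x : Kˣ) : K) h with hf
  have hfc : ∀ x : rootsOfUnity (q - 1) K, IsComp e G (w / ((x : Kˣ) : K)) (f x) := fun x =>
    S.isComp_diag hh (hMq x) (hM0 x)
  -- Frobenius acts on the components as `diag(1, c⁻¹)`, because it takes the branch `w / x` to
  -- `σ w / x = w / (c⁻¹ x)`.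
  have hA : ∀ x, map (σ : K →+* K) (f x) = f (c⁻¹ * x) := by
    intro x
    refine S.comp_unique (w := σ w / ((x : Kˣ) : K)) ?_ ?_
    · have := isComp_map σ hG (hfc x)
      rwa [map_div₀, hσ ((x : Kˣ) : K), pow_q (hMq x)] at this
    · have := hfc (c⁻¹ * x)
      convert this using 1
      have := hM0 x
      push_cast
      rw [hc]
      field_simp
  -- Invariance under `diag(c, c⁻¹)`, which multiplies `low` roots by `c ^ (e - 1) = c ^ (k - 2)` up to
  -- inversion.
  have hB : ∀ x, f (c ^ (k - 2) * x) = f x := by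
    intro x
    refine S.comp_unique (hfc _) ⟨(hfc x).irr, (hfc x).dvd, (hfc x).const, ?_⟩
    have h1 := S.act_diag_inv (hMq c) (hM0 c) (hfc x).irr (hfc x).dvd (hfc x).const
    rw [← h1, eval_low_diag, S.pow_e (hMq c)]
    convert (hfc x).root using 2
    have h2 := hM0 x
    have h3 := hM0 c
    push_cast
    rw [show k - 1 = (k - 2) + 1 by omega, pow_succ]
    field_simp
  have hC : ∀ j x, mult (σ^[j] t) (f (c⁻¹ ^ j * x)) = mult t (f x) := by
    intro j
    induction j with
    | zero => intro x; simp
    | succ j ih =>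
      intro x
      rw [Function.iterate_succ_apply', pow_succ', mul_assoc, ← hA, ← ih x]
      exact mult_map (σ : K →+* K) _ _
  -- The point `t` is fixed by the `(k - 1)`-st power of Frobenius, which by `hA` and `hB` acts on the
  -- components as `c⁻¹ ^ (k - 1)`, hence as `c⁻¹`.
  have ht : σ^[k - 1] t = t := by
    rw [iterate_frob n σ hσ, ← pow_mul, mul_comm, pow_mul]
    exact pow_q ht1 n
  have hcop : (Nat.card (rootsOfUnity (q - 1) K)).Coprime q := by
    rw [HasEnoughRootsOfUnity.natCard_rootsOfUnity]
    obtain ⟨m, rfl⟩ : ∃ m, q = m + 1 := ⟨q - 1, by omega⟩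
    simp
  have : Fintype (rootsOfUnity (q - 1) K) := Fintype.ofFinite _
  have hmain := group_main f (mult t) q (c := c⁻¹) ?_ hcop ?_ ?_
  · have h1 := hA 1
    rw [mul_one, hmain] at h1
    have h2 : f 1 = h := by
      rw [hf]; simp [act_one]
    rwa [h2] at h1
  · intro x y z hxy
    have h1 : ∀ x, f (x * z) = act 1 0 0 ((z : Kˣ) : K) (f x) := by
      intro x
      rw [hf]; simp [act_act]
    rw [h1, h1, hxy]
  · apply S.sum_mult ht1 ht2 hh
    intro x
    simp only [Finset.mem_image, Finset.mem_univ, true_and]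
    constructor
    · rintro ⟨b, rfl⟩
      exact ⟨_, hM b, rfl⟩
    · rintro ⟨b, hb, rfl⟩
      exact ⟨rootsOfUnity.mkOfPowEq _ hb, by rw [hf]; simp⟩
  · intro x
    have h1 := hC (k - 1) x
    rw [ht] at h1
    rw [← h1, ← hB (c⁻¹ ^ (k - 1) * x), show k - 1 = (k - 2) + 1 by omega]
    congr 2
    rw [pow_succ, ← mul_assoc, ← mul_assoc, ← mul_pow, mul_inv_cancel, one_pow, one_mul]

end Setup

/-! ### Descent to the finite field -/

/-- The elements fixed by the Frobenius of `F` come from `F`. -/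
lemma mem_range_of_pow_card {F K : Type*} [Field F] [Fintype F] [Field K] [Algebra F K] {x : K}
    (hx : x ^ Fintype.card F = x) : x ∈ Set.range (algebraMap F K) := by
  have h0 : (Polynomial.X ^ Fintype.card F - Polynomial.X : Polynomial F) ≠ 0 :=
    FiniteField.X_pow_card_sub_X_ne_zero F Fintype.one_lt_card
  have hs : (Polynomial.X ^ Fintype.card F - Polynomial.X : Polynomial F).Splits := by
    rw [Polynomial.splits_iff_card_roots, FiniteField.roots_X_pow_card_sub_X,
      FiniteField.X_pow_card_sub_X_natDegree_eq F Fintype.one_lt_card]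
    rfl
  have h1 := hs.roots_map (algebraMap F K)
  rw [FiniteField.roots_X_pow_card_sub_X] at h1
  have h2 : x ∈ ((Polynomial.X ^ Fintype.card F - Polynomial.X : Polynomial F).map
      (algebraMap F K)).roots := by
    rw [Polynomial.mem_roots (by rwa [Polynomial.map_ne_zero_iff (algebraMap F K).injective])]
    simp [hx]
  rw [h1, Multiset.mem_map] at h2
  obtain ⟨y, -, hy⟩ := h2
  exact ⟨y, hy⟩

lemma exists_map_eq {F K : Type*} [Field F] [Fintype F] [Field K] [Algebra F K] (σ : K →+* K)
    (hσ : ∀ x, σ x = x ^ Fintype.card F) {h : MvPolynomial (Fin 2) K} (hh : map σ h = h) :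
    ∃ g : MvPolynomial (Fin 2) F, map (algebraMap F K) g = h := by
  change h ∈ Set.range _
  rw [mem_range_map_iff_coeffs_subset]
  intro x hx
  obtain ⟨s, hs, rfl⟩ := mem_coeffs_iff.1 hx
  refine mem_range_of_pow_card ?_
  rw [← hσ, ← coeff_map, hh]

/-- A component fixed by Frobenius is defined over `F`, and divides `G` already over `F`. -/
lemma exists_component {F : Type*} [Field F] [Fintype F] {p r q k e n : ℕ}
    {lam : AlgebraicClosure F} {a : ℕ → AlgebraicClosure F} {G : MvPolynomial (Fin 2) F}
    (hF : Fintype.card F = q ^ n)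
    (S : Setup p r q k e lam a (map (algebraMap F (AlgebraicClosure F)) G)) :
    ∃ G' : MvPolynomial (Fin 2) F, G' ∣ G ∧ 0 < G'.totalDegree ∧
      Irreducible (map (algebraMap F (AlgebraicClosure F)) G') := by
  set K := AlgebraicClosure F
  set σ : K ≃+* K := (FiniteField.frobeniusAlgEquivOfAlgebraic F K).toRingEquiv with hσd
  have hσ : ∀ x, σ x = x ^ Fintype.card F := fun x => by
    simp [hσd]
  have hmap : ∀ g : MvPolynomial (Fin 2) F,
      map (σ : K →+* K) (map (algebraMap F K) g) = map (algebraMap F K) g := by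
    intro g
    rw [map_map]
    congr 1
    congr 1
    ext x
    exact (FiniteField.frobeniusAlgEquivOfAlgebraic F K).commutes x
  obtain ⟨h, hi, ⟨g, hg⟩, hs⟩ := S.exists_fixed n σ (fun x => by rw [hσ, hF]) (hmap G)
  have hgs : map (σ : K →+* K) g = g := by
    have h1 := hmap G
    rw [hg, map_mul, hs] at h1
    exact mul_left_cancel₀ hi.ne_zero h1
  obtain ⟨h', rfl⟩ := exists_map_eq (σ : K →+* K) hσ hs
  obtain ⟨g', rfl⟩ := exists_map_eq (σ : K →+* K) hσ hgs
  refine ⟨h', ⟨g', map_injective _ (algebraMap F K).injective (by rw [hg, map_mul])⟩, ?_, hi⟩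
  by_contra h0
  have h1 := totalDegree_eq_zero_iff_eq_C.1 (Nat.eq_zero_of_not_pos h0)
  rw [h1, map_C] at hi
  exact hi.not_isUnit (IsUnit.map C (IsUnit.mk0 _ fun h2 => hi.ne_zero (by rw [h2, C_0])))

end LinCurve

open scoped Classical

/-- for k ≥ 3, λ ≠ 0 and φ(X) = Σ_{j=1}^{k−1} α_j X^{q^j}, the curve
F(X,Y) = (X^qY − XY^q + X^qφ(Y) − φ(X)Y^q + λ(X^qY^{q^k} − X^{q^k}Y^q))/(X^qY − XY^q) = 0
has an absolutely irreducible 𝔽_{q^n}-rational component. -/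
theorem stmt_8 (p r q n k : ℕ) (hp : p.Prime) (hr : 0 < r) (hq : q = p ^ r)
    (hn : 0 < n) (hk : 3 ≤ k)
    (F : Type) [Field F] [Fintype F] (hF : Fintype.card F = q ^ n)
    (lam : F) (hlam : lam ≠ 0) (α : ℕ → F)
    (φ : Polynomial F)
    (hφ : φ = ∑ j ∈ Finset.Ico 1 k, Polynomial.C (α j) * Polynomial.X ^ q ^ j)
    (G : MvPolynomial (Fin 2) F)
    (hG : (MvPolynomial.X 0 ^ q * MvPolynomial.X 1 -
            MvPolynomial.X 0 * MvPolynomial.X 1 ^ q) * G =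
          MvPolynomial.X 0 ^ q * MvPolynomial.X 1 -
            MvPolynomial.X 0 * MvPolynomial.X 1 ^ q +
            MvPolynomial.X 0 ^ q * Polynomial.aeval (MvPolynomial.X 1) φ -
            Polynomial.aeval (MvPolynomial.X 0) φ * MvPolynomial.X 1 ^ q +
            MvPolynomial.C lam * (MvPolynomial.X 0 ^ q * MvPolynomial.X 1 ^ q ^ k -
              MvPolynomial.X 0 ^ q ^ k * MvPolynomial.X 1 ^ q)) :
    ∃ G' : MvPolynomial (Fin 2) F, G' ∣ G ∧ 0 < G'.totalDegree ∧
      Irreducible (MvPolynomial.map (algebraMap F (AlgebraicClosure F)) G') := by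
  -- A field with `q ^ n = p ^ (r n)` elements has characteristic `p`.
  have hchar : CharP F p := by
    have := Fact.mk hp
    obtain ⟨p', hc⟩ := CharP.exists F
    obtain ⟨m, hp', hm⟩ := FiniteField.card F p'
    rw [hF, hq, ← pow_mul] at hm
    have h1 : p' ∣ p ^ (r * n) := hm ▸ dvd_pow_self p' m.2.ne'
    rwa [(Nat.prime_dvd_prime_iff_eq hp' hp).1 (hp'.dvd_of_dvd_pow h1)] at hc
  set K := AlgebraicClosure F
  have hφi : ∀ z : MvPolynomial (Fin 2) F, Polynomial.aeval z φ =
      ∑ j ∈ Finset.Ico 1 k, MvPolynomial.C (α j) * z ^ q ^ j := by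
    intro z
    rw [hφ, map_sum]
    simp [MvPolynomial.algebraMap_eq]
  have S : LinCurve.Setup p r q k (∑ i ∈ Finset.Ico 1 k, q ^ i) (algebraMap F K lam)
      (fun j => algebraMap F K (α j)) (MvPolynomial.map (algebraMap F K) G) :=
    { prime := hp
      char := charP_of_injective_algebraMap (algebraMap F K).injective p
      rpos := hr
      q_eq := hq
      k_ge := hk
      e_eq := rfl
      lam_ne := by simpa using hlam
      eq := by
        have h := congrArg (MvPolynomial.map (algebraMap F K)) hG
        rw [hφi, hφi] at h
        simp only [map_mul, map_sub, map_add, map_pow, map_sum, MvPolynomial.map_X, MvPolynomial.map_C] at h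
        rw [h, LinCurve.fpoly, LinCurve.fpoly]
        ring }
  exact LinCurve.exists_component hF S
end
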